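/- Let q = p^f be a power of a prime p, let n ≥ 2 and suppose GL_n(q) is not solvable. Let π be a set of primes with 2 ∉ π and p ∉ π such that |π ∩ π(GL_n(q))| ≥ 2, and suppose GL_n(q) has a Hall π-subgroup H. Set G = H·SL_n(q). Then there exist x, y, z ∈ G such that H ∩ H^x ∩ H^y ∩ H^z is contained in the center Z(GL_n(q)), i.e. consists of scalar matrices. -/

import Mathlib

open Matrix Pointwise

/-- `H^x = x⁻¹ H x`. -/
def conjBy {G : Type*} [Group G] (H : Subgroup G) (x : G) : Subgroup G :=
  Subgroup.map ((MulAut.conj x⁻¹).toMonoidHom) H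

/-- Hall π-subgroup of the whole group. -/
def IsHallSubgroup {G : Type*} [Group G] (π : Set ℕ) (H : Subgroup G) : Prop :=
  (∀ r : ℕ, r.Prime → r ∣ Nat.card H → r ∈ π) ∧ ∀ r ∈ π, ¬ r ∣ H.index

/-- Hall π-subgroup of the subgroup `K`. -/
def IsHallSubgroupIn {G : Type*} [Group G] (π : Set ℕ) (K H : Subgroup G) : Prop :=
  H ≤ K ∧ (∀ r : ℕ, r.Prime → r ∣ Nat.card H → r ∈ π) ∧ ∀ r ∈ π, ¬ r ∣ H.relIndex K

/-- The subgroup `SL_n` of `GL_n`. -/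
def SLsub (n : ℕ) (F : Type*) [Field F] : Subgroup (GL (Fin n) F) where
  carrier := {g | Matrix.det (g : Matrix (Fin n) (Fin n) F) = 1}
  one_mem' := by simp
  mul_mem' := by
    intro a b ha hb
    simp only [Set.mem_setOf_eq, Units.val_mul, Matrix.det_mul] at *
    rw [ha, hb, one_mul]
  inv_mem' := by
    intro g hg
    simp only [Set.mem_setOf_eq] at *
    have h1 : ((g⁻¹ : GL (Fin n) F) : Matrix (Fin n) (Fin n) F) *
        (g : Matrix (Fin n) (Fin n) F) = 1 := g.inv_mul
    have := congrArg Matrix.det h1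
    rw [Matrix.det_mul, Matrix.det_one, hg, mul_one] at this
    exact this

/-- The group of similitudes of the bilinear form `B` (acting on row vectors). -/
def similitudeGroup {n : ℕ} {F : Type*} [Field F]
    (B : (Fin n → F) → (Fin n → F) → F) : Subgroup (GL (Fin n) F) where
  carrier := {g | ∃ c : Fˣ, ∀ u v : Fin n → F,
    B (Matrix.vecMul u (g : Matrix (Fin n) (Fin n) F))
      (Matrix.vecMul v (g : Matrix (Fin n) (Fin n) F)) = (c : F) * B u v}
  one_mem' := ⟨1, by simp⟩
  mul_mem' := by
    rintro a b ⟨c, hc⟩ ⟨d, hd⟩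
    refine ⟨c * d, fun u v => ?_⟩
    simp only [Units.val_mul, ← Matrix.vecMul_vecMul, hd, hc]
    ring
  inv_mem' := by
    rintro g ⟨c, hc⟩
    refine ⟨c⁻¹, fun u v => ?_⟩
    have h1 : ∀ w : Fin n → F, Matrix.vecMul
        (Matrix.vecMul w ((g⁻¹ : GL (Fin n) F) : Matrix (Fin n) (Fin n) F))
        (g : Matrix (Fin n) (Fin n) F) = w := by
      intro w
      rw [Matrix.vecMul_vecMul, g.inv_mul, Matrix.vecMul_one]
    have h2 := hc (Matrix.vecMul u ((g⁻¹ : GL (Fin n) F) : Matrix (Fin n) (Fin n) F))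
      (Matrix.vecMul v ((g⁻¹ : GL (Fin n) F) : Matrix (Fin n) (Fin n) F))
    rw [h1, h1] at h2
    rw [h2, Units.val_inv_eq_inv_val, inv_mul_cancel_left₀ (by exact_mod_cast c.ne_zero)]

/-- The isometry group of the bilinear form `B` (acting on row vectors). -/
def isometryGroup {n : ℕ} {F : Type*} [Field F]
    (B : (Fin n → F) → (Fin n → F) → F) : Subgroup (GL (Fin n) F) where
  carrier := {g | ∀ u v : Fin n → F,
    B (Matrix.vecMul u (g : Matrix (Fin n) (Fin n) F))
      (Matrix.vecMul v (g : Matrix (Fin n) (Fin n) F)) = B u v}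
  one_mem' := by simp
  mul_mem' := by
    intro a b ha hb u v
    simp only [Set.mem_setOf_eq] at ha hb
    simp only [Units.val_mul, ← Matrix.vecMul_vecMul]
    rw [hb, ha]
  inv_mem' := by
    intro g hg u v
    have h1 : ∀ w : Fin n → F, Matrix.vecMul
        (Matrix.vecMul w ((g⁻¹ : GL (Fin n) F) : Matrix (Fin n) (Fin n) F))
        (g : Matrix (Fin n) (Fin n) F) = w := by
      intro w
      rw [Matrix.vecMul_vecMul, g.inv_mul, Matrix.vecMul_one]
    have h2 := hg (Matrix.vecMul u ((g⁻¹ : GL (Fin n) F) : Matrix (Fin n) (Fin n) F))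
      (Matrix.vecMul v ((g⁻¹ : GL (Fin n) F) : Matrix (Fin n) (Fin n) F))
    rw [h1, h1] at h2
    exact h2.symm

/-- The group of similitudes of the quadratic form `Q` (acting on row vectors). -/
def qSimilitudeGroup {n : ℕ} {F : Type*} [Field F]
    (Q : (Fin n → F) → F) : Subgroup (GL (Fin n) F) where
  carrier := {g | ∃ c : Fˣ, ∀ v : Fin n → F,
    Q (Matrix.vecMul v (g : Matrix (Fin n) (Fin n) F)) = (c : F) * Q v}
  one_mem' := ⟨1, by simp⟩
  mul_mem' := by
    rintro a b ⟨c, hc⟩ ⟨d, hd⟩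
    refine ⟨c * d, fun v => ?_⟩
    simp only [Units.val_mul, ← Matrix.vecMul_vecMul, hd, hc]
    ring
  inv_mem' := by
    rintro g ⟨c, hc⟩
    refine ⟨c⁻¹, fun v => ?_⟩
    have h1 : ∀ w : Fin n → F, Matrix.vecMul
        (Matrix.vecMul w ((g⁻¹ : GL (Fin n) F) : Matrix (Fin n) (Fin n) F))
        (g : Matrix (Fin n) (Fin n) F) = w := by
      intro w
      rw [Matrix.vecMul_vecMul, g.inv_mul, Matrix.vecMul_one]
    have h2 := hc (Matrix.vecMul v ((g⁻¹ : GL (Fin n) F) : Matrix (Fin n) (Fin n) F))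
    rw [h1] at h2
    rw [h2, Units.val_inv_eq_inv_val, inv_mul_cancel_left₀ (by exact_mod_cast c.ne_zero)]

/-- The unitary group `GU_n` with respect to the field automorphism `φ`. -/
def GUgrp (n : ℕ) {K : Type*} [Field K] (φ : K →+* K) : Subgroup (GL (Fin n) K) where
  carrier := {g | ((g : Matrix (Fin n) (Fin n) K).map φ)ᵀ * (g : Matrix (Fin n) (Fin n) K) = 1}
  one_mem' := by
    simp [Matrix.map_one φ φ.map_zero φ.map_one]
  mul_mem' := by
    intro a b ha hb
    simp only [Set.mem_setOf_eq, Units.val_mul, Matrix.map_mul, Matrix.transpose_mul] at *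
    calc ((b : Matrix (Fin n) (Fin n) K).map φ)ᵀ * ((a : Matrix (Fin n) (Fin n) K).map φ)ᵀ *
          ((a : Matrix (Fin n) (Fin n) K) * (b : Matrix (Fin n) (Fin n) K))
        = ((b : Matrix (Fin n) (Fin n) K).map φ)ᵀ *
          (((a : Matrix (Fin n) (Fin n) K).map φ)ᵀ * (a : Matrix (Fin n) (Fin n) K)) *
          (b : Matrix (Fin n) (Fin n) K) := by noncomm_ring
      _ = 1 := by rw [ha, mul_one, hb]
  inv_mem' := by
    intro g hg
    simp only [Set.mem_setOf_eq] at *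
    have hcomm : (g : Matrix (Fin n) (Fin n) K) * ((g : Matrix (Fin n) (Fin n) K).map φ)ᵀ = 1 :=
      mul_eq_one_comm.mp hg
    have h1 : ((g : Matrix (Fin n) (Fin n) K) * ((g⁻¹ : GL (Fin n) K) : Matrix (Fin n) (Fin n) K)).map φ = 1 := by
      rw [g.mul_inv]
      exact Matrix.map_one φ φ.map_zero φ.map_one
    rw [Matrix.map_mul] at h1
    have h2 := congrArg Matrix.transpose h1
    rw [Matrix.transpose_mul, Matrix.transpose_one] at h2
    calc (((g⁻¹ : GL (Fin n) K) : Matrix (Fin n) (Fin n) K).map φ)ᵀ *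
          ((g⁻¹ : GL (Fin n) K) : Matrix (Fin n) (Fin n) K)
        = (((g⁻¹ : GL (Fin n) K) : Matrix (Fin n) (Fin n) K).map φ)ᵀ *
          (((g : Matrix (Fin n) (Fin n) K).map φ)ᵀ * (g : Matrix (Fin n) (Fin n) K)) *
          ((g⁻¹ : GL (Fin n) K) : Matrix (Fin n) (Fin n) K) := by rw [hg, mul_one]
      _ = ((((g⁻¹ : GL (Fin n) K) : Matrix (Fin n) (Fin n) K).map φ)ᵀ *
          ((g : Matrix (Fin n) (Fin n) K).map φ)ᵀ) *
          ((g : Matrix (Fin n) (Fin n) K) * ((g⁻¹ : GL (Fin n) K) : Matrix (Fin n) (Fin n) K)) := by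
            noncomm_ring
      _ = 1 := by rw [h2, g.mul_inv, mul_one]


namespace HP
set_option linter.unusedVariables false
set_option linter.unusedSimpArgs false
section basics
variable {F : Type} [Field F] {V : Type} [AddCommGroup V] [Module F V]
  {W : Type} [AddCommGroup W] [Module F W]

instance finEquiv [Finite V] : Finite (V ≃ₗ[F] V) :=
  Finite.of_injective (fun e : V ≃ₗ[F] V => (e : V → V)) DFunLike.coe_injective
instance finLin [Finite V] [Finite W] : Finite (V →ₗ[F] W) :=
  Finite.of_injective (fun e : V →ₗ[F] W => (e : V → W)) DFunLike.coe_injective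

/-- exponent condition -/
def Ex (N : ℕ) (H : Subgroup (V ≃ₗ[F] V)) : Prop := ∀ h ∈ H, h ^ N = 1

/-- order of SL -/
noncomputable def SLc (F V : Type) [Field F] [AddCommGroup V] [Module F V] : ℕ :=
  Nat.card {x : V ≃ₗ[F] V // LinearEquiv.det x = 1}

/-- number of conjugators in SL -/
noncomputable def Pc (g : V ≃ₗ[F] V) (H : Subgroup (V ≃ₗ[F] V)) : ℕ :=
  Nat.card {x : V ≃ₗ[F] V // LinearEquiv.det x = 1 ∧ x * g * x⁻¹ ∈ H}

/-- probability bound -/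
def PB (N : ℕ) (g : V ≃ₗ[F] V) (c : ℝ) : Prop :=
  ∀ H : Subgroup (V ≃ₗ[F] V), Ex N H → (Pc g H : ℝ) ≤ c * SLc F V

lemma SLc_pos [Finite V] : 0 < SLc F V := by
  unfold SLc
  have : Nonempty {x : V ≃ₗ[F] V // LinearEquiv.det x = 1} := ⟨⟨1, map_one _⟩⟩
  exact Nat.card_pos

lemma PB.mono {N : ℕ} {g : V ≃ₗ[F] V} {c d : ℝ} (h : PB N g c) (hcd : c ≤ d) : PB N g d := by
  intro H hH
  refine (h H hH).trans ?_
  gcongr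

lemma PB_one [Finite V] (N : ℕ) (g : V ≃ₗ[F] V) : PB N g 1 := by
  intro H hH
  rw [one_mul]
  unfold Pc SLc
  exact_mod_cast Nat.card_le_card_of_injective
    (fun x : {x : V ≃ₗ[F] V // LinearEquiv.det x = 1 ∧ x * g * x⁻¹ ∈ H} =>
      (⟨x.1, x.2.1⟩ : {x : V ≃ₗ[F] V // LinearEquiv.det x = 1}))
    (fun a b h => Subtype.ext (by simpa using congrArg Subtype.val h))

/-- conjugation by a linear equivalence -/
def cj (e : V ≃ₗ[F] W) : (V ≃ₗ[F] V) ≃* (W ≃ₗ[F] W) where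
  toFun g := (e.symm.trans g).trans e
  invFun g := (e.trans g).trans e.symm
  left_inv g := by ext; simp
  right_inv g := by ext; simp
  map_mul' g h := by ext; simp

lemma cj_apply (e : V ≃ₗ[F] W) (g : V ≃ₗ[F] V) (w : W) : cj e g w = e (g (e.symm w)) := rfl

lemma det_cj (e : V ≃ₗ[F] W) (g : V ≃ₗ[F] V) : LinearEquiv.det (cj e g) = LinearEquiv.det g := by
  apply Units.ext
  rw [LinearEquiv.coe_det, LinearEquiv.coe_det, ← LinearMap.det_conj (g : V →ₗ[F] V) e]
  rfl

lemma SLc_congr (e : V ≃ₗ[F] W) : SLc F V = SLc F W := by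
  unfold SLc
  exact Nat.card_congr ((cj e).toEquiv.subtypeEquiv (fun a => by simp [det_cj]))

lemma PB_cj {N : ℕ} {g : V ≃ₗ[F] V} {c : ℝ} (e : V ≃ₗ[F] W) (h : PB N g c) :
    PB N (cj e g) c := by
  intro H hH
  have h1 := h (H.comap (cj e).toMonoidHom) (by
    intro k hk
    have := hH _ hk
    apply (cj e).injective
    simpa using this)
  rw [SLc_congr e] at h1
  convert h1 using 2
  unfold Pc
  refine (Nat.card_congr ((cj e).toEquiv.subtypeEquiv (fun a => ?_))).symm
  simp [det_cj]

end basics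

section recursion
variable {F : Type} [Field F] {A B : Type} [AddCommGroup A] [Module F A]
  [AddCommGroup B] [Module F B]

/-- block triangular maps -/
def T (s : A ≃ₗ[F] A) (t : B ≃ₗ[F] B) (φ : B →ₗ[F] A) : (A × B) ≃ₗ[F] (A × B) where
  toFun x := (s x.1 + φ x.2, t x.2)
  invFun x := (s.symm (x.1 - φ (t.symm x.2)), t.symm x.2)
  map_add' x y := by ext <;> simp; abel
  map_smul' c x := by ext <;> simp
  left_inv x := by ext <;> simp
  right_inv x := by ext <;> simp

lemma T_apply (s : A ≃ₗ[F] A) (t : B ≃ₗ[F] B) (φ : B →ₗ[F] A) (x : A × B) :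
    T s t φ x = (s x.1 + φ x.2, t x.2) := rfl

lemma T_mul (s s' : A ≃ₗ[F] A) (t t' : B ≃ₗ[F] B) (φ φ' : B →ₗ[F] A) :
    T s t φ * T s' t' φ' = T (s * s') (t * t') ((s : A →ₗ[F] A) ∘ₗ φ' + φ ∘ₗ (t' : B →ₗ[F] B)) := by
  apply LinearEquiv.ext
  intro x
  simp only [LinearEquiv.mul_apply, T_apply, LinearMap.add_apply, LinearMap.comp_apply, map_add,
    LinearEquiv.coe_coe, add_assoc]

lemma T_one : T (1 : A ≃ₗ[F] A) (1 : B ≃ₗ[F] B) 0 = 1 := by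
  apply LinearEquiv.ext
  intro x
  simp [T_apply]

lemma T_inj {s s' : A ≃ₗ[F] A} {t t' : B ≃ₗ[F] B} {φ φ' : B →ₗ[F] A} (h : T s t φ = T s' t' φ') :
    s = s' ∧ t = t' ∧ φ = φ' := by
  have h0 : ∀ a b, (s a + φ b, t b) = (s' a + φ' b, t' b) := fun a b => by
    have := DFunLike.congr_fun h (a, b)
    simpa [T_apply] using this
  refine ⟨?_, ?_, ?_⟩
  · ext a; simpa using congrArg Prod.fst (h0 a 0)
  · ext b; simpa using congrArg Prod.snd (h0 0 b)
  · ext b; simpa using congrArg Prod.fst (h0 0 b)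

lemma T_pow (φ : B →ₗ[F] A) (k : ℕ) : (T (1 : A ≃ₗ[F] A) (1 : B ≃ₗ[F] B) φ) ^ k = T 1 1 ((k : F) • φ) := by
  induction k with
  | zero => simp [T_one]
  | succ k ih =>
    rw [pow_succ, ih, T_mul]
    congr 1
    ext b
    simp [add_smul, add_comm]

lemma T_inv (s : A ≃ₗ[F] A) (t : B ≃ₗ[F] B) (φ : B →ₗ[F] A) :
    ∃ ψ, (T s t φ)⁻¹ = T s⁻¹ t⁻¹ ψ := by
  refine ⟨-((s⁻¹ : A ≃ₗ[F] A) : A →ₗ[F] A) ∘ₗ φ ∘ₗ ((t⁻¹ : B ≃ₗ[F] B) : B →ₗ[F] B), ?_⟩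
  rw [inv_eq_iff_mul_eq_one, T_mul, ← T_one]
  congr 1
  · simp
  · simp
  · ext b
    simp only [LinearMap.add_apply, LinearMap.comp_apply, LinearMap.neg_apply, map_neg, LinearEquiv.coe_coe,
      LinearMap.zero_apply]
    have : s (s⁻¹ (φ (t⁻¹ b))) = φ (t⁻¹ b) := by rw [← LinearEquiv.mul_apply]; simp
    rw [this]; simp

lemma det_T [Finite A] [Finite B] (s : A ≃ₗ[F] A) (t : B ≃ₗ[F] B) (φ : B →ₗ[F] A) :
    LinearEquiv.det (T s t φ) = LinearEquiv.det s * LinearEquiv.det t := by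
  have : Module.Finite F A := Module.Finite.of_finite
  have : Module.Finite F B := Module.Finite.of_finite
  apply Units.ext
  rw [Units.val_mul, LinearEquiv.coe_det, LinearEquiv.coe_det, LinearEquiv.coe_det]
  let bA := Module.finBasis F A
  let bB := Module.finBasis F B
  rw [← LinearMap.det_toMatrix (bA.prod bB), ← LinearMap.det_toMatrix bA, ← LinearMap.det_toMatrix bB,
    ← Matrix.det_fromBlocks_zero₂₁ (LinearMap.toMatrix bA bA ↑s) (LinearMap.toMatrix bB bA φ) (LinearMap.toMatrix bB bB ↑t)]
  congr 1
  ext (i | i) (j | j) <;> simp [LinearMap.toMatrix_apply, T_apply]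

/-- image of the block triangular part of `H` in the first factor -/
def HA (H : Subgroup ((A × B) ≃ₗ[F] (A × B))) : Subgroup (A ≃ₗ[F] A) where
  carrier := {s | ∃ t φ, T s t φ ∈ H}
  one_mem' := ⟨1, 0, by rw [T_one]; exact H.one_mem⟩
  mul_mem' := by
    rintro s s' ⟨t, φ, h⟩ ⟨t', φ', h'⟩
    exact ⟨_, _, by have := H.mul_mem h h'; rwa [T_mul] at this⟩
  inv_mem' := by
    rintro s ⟨t, φ, h⟩
    obtain ⟨ψ, hψ⟩ := T_inv s t φ
    exact ⟨_, ψ, by rw [← hψ]; exact H.inv_mem h⟩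

/-- image of the block triangular part of `H` in the second factor -/
def HB (H : Subgroup ((A × B) ≃ₗ[F] (A × B))) : Subgroup (B ≃ₗ[F] B) where
  carrier := {t | ∃ s φ, T s t φ ∈ H}
  one_mem' := ⟨1, 0, by rw [T_one]; exact H.one_mem⟩
  mul_mem' := by
    rintro t t' ⟨s, φ, h⟩ ⟨s', φ', h'⟩
    exact ⟨_, _, by have := H.mul_mem h h'; rwa [T_mul] at this⟩
  inv_mem' := by
    rintro t ⟨s, φ, h⟩
    obtain ⟨ψ, hψ⟩ := T_inv s t φ
    exact ⟨_, ψ, by rw [← hψ]; exact H.inv_mem h⟩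

lemma T_pow' (s : A ≃ₗ[F] A) (t : B ≃ₗ[F] B) (φ : B →ₗ[F] A) (k : ℕ) :
    ∃ ψ, (T s t φ) ^ k = T (s ^ k) (t ^ k) ψ := by
  induction k with
  | zero => exact ⟨0, by simp [T_one]⟩
  | succ k ih =>
    obtain ⟨ψ, hψ⟩ := ih
    rw [pow_succ, hψ, T_mul]
    exact ⟨_, rfl⟩

lemma Ex_HA {N : ℕ} {H : Subgroup ((A × B) ≃ₗ[F] (A × B))} (hH : Ex N H) : Ex N (HA H) := by
  rintro s ⟨t, φ, h⟩
  obtain ⟨ψ, hψ⟩ := T_pow' s t φ N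
  rw [hH _ h, ← T_one] at hψ
  exact (T_inj hψ).1.symm

lemma Ex_HB {N : ℕ} {H : Subgroup ((A × B) ≃ₗ[F] (A × B))} (hH : Ex N H) : Ex N (HB H) := by
  rintro t ⟨s, φ, h⟩
  obtain ⟨ψ, hψ⟩ := T_pow' s t φ N
  rw [hH _ h, ← T_one] at hψ
  exact (T_inj hψ).2.1.symm

lemma T_unip {N : ℕ} (hN : (N : F) ≠ 0) {H : Subgroup ((A × B) ≃ₗ[F] (A × B))} (hH : Ex N H)
    {s : A ≃ₗ[F] A} {t : B ≃ₗ[F] B} {φ φ' : B →ₗ[F] A} (h : T s t φ ∈ H) (h' : T s t φ' ∈ H) :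
    φ = φ' := by
  obtain ⟨ψ, hψ⟩ := T_inv s t φ'
  have h1 := H.mul_mem h (H.inv_mem h')
  rw [hψ, T_mul, mul_inv_cancel, mul_inv_cancel] at h1
  set χ := (s : A →ₗ[F] A) ∘ₗ ψ + φ ∘ₗ ((t⁻¹ : B ≃ₗ[F] B) : B →ₗ[F] B) with hχ
  have h2 := hH _ h1
  rw [T_pow, ← T_one] at h2
  have h3 := (T_inj h2).2.2
  have h4 : χ = 0 := (smul_eq_zero.mp h3).resolve_left hN
  have h5 : T s t φ * (T s t φ')⁻¹ = 1 := by
    rw [hψ, T_mul, mul_inv_cancel, mul_inv_cancel, ← hχ, h4, T_one]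
  exact (T_inj (mul_inv_eq_one.mp h5)).2.2

/-- `T` conjugation -/
lemma T_conj (a s : A ≃ₗ[F] A) (b t : B ≃ₗ[F] B) (φ : B →ₗ[F] A) :
    ∃ ψ : B →ₗ[F] A, T s t φ * T a b 0 * (T s t φ)⁻¹ = T (s * a * s⁻¹) (t * b * t⁻¹) ψ ∧
      ∀ x, s (a (s⁻¹ (φ x))) + ψ (t x) = φ (b x) := by
  obtain ⟨χ, hχ⟩ := T_inv s t φ
  have key : ∃ ψ, T s t φ * T a b 0 * (T s t φ)⁻¹ = T (s * a * s⁻¹) (t * b * t⁻¹) ψ := by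
    rw [hχ, T_mul, T_mul]; exact ⟨_, rfl⟩
  obtain ⟨ψ, hψ⟩ := key
  refine ⟨ψ, hψ, fun x => ?_⟩
  rw [mul_inv_eq_iff_eq_mul] at hψ
  have := congrArg Prod.fst (DFunLike.congr_fun hψ ((0 : A), x))
  simpa [T_apply] using this.symm

variable [Finite A] [Finite B]

lemma count_phi {N : ℕ} (hN : (N : F) ≠ 0) {H : Subgroup ((A × B) ≃ₗ[F] (A × B))} (hH : Ex N H)
    (a s : A ≃ₗ[F] A) (b t : B ≃ₗ[F] B) :
    Nat.card {φ : B →ₗ[F] A // T s t φ * T a b 0 * (T s t φ)⁻¹ ∈ H} ≤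
      Nat.card {φ : B →ₗ[F] A // ∀ x, φ (b x) = a (φ x)} := by
  rcases isEmpty_or_nonempty {φ : B →ₗ[F] A // T s t φ * T a b 0 * (T s t φ)⁻¹ ∈ H} with he | ⟨⟨φ0, h0⟩⟩
  · simp
  have hd : ∀ φ : B →ₗ[F] A, T s t φ * T a b 0 * (T s t φ)⁻¹ ∈ H →
      ∀ x, s⁻¹ ((φ - φ0) (b x)) = a (s⁻¹ ((φ - φ0) x)) := by
    intro φ h x
    obtain ⟨ψ, h1, h2⟩ := T_conj a s b t φ
    obtain ⟨ψ0, h3, h4⟩ := T_conj a s b t φ0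
    rw [h1] at h
    have h0' := h0
    rw [h3] at h0'
    have h5 := T_unip hN hH h h0'
    have e1 := h2 x
    have e2 := h4 x
    subst h5
    simp only [LinearMap.sub_apply, map_sub]
    rw [← e1, ← e2]
    have hs : ∀ y, s⁻¹ (s y) = y := fun y => by rw [← LinearEquiv.mul_apply]; simp
    simp only [map_add, hs]
    abel
  refine Nat.card_le_card_of_injective
    (fun φ => ⟨((s⁻¹ : A ≃ₗ[F] A) : A →ₗ[F] A) ∘ₗ (φ.1 - φ0), fun x => hd φ.1 φ.2 x⟩) ?_
  intro φ φ' h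
  have h1 := congrArg Subtype.val h
  simp only at h1
  apply Subtype.ext
  ext x
  have h2 := DFunLike.congr_fun h1 x
  simp only [LinearMap.comp_apply, LinearEquiv.coe_coe] at h2
  have h3 := (s⁻¹).injective h2
  simpa using h3

lemma count_triple {N : ℕ} (hN : (N : F) ≠ 0) {H : Subgroup ((A × B) ≃ₗ[F] (A × B))} (hH : Ex N H)
    (a : A ≃ₗ[F] A) (b : B ≃ₗ[F] B) :
    Nat.card {u : (A ≃ₗ[F] A) × (B ≃ₗ[F] B) × (B →ₗ[F] A) //
      (LinearEquiv.det u.1 = 1 ∧ LinearEquiv.det u.2.1 = 1) ∧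
        T u.1 u.2.1 u.2.2 * T a b 0 * (T u.1 u.2.1 u.2.2)⁻¹ ∈ H} ≤
      Pc a (HA H) * Pc b (HB H) * Nat.card {φ : B →ₗ[F] A // ∀ x, φ (b x) = a (φ x)} := by
  let X := {x : A ≃ₗ[F] A // LinearEquiv.det x = 1 ∧ x * a * x⁻¹ ∈ HA H}
  let Y := {x : B ≃ₗ[F] B // LinearEquiv.det x = 1 ∧ x * b * x⁻¹ ∈ HB H}
  have step : Nat.card {u : (A ≃ₗ[F] A) × (B ≃ₗ[F] B) × (B →ₗ[F] A) //
      (LinearEquiv.det u.1 = 1 ∧ LinearEquiv.det u.2.1 = 1) ∧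
        T u.1 u.2.1 u.2.2 * T a b 0 * (T u.1 u.2.1 u.2.2)⁻¹ ∈ H} ≤
      Nat.card (Σ z : X × Y, {φ : B →ₗ[F] A // T z.1.1 z.2.1 φ * T a b 0 * (T z.1.1 z.2.1 φ)⁻¹ ∈ H}) := by
    refine Nat.card_le_card_of_injective (fun u => ⟨(⟨u.1.1, u.2.1.1, ?_⟩, ⟨u.1.2.1, u.2.1.2, ?_⟩), ⟨u.1.2.2, u.2.2⟩⟩) ?_
    · obtain ⟨ψ, h1, _⟩ := T_conj a u.1.1 b u.1.2.1 u.1.2.2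
      exact ⟨_, ψ, by rw [← h1]; exact u.2.2⟩
    · obtain ⟨ψ, h1, _⟩ := T_conj a u.1.1 b u.1.2.1 u.1.2.2
      exact ⟨_, ψ, by rw [← h1]; exact u.2.2⟩
    · rintro ⟨⟨s, t, φ⟩, hu⟩ ⟨⟨s', t', φ'⟩, hu'⟩ h
      simp only [Sigma.mk.injEq, Prod.mk.injEq, Subtype.mk.injEq] at h
      obtain ⟨⟨k1, k2⟩, h3⟩ := h
      have h1 : s = s' := congrArg Subtype.val k1
      have h2 : t = t' := congrArg Subtype.val k2
      subst h1 h2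
      simpa using h3
  refine step.trans ?_
  have : Fintype (X × Y) := Fintype.ofFinite _
  rw [Nat.card_sigma]
  refine (Finset.sum_le_card_nsmul _ _ _ (fun z _ => count_phi hN hH a z.1.1 b z.2.1)).trans ?_
  rw [smul_eq_mul, Finset.card_univ, ← Nat.card_eq_fintype_card, Nat.card_prod]
  exact le_rfl

lemma PB_T {N : ℕ} (hN : (N : F) ≠ 0) (a : A ≃ₗ[F] A) (b : B ≃ₗ[F] B) {c d : ℝ}
    (ha : PB N a c) (hb : PB N b d) (hc : 0 ≤ c) (hd : 0 ≤ d) :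
    PB N (T a b 0) ((Nat.card {φ : B →ₗ[F] A // ∀ x, φ (b x) = a (φ x)} : ℝ) / Nat.card (B →ₗ[F] A)
      * c * d) := by
  intro H hH
  set K := Nat.card {φ : B →ₗ[F] A // ∀ x, φ (b x) = a (φ x)} with hK
  let S := {x : (A × B) ≃ₗ[F] (A × B) // LinearEquiv.det x = 1}
  let U := {u : (A ≃ₗ[F] A) × (B ≃ₗ[F] B) × (B →ₗ[F] A) //
      (LinearEquiv.det u.1 = 1 ∧ LinearEquiv.det u.2.1 = 1)}
  let TT : U → (A × B) ≃ₗ[F] (A × B) := fun u => T u.1.1 u.1.2.1 u.1.2.2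
  have hTT : ∀ u, LinearEquiv.det (TT u) = 1 := fun u => by
    simp only [TT]; rw [det_T, u.2.1, u.2.2, one_mul]
  let g := T a b (0 : B →ₗ[F] A)
  have hU : Nat.card U = SLc F A * SLc F B * Nat.card (B →ₗ[F] A) := by
    unfold SLc
    rw [← Nat.card_prod, ← Nat.card_prod]
    refine Nat.card_congr ⟨fun u => ((⟨u.1.1, u.2.1⟩, ⟨u.1.2.1, u.2.2⟩), u.1.2.2),
      fun v => ⟨(v.1.1.1, v.1.2.1, v.2), v.1.1.2, v.1.2.2⟩, fun u => rfl, fun v => rfl⟩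
  -- double count
  let E := {z : S × U // z.1.1 * (TT z.2 * g * (TT z.2)⁻¹) * z.1.1⁻¹ ∈ H}
  have e1 : Nat.card E = Nat.card U * Pc g H := by
    unfold Pc
    rw [← Nat.card_prod]
    refine Nat.card_congr ⟨fun z => (z.1.2, ⟨z.1.1.1 * TT z.1.2, ?_, ?_⟩),
      fun v => ⟨(⟨v.2.1 * (TT v.1)⁻¹, ?_⟩, v.1), ?_⟩, fun z => ?_, fun v => ?_⟩
    · rw [map_mul, z.1.1.2, hTT, one_mul]
    · have := z.2
      rwa [show z.1.1.1 * TT z.1.2 * g * (z.1.1.1 * TT z.1.2)⁻¹ =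
        z.1.1.1 * (TT z.1.2 * g * (TT z.1.2)⁻¹) * z.1.1.1⁻¹ by group]
    · rw [map_mul, map_inv, v.2.2.1, hTT, one_mul, inv_one]
    · have := v.2.2.2
      simp only
      rwa [show v.2.1 * (TT v.1)⁻¹ * (TT v.1 * g * (TT v.1)⁻¹) * (v.2.1 * (TT v.1)⁻¹)⁻¹ =
        v.2.1 * g * v.2.1⁻¹ by group]
    · apply Subtype.ext
      simp
    · apply Prod.ext
      · rfl
      · apply Subtype.ext; simp
  have e2 : (Nat.card E : ℝ) ≤ Nat.card S * (c * SLc F A * (d * SLc F B) * K) := by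
    have e3 : Nat.card E = Nat.card (Σ x : S, {u : U // x.1 * (TT u * g * (TT u)⁻¹) * x.1⁻¹ ∈ H}) := by
      refine Nat.card_congr ⟨fun z => ⟨z.1.1, z.1.2, z.2⟩, fun z => ⟨(z.1, z.2.1), z.2.2⟩,
        fun z => rfl, fun z => rfl⟩
    have : Fintype S := Fintype.ofFinite _
    rw [e3, Nat.card_sigma, Nat.cast_sum]
    refine (Finset.sum_le_card_nsmul _ _ (c * SLc F A * (d * SLc F B) * K) (fun x _ => ?_)).trans ?_
    · let H' := H.comap (MulAut.conj x.1).toMonoidHom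
      have hH' : Ex N H' := by
        intro k hk
        have := hH _ hk
        rw [← map_pow] at this
        have h2 := (MulAut.conj x.1).injective (this.trans (map_one (MulAut.conj x.1)).symm)
        exact h2
      have h1 := count_triple hN hH' a b
      have h2 : Nat.card {u : U // x.1 * (TT u * g * (TT u)⁻¹) * x.1⁻¹ ∈ H} ≤
        Nat.card {u : (A ≃ₗ[F] A) × (B ≃ₗ[F] B) × (B →ₗ[F] A) //
      (LinearEquiv.det u.1 = 1 ∧ LinearEquiv.det u.2.1 = 1) ∧
        T u.1 u.2.1 u.2.2 * T a b 0 * (T u.1 u.2.1 u.2.2)⁻¹ ∈ H'} :=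
        Nat.card_le_card_of_injective (fun u => ⟨u.1.1, u.1.2, u.2⟩) (fun u v h => by
          apply Subtype.ext; apply Subtype.ext; simpa using h)
      have h3 : (Nat.card {u : U // x.1 * (TT u * g * (TT u)⁻¹) * x.1⁻¹ ∈ H} : ℝ) ≤
          Pc a (HA H') * Pc b (HB H') * K := by exact_mod_cast h2.trans h1
      refine h3.trans ?_
      have h4 := ha _ (Ex_HA hH')
      have h5 := hb _ (Ex_HB hH')
      gcongr
    · rw [nsmul_eq_mul, Finset.card_univ, ← Nat.card_eq_fintype_card]
  have hSL : (Nat.card S : ℝ) = SLc F (A × B) := rfl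
  rw [e1, hU, hSL] at e2
  push_cast at e2
  have p1 : (0 : ℝ) < SLc F A := by exact_mod_cast SLc_pos
  have p2 : (0 : ℝ) < SLc F B := by exact_mod_cast SLc_pos
  have p3 : (0 : ℝ) < Nat.card (B →ₗ[F] A) := by exact_mod_cast Nat.card_pos
  rw [div_mul_eq_mul_div, div_mul_eq_mul_div, div_mul_eq_mul_div, le_div_iff₀ p3]
  have : (SLc F A * SLc F B : ℝ) * (Pc g H * Nat.card (B →ₗ[F] A)) ≤
      (SLc F A * SLc F B) * (K * c * d * SLc F (A × B)) := by linarith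
  exact le_of_mul_le_mul_left this (by positivity)

end recursion
end HP

namespace HP
set_option linter.unusedVariables false
set_option linter.unusedSectionVars false
set_option linter.unusedSimpArgs false
section split
variable {F : Type} [Field F] {V : Type} [AddCommGroup V] [Module F V] [Finite V]

/-- invariant subspace -/
def Inv (g : V ≃ₗ[F] V) (A : Submodule F V) : Prop := ∀ a ∈ A, g a ∈ A

/-- irreducible -/
def Irr (g : V ≃ₗ[F] V) : Prop := ∀ W : Submodule F V, Inv g W → W = ⊥ ∨ W = ⊤

/-- restriction to an invariant subspace -/
noncomputable def res (g : V ≃ₗ[F] V) (A : Submodule F V) (hA : Inv g A) : A ≃ₗ[F] A :=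
  LinearEquiv.ofBijective ((g : V →ₗ[F] V).restrict hA) (by
    apply Finite.injective_iff_bijective.mp
    intro x y h
    have h1 : g (x : V) = g (y : V) := congrArg Subtype.val h
    exact Subtype.ext (g.injective h1))

lemma res_apply (g : V ≃ₗ[F] V) (A : Submodule F V) (hA : Inv g A) (a : A) :
    (res g A hA a : V) = g a := rfl

lemma res_pow (g : V ≃ₗ[F] V) (A : Submodule F V) (hA : Inv g A) (k : ℕ) (a : A) :
    ((res g A hA ^ k) a : V) = (g ^ k) a := by
  induction k generalizing a with
  | zero => simp
  | succ k ih => rw [pow_succ, pow_succ, LinearEquiv.mul_apply, LinearEquiv.mul_apply, ih, res_apply]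

lemma res_pow_one {N : ℕ} {g : V ≃ₗ[F] V} (hg : g ^ N = 1) (A : Submodule F V) (hA : Inv g A) :
    res g A hA ^ N = 1 := by
  ext a
  rw [res_pow, hg]; rfl

lemma PB_split {N : ℕ} (hN : (N : F) ≠ 0) (g : V ≃ₗ[F] V) (A B : Submodule F V) (hAB : IsCompl A B)
    (hA : Inv g A) (hB : Inv g B) {c d : ℝ} (hc : 0 ≤ c) (hd : 0 ≤ d)
    (h1 : PB N (res g A hA) c) (h2 : PB N (res g B hB) d) :
    PB N g ((Nat.card {φ : B →ₗ[F] A // ∀ x, φ (res g B hB x) = res g A hA (φ x)} : ℝ)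
      / Nat.card (B →ₗ[F] A) * c * d) := by
  have h := PB_cj (Submodule.prodEquivOfIsCompl A B hAB) (PB_T hN _ _ h1 h2 hc hd)
  convert h
  apply LinearEquiv.ext
  intro v
  obtain ⟨⟨a, b⟩, rfl⟩ := (Submodule.prodEquivOfIsCompl A B hAB).surjective v
  rw [cj_apply, LinearEquiv.symm_apply_apply, T_apply]
  simp [Submodule.coe_prodEquivOfIsCompl, res_apply]

lemma exists_compl {N : ℕ} (hN : (N : F) ≠ 0) {g : V ≃ₗ[F] V} (hg : g ^ N = 1) (A : Submodule F V)
    (hA : Inv g A) : ∃ B : Submodule F V, Inv g B ∧ IsCompl A B := by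
  have : Module.Finite F V := Module.Finite.of_finite
  have hs : Squarefree (Polynomial.X ^ N - 1 : Polynomial F) :=
    (Polynomial.separable_X_pow_sub_C (1 : F) hN one_ne_zero).squarefree
  have hss := Module.End.isSemisimple_of_squarefree_aeval_eq_zero (f := (g : V →ₗ[F] V)) hs (by
    simp only [map_sub, map_pow, Polynomial.aeval_X, map_one]
    rw [sub_eq_zero]
    ext v
    have h1 : ∀ k : ℕ, ∀ v, ((g : V →ₗ[F] V) ^ k) v = (g ^ k) v := by
      intro k
      induction k with
      | zero => intro v; simp
      | succ k ih => intro v; rw [pow_succ, pow_succ, Module.End.mul_apply, ih]; rfl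
    rw [h1, hg]; rfl)
  rw [Module.End.isSemisimple_iff] at hss
  obtain ⟨B, hB, hc⟩ := hss A hA
  exact ⟨B, hB, hc⟩

lemma card_pow (W : Submodule F V) [Finite F] :
    Nat.card W = Nat.card F ^ Module.finrank F W := Module.natCard_eq_pow_finrank

lemma card_hom (A B : Submodule F V) [Finite F] :
    Nat.card (B →ₗ[F] A) = Nat.card F ^ (Module.finrank F B * Module.finrank F A) := by
  have : Module.Finite F V := Module.Finite.of_finite
  rw [Module.natCard_eq_pow_finrank (K := F), Module.finrank_linearMap]

/-- eigenspace as a submodule -/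
def eig (g : V ≃ₗ[F] V) (c : F) : Submodule F V where
  carrier := {v | g v = c • v}
  add_mem' := by intro a b ha hb; simp only [Set.mem_ofPred_eq] at *; rw [map_add, ha, hb, smul_add]
  zero_mem' := by simp
  smul_mem' := by intro k a ha; simp only [Set.mem_ofPred_eq] at *; rw [map_smul, ha, smul_comm]

lemma mem_eig {g : V ≃ₗ[F] V} {c : F} {v : V} : v ∈ eig g c ↔ g v = c • v := Iff.rfl

lemma Inv_eig (g : V ≃ₗ[F] V) (c : F) : Inv g (eig g c) := by
  intro a ha
  rw [mem_eig] at *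
  rw [ha, map_smul, ha]

lemma q_pos [Finite F] : (0 : ℝ) < Nat.card F := by exact_mod_cast Nat.card_pos

lemma finrank_compl {A B : Submodule F V} (h : IsCompl A B) :
    Module.finrank F A + Module.finrank F B = Module.finrank F V := by
  have : Module.Finite F V := Module.Finite.of_finite
  exact Submodule.finrank_add_eq_of_isCompl h

lemma PB_eig [Finite F] {N : ℕ} (hN : (N : F) ≠ 0) {g : V ≃ₗ[F] V} (c : F)
    {R : Submodule F V} (hR : Inv g R) (hc : IsCompl (eig g c) R) {x : ℝ}
    (h : PB N (res g R hR) ((Nat.card F : ℝ) ^ (-x))) :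
    PB N g ((Nat.card F : ℝ) ^ (-(Module.finrank F (eig g c) * Module.finrank F R + x))) := by
  have h1 := PB_split hN g _ R hc (Inv_eig g c) hR zero_le_one (by positivity) (PB_one N _) h
  refine h1.mono ?_
  have hone : Nat.card {φ : R →ₗ[F] eig g c // ∀ x, φ (res g R hR x) = res g (eig g c) (Inv_eig g c) (φ x)} ≤ 1 := by
    have : Subsingleton {φ : R →ₗ[F] eig g c // ∀ x, φ (res g R hR x) = res g (eig g c) (Inv_eig g c) (φ x)} := by
      suffices hz : ∀ φ : R →ₗ[F] eig g c, (∀ x, φ (res g R hR x) = res g (eig g c) (Inv_eig g c) (φ x)) → φ = 0 by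
        constructor
        rintro ⟨a, ha⟩ ⟨b, hb⟩
        apply Subtype.ext
        exact (hz a ha).trans (hz b hb).symm
      intro φ hφ
      let ψ : R →ₗ[F] R := (res g R hR : R →ₗ[F] R) - c • LinearMap.id
      have hinj : Function.Injective ψ := by
        rw [← LinearMap.ker_eq_bot, LinearMap.ker_eq_bot']
        intro r hr
        have h2 : g r = c • (r : V) := by
          have := congrArg Subtype.val (sub_eq_zero.mp hr)
          simpa [res_apply] using this
        have h3 : (r : V) ∈ eig g c ⊓ R := ⟨h2, r.2⟩
        rw [hc.inf_eq_bot] at h3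
        exact Subtype.ext (by simpa using h3)
      have hsurj := Finite.injective_iff_surjective.mp hinj
      ext r
      obtain ⟨y, rfl⟩ := hsurj r
      have h4 : φ (ψ y) = 0 := by
        simp only [ψ, LinearMap.sub_apply, map_sub, LinearEquiv.coe_coe, hφ, LinearMap.smul_apply, LinearMap.id_apply, map_smul]
        rw [sub_eq_zero]
        apply Subtype.ext
        rw [res_apply]
        exact (φ y).2
      rw [h4]; rfl
    exact Finite.card_le_one_iff_subsingleton.mpr this
  rw [card_hom]
  have hq := q_pos (F := F)
  have hone' : (Nat.card {φ : R →ₗ[F] eig g c // ∀ x, φ (res g R hR x) = res g (eig g c) (Inv_eig g c) (φ x)} : ℝ) ≤ 1 := by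
    exact_mod_cast hone
  rw [neg_add, Real.rpow_add hq, mul_one]
  gcongr
  rw [Real.rpow_neg hq.le, ← one_div]
  push_cast
  rw [mul_comm (Module.finrank F (eig g c) : ℝ), ← Nat.cast_mul, Real.rpow_natCast]
  gcongr

lemma PB_irr [Finite F] {N : ℕ} (hN : (N : F) ≠ 0) {g : V ≃ₗ[F] V} 
    {A B : Submodule F V} (hA : Inv g A) (hB : Inv g B) (hc : IsCompl A B) (hb : B ≠ ⊥)
    (hirr : Irr (res g B hB)) {x y : ℝ}
    (h : PB N (res g A hA) ((Nat.card F : ℝ) ^ (-x)))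
    (h' : PB N (res g B hB) ((Nat.card F : ℝ) ^ (-y))) :
    PB N g ((Nat.card F : ℝ) ^ (-(((Module.finrank F B : ℝ) - 1) * Module.finrank F A + x + y))) := by
  have h1 := PB_split hN g A B hc hA hB (by positivity) (by positivity) h h'
  refine h1.mono ?_
  have hone : Nat.card {φ : B →ₗ[F] A // ∀ x, φ (res g B hB x) = res g A hA (φ x)} ≤ Nat.card A := by
    obtain ⟨v, hv, hv0⟩ := Submodule.exists_mem_ne_zero_of_ne_bot hb
    refine Nat.card_le_card_of_injective (fun φ => φ.1 ⟨v, hv⟩) ?_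
    rintro ⟨a, ha⟩ ⟨b, hb⟩ hab
    simp only at hab
    apply Subtype.ext
    have hk : LinearMap.ker (a - b) = ⊤ := by
      refine (hirr (LinearMap.ker (a - b)) ?_).resolve_left ?_
      · intro w hw
        rw [LinearMap.mem_ker, LinearMap.sub_apply, sub_eq_zero] at hw ⊢
        rw [ha, hb, hw]
      · intro h0
        have : (⟨v, hv⟩ : B) ∈ LinearMap.ker (a - b) := by
          rw [LinearMap.mem_ker, LinearMap.sub_apply, hab, sub_self]
        rw [h0, Submodule.mem_bot] at this
        exact hv0 (congrArg Subtype.val this)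
    have := LinearMap.ker_eq_top.mp hk
    exact sub_eq_zero.mp this
  rw [card_pow] at hone
  rw [card_hom]
  have hq := q_pos (F := F)
  have hone' : (Nat.card {φ : B →ₗ[F] A // ∀ x, φ (res g B hB x) = res g A hA (φ x)} : ℝ) ≤
      (Nat.card F : ℝ) ^ Module.finrank F A := by
    exact_mod_cast hone
  rw [neg_add, Real.rpow_add hq, neg_add, Real.rpow_add hq]
  gcongr
  refine (div_le_div_of_nonneg_right hone' (by positivity)).trans ?_
  rw [show -(((Module.finrank F B : ℝ) - 1) * Module.finrank F A) =
    (Module.finrank F A : ℝ) - ((Module.finrank F B * Module.finrank F A : ℕ) : ℝ) by push_cast; ring,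
    Real.rpow_sub hq, Real.rpow_natCast, Real.rpow_natCast]
  push_cast
  exact le_rfl

/-- existence of an irreducible invariant subspace -/
lemma exists_irr (g : V ≃ₗ[F] V) [Nontrivial V] :
    ∃ B : Submodule F V, ∃ hB : Inv g B, B ≠ ⊥ ∧ Irr (res g B hB) := by
  have : Module.Finite F V := Module.Finite.of_finite
  have hne : ∃ n : ℕ, ∃ B : Submodule F V, Inv g B ∧ B ≠ ⊥ ∧ Module.finrank F B = n :=
    ⟨_, ⊤, fun _ _ => trivial, top_ne_bot, rfl⟩
  classical
  obtain ⟨B, hB, hb, hn⟩ := Nat.find_spec hne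
  refine ⟨B, hB, hb, ?_⟩
  intro W hW
  by_cases hw : W = ⊥
  · exact Or.inl hw
  right
  have h1 : Inv g (W.map B.subtype) := by
    rintro _ ⟨w, hw, rfl⟩
    exact ⟨_, hW w hw, rfl⟩
  have h2 : W.map B.subtype ≠ ⊥ := by
    intro h
    exact hw (Submodule.map_injective_of_injective B.injective_subtype
      (h.trans (Submodule.map_bot _).symm))
  have h3 : Nat.find hne ≤ Module.finrank F (W.map B.subtype) := Nat.find_min' hne ⟨_, h1, h2, rfl⟩
  rw [← hn, Submodule.finrank_map_subtype_eq] at h3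
  exact Submodule.eq_top_of_finrank_eq (le_antisymm (Submodule.finrank_le W) h3)

end split
end HP

namespace HP
set_option linter.unusedVariables false
set_option linter.unusedSectionVars false
set_option linter.unusedSimpArgs false

section counting
variable {Γ : Type} [Group Γ] [Finite Γ]

lemma odd_index_of_pow {Z : Subgroup Γ} [Z.Normal] {N : ℕ} (hN : Odd N) (h : ∀ g : Γ, g ^ N ∈ Z) :
    Odd Z.index := by
  rw [← Nat.not_even_iff_odd, even_iff_two_dvd, Subgroup.index_eq_card]
  intro h2
  obtain ⟨x, hx⟩ := exists_prime_orderOf_dvd_card' (G := Γ ⧸ Z) 2 h2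
  obtain ⟨g, rfl⟩ := QuotientGroup.mk_surjective x
  have h3 : (g : Γ ⧸ Z) ^ N = 1 := by
    rw [← QuotientGroup.mk_pow, QuotientGroup.eq_one_iff]; exact h g
  have h4 := orderOf_dvd_of_pow_eq_one h3
  rw [hx] at h4
  obtain ⟨k, hk⟩ := hN
  omega

lemma three_le_of_odd {Z C : Subgroup Γ} (hZ : Odd Z.index) (hZC : Z ≤ C) (hne : Z ≠ C) :
    3 * Nat.card Z ≤ Nat.card C := by
  have h1 : Z.relIndex C * C.index = Z.index := Subgroup.relIndex_mul_index hZC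
  rw [← h1, Nat.odd_mul] at hZ
  have h2 : Z.relIndex C ≠ 1 := by
    intro h
    rw [Subgroup.relIndex_eq_one] at h
    exact hne (le_antisymm hZC h)
  have h3 : 3 ≤ Z.relIndex C := by
    obtain ⟨k, hk⟩ := hZ.1
    omega
  have h5 : Nat.card (Z.subgroupOf C) * (Z.subgroupOf C).index = Nat.card C := Subgroup.card_mul_index _
  have h6 : Nat.card (Z.subgroupOf C) = Nat.card Z := Nat.card_congr (Subgroup.subgroupOfEquivOfLe hZC).toEquiv
  have h7 : (Z.subgroupOf C).index = Z.relIndex C := rfl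
  rw [h6, h7] at h5
  nlinarith

variable (Z : Subgroup Γ)

/-- conjugates of the centralizer -/
def Uset (g : Γ) : Set Γ := {x | x ∉ Z ∧ ∃ h : Γ, (h * x * h⁻¹) * g = g * (h * x * h⁻¹)}

lemma Uset_card (hc : ∀ z ∈ Z, ∀ g : Γ, z * g = g * z)
  (h1 : ∀ g ∉ Z, ∀ a b : Γ, a * g = g * a → b * g = g * b → a * b = b * a)
  (h2 : ∀ g ∉ Z, ∀ h : Γ, (h * g * h⁻¹) * g = g * (h * g * h⁻¹) → h * g = g * h)
    {g : Γ} (hg : g ∉ Z) :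
    Nat.card Γ * Nat.card {x : Γ // x * g = g * x ∧ x ∉ Z} =
      Nat.card (Uset Z g) * Nat.card {x : Γ // x * g = g * x} := by
  have hconj : ∀ x ∉ Z, ∀ h : Γ, h * x * h⁻¹ ∉ Z := by
    intro x hx h hz
    apply hx
    have h3 := hc _ hz h
    have h4 : x = h * x * h⁻¹ := by
      calc x = h⁻¹ * (h * x * h⁻¹ * h) := by group
        _ = h⁻¹ * (h * (h * x * h⁻¹)) := by rw [h3]
        _ = h * x * h⁻¹ := by group
    rw [h4]; exact hz
  rw [← Nat.card_prod, ← Nat.card_prod]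
  symm
  have hch : ∀ u : Uset Z g, ∃ h : Γ, (h * u.1 * h⁻¹) * g = g * (h * u.1 * h⁻¹) := fun u => u.2.2
  choose k hk using hch
  refine Nat.card_congr (Equiv.ofBijective
    (fun v => (v.2.1 * k v.1, ⟨k v.1 * v.1.1 * (k v.1)⁻¹, hk v.1, hconj _ v.1.2.1 _⟩)) ⟨?_, ?_⟩)
  · rintro ⟨u, c, hcc⟩ ⟨u', c', hcc'⟩ h
    simp only [Prod.mk.injEq, Subtype.mk.injEq] at h
    obtain ⟨e1, e2⟩ := h
    have e3 := h1 g hg _ _ hcc (hk u)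
    have e4 := h1 g hg _ _ hcc' (hk u')
    have e5 : u.1 = u'.1 := by
      calc u.1 = (c * k u)⁻¹ * (c * (k u * u.1 * (k u)⁻¹)) * k u := by group
        _ = (c * k u)⁻¹ * ((k u * u.1 * (k u)⁻¹) * c) * k u := by rw [e3]
        _ = (c * k u)⁻¹ * (k u * u.1 * (k u)⁻¹) * (c * k u) := by group
        _ = (c' * k u')⁻¹ * (k u' * u'.1 * (k u')⁻¹) * (c' * k u') := by rw [e1, e2]
        _ = (c' * k u')⁻¹ * ((k u' * u'.1 * (k u')⁻¹) * c') * k u' := by group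
        _ = (c' * k u')⁻¹ * (c' * (k u' * u'.1 * (k u')⁻¹)) * k u' := by rw [e4]
        _ = u'.1 := by group
    have e6 : u = u' := Subtype.ext e5
    subst e6
    have e7 : c = c' := mul_right_cancel e1
    subst e7
    rfl
  · rintro ⟨h, x, hx, hxz⟩
    have hu : h⁻¹ * x * h ∈ Uset Z g := by
      refine ⟨?_, h, ?_⟩
      · have := hconj x hxz h⁻¹
        simpa using this
      · rw [show h * (h⁻¹ * x * h) * h⁻¹ = x by group]; exact hx
    set u : Uset Z g := ⟨_, hu⟩ with hudef
    have hk0 := hk u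
    have hux : u.1 = h⁻¹ * x * h := rfl
    set x0 := k u * u.1 * (k u)⁻¹ with hx0
    have hx0z : x0 ∉ Z := hconj _ u.2.1 _
    have e1 : (h * (k u)⁻¹) * x0 * (h * (k u)⁻¹)⁻¹ = x := by
      rw [hx0, hux]; group
    have e2 : (h * (k u)⁻¹) * x0 = x0 * (h * (k u)⁻¹) := by
      apply h2 x0 hx0z
      rw [e1]
      exact h1 g hg _ _ hx hk0
    have e3 : x = x0 := by rw [← e1, e2]; group
    refine ⟨(u, ⟨h * (k u)⁻¹, ?_⟩), ?_⟩
    · exact h1 x0 hx0z _ _ e2 hk0.symm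
    · simp only [Prod.mk.injEq, Subtype.mk.injEq]
      refine ⟨by group, e3.symm⟩

theorem comm_of_counting (hc : ∀ z ∈ Z, ∀ g : Γ, z * g = g * z)
  (h1 : ∀ g ∉ Z, ∀ a b : Γ, a * g = g * a → b * g = g * b → a * b = b * a)
  (h2 : ∀ g ∉ Z, ∀ h : Γ, (h * g * h⁻¹) * g = g * (h * g * h⁻¹) → h * g = g * h)
    (hodd : Odd Z.index) : ∀ g ∉ Z, ∀ h : Γ, h * g = g * h := by
  classical
  -- centralizer facts
  have hcen : ∀ g ∉ Z, ∃ a z : ℕ, Nat.card {x : Γ // x * g = g * x} = a ∧ Nat.card Z = z ∧ 0 < z ∧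
      Nat.card {x : Γ // x * g = g * x ∧ x ∉ Z} = a - z ∧ 3 * z ≤ a := by
    intro g hg
    let C : Subgroup Γ := Subgroup.centralizer {g}
    have hC : Nat.card C = Nat.card {x : Γ // x * g = g * x} := by
      apply Nat.card_congr
      apply Equiv.subtypeEquivRight
      intro x
      rw [Subgroup.mem_centralizer_singleton_iff]
    have hZC : Z ≤ C := by
      intro z hz
      rw [Subgroup.mem_centralizer_singleton_iff]
      exact hc z hz g
    have hne : Z ≠ C := by
      intro h
      apply hg
      rw [h, Subgroup.mem_centralizer_singleton_iff]
    refine ⟨_, _, rfl, rfl, Nat.card_pos, ?_, by rw [← hC]; exact three_le_of_odd hodd hZC hne⟩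
    have : Fintype Γ := Fintype.ofFinite _
    have e : Nat.card {x : Γ // x * g = g * x} = Nat.card {x : Γ // x * g = g * x ∧ x ∉ Z} + Nat.card Z := by
      have : Nat.card Z = Nat.card {x : Γ // x * g = g * x ∧ x ∈ Z} := by
        apply Nat.card_congr
        apply Equiv.subtypeEquivRight
        intro x
        exact ⟨fun h => ⟨hc x h g, h⟩, fun h => h.2⟩
      rw [this]
      simp only [Nat.card_eq_fintype_card, Fintype.card_subtype]
      rw [← Finset.card_union_of_disjoint]
      · congr 1; ext x; simp; tauto
      · rw [Finset.disjoint_left]; intro x; simp; tauto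
    omega
  have hUsub : ∀ g ∉ Z, Nat.card (Uset Z g) + Nat.card Z ≤ Nat.card Γ := by
    intro g hg
    rw [← Nat.card_sum]
    refine Nat.card_le_card_of_injective (Sum.elim (fun u => u.1) (fun z => z.1)) ?_
    rintro (u | z) (u' | z') h
    · simp only [Sum.elim_inl] at h; rw [Subtype.ext h]
    · exact absurd (show u.1 ∈ Z by simp only [Sum.elim_inl, Sum.elim_inr] at h; rw [h]; exact z'.2) u.2.1
    · exact absurd (show u'.1 ∈ Z by simp only [Sum.elim_inl, Sum.elim_inr] at h; rw [← h]; exact z.2) u'.2.1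
    · simp only [Sum.elim_inr] at h; rw [Subtype.ext h]
  have hbig : ∀ g ∉ Z, 2 * Nat.card Γ ≤ 3 * Nat.card (Uset Z g) := by
    intro g hg
    obtain ⟨a, z, ha, hz, hz0, hb, h3⟩ := hcen g hg
    have hU := Uset_card Z hc h1 h2 hg
    rw [ha, hb] at hU
    have : 2 * a ≤ 3 * (a - z) := by omega
    have h5 : (2 * Nat.card Γ) * a ≤ (3 * Nat.card (Uset Z g)) * a := by
      calc (2 * Nat.card Γ) * a = Nat.card Γ * (2 * a) := by ring
        _ ≤ Nat.card Γ * (3 * (a - z)) := by gcongr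
        _ = 3 * (Nat.card Γ * (a - z)) := by ring
        _ = _ := by rw [hU]; ring
    exact Nat.le_of_mul_le_mul_right h5 (by omega)
  intro g hg
  have hall : ∀ x ∉ Z, x ∈ Uset Z g := by
    intro g' hg'
    by_contra hn
    have hdis : ∀ x, x ∈ Uset Z g → x ∉ Uset Z g' := by
      rintro x ⟨hx, h, hh⟩ ⟨_, k, hk⟩
      apply hn
      refine ⟨hg', h * k⁻¹, ?_⟩
      have hy : h * x * h⁻¹ ∉ Z := by
        intro hz
        apply hx
        have h3 := hc _ hz h
        have h4 : x = h * x * h⁻¹ := by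
          calc x = h⁻¹ * (h * x * h⁻¹ * h) := by group
            _ = h⁻¹ * (h * (h * x * h⁻¹)) := by rw [h3]
            _ = h * x * h⁻¹ := by group
        rw [h4]; exact hz
      apply h1 _ hy _ _ _ hh.symm
      have : (h * k⁻¹) * (k * x * k⁻¹ * g') * (h * k⁻¹)⁻¹ = (h * k⁻¹) * (g' * (k * x * k⁻¹)) * (h * k⁻¹)⁻¹ := by
        rw [hk]
      calc h * k⁻¹ * g' * (h * k⁻¹)⁻¹ * (h * x * h⁻¹) = (h * k⁻¹) * (g' * (k * x * k⁻¹)) * (h * k⁻¹)⁻¹ := by group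
        _ = (h * k⁻¹) * (k * x * k⁻¹ * g') * (h * k⁻¹)⁻¹ := this.symm
        _ = h * x * h⁻¹ * (h * k⁻¹ * g' * (h * k⁻¹)⁻¹) := by group
    have hsum : Nat.card (Uset Z g) + Nat.card (Uset Z g') ≤ Nat.card Γ := by
      rw [← Nat.card_sum]
      refine Nat.card_le_card_of_injective (Sum.elim (fun u => u.1) (fun z => z.1)) ?_
      rintro (u | z) (u' | z') h
      · simp only [Sum.elim_inl] at h; rw [Subtype.ext h]
      · simp only [Sum.elim_inl, Sum.elim_inr] at h
        exact absurd (h ▸ z'.2) (hdis _ u.2)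
      · simp only [Sum.elim_inl, Sum.elim_inr] at h
        exact absurd (h ▸ z.2) (hdis _ u'.2)
      · simp only [Sum.elim_inr] at h; rw [Subtype.ext h]
    have b1 := hbig g hg
    have b2 := hbig g' hg'
    have : 0 < Nat.card Γ := Nat.card_pos
    omega
  obtain ⟨a, z, ha, hz, hz0, hb, h3⟩ := hcen g hg
  have hU := Uset_card Z hc h1 h2 hg
  have hUc : Nat.card Γ = Nat.card (Uset Z g) + z := by
    rw [← hz]
    apply le_antisymm _ (hUsub g hg)
    rw [← Nat.card_sum]
    refine Nat.card_le_card_of_surjective (Sum.elim (fun u => u.1) (fun z => z.1)) ?_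
    intro x
    by_cases hx : x ∈ Z
    · exact ⟨Sum.inr ⟨x, hx⟩, rfl⟩
    · exact ⟨Sum.inl ⟨x, hall x hx⟩, rfl⟩
  rw [ha, hb] at hU
  have hfin : Nat.card {x : Γ // x * g = g * x} = Nat.card Γ := by
    rw [ha]
    obtain ⟨b, rfl⟩ : ∃ b, a = b + z := ⟨a - z, by omega⟩
    rw [hUc] at hU ⊢
    rw [Nat.add_sub_cancel] at hU
    have : z * b = z * Nat.card (Uset Z g) := by linarith
    have := Nat.eq_of_mul_eq_mul_left hz0 this
    omega
  intro h
  have hinj : Function.Injective (fun x : {x : Γ // x * g = g * x} => x.1) := Subtype.val_injective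
  have hbij := (Nat.bijective_iff_injective_and_card _).mpr ⟨hinj, hfin⟩
  obtain ⟨y, hy⟩ := hbij.2 h
  rw [← hy]; exact y.2

end counting

section alg
variable {F E : Type} [Field F] [Ring E] [Algebra F E] [Nontrivial E]

lemma indep_one {G : E} (hG : ∀ c : F, G ≠ c • 1) {a b a' b' : F}
    (h : a • (1 : E) + b • G = a' • (1 : E) + b' • G) : a = a' ∧ b = b' := by
  have h1 : (b - b') • G = (a' - a) • (1 : E) := by
    rw [sub_smul, sub_smul, sub_eq_sub_iff_add_eq_add, add_comm, h, add_comm, add_comm]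
  have hb : b = b' := by
    by_contra hne
    have : b - b' ≠ 0 := sub_ne_zero.mpr hne
    apply hG ((b - b')⁻¹ * (a' - a))
    rw [mul_smul, ← h1, smul_smul, inv_mul_cancel₀ this, one_smul]
  subst hb
  rw [sub_self, zero_smul] at h1
  have := (smul_eq_zero.mp h1.symm).resolve_right one_ne_zero
  exact ⟨(sub_eq_zero.mp this).symm, rfl⟩

lemma alg_comm {N : ℕ} (hodd : Odd N) (hN : (N : F) ≠ 0) {G h hi Gi : E} (e1 : h * hi = 1) (e2 : hi * h = 1)
    (eG : Gi * G = 1) {t d α β c c' : F} (hsq : G * G = t • G + d • 1) (hG : ∀ c : F, G ≠ c • 1)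
    (hconj : h * G * hi = α • 1 + β • G) (hh : h ^ N = c • 1) (hGN : G ^ N = c' • 1) :
    h * G = G * h := by
  have cj : ∀ x y : E, (h * x * hi) * (h * y * hi) = h * (x * y) * hi := by
    intro x y
    calc (h * x * hi) * (h * y * hi) = h * x * (hi * h) * y * hi := by noncomm_ring
      _ = _ := by rw [e2]; noncomm_ring
  have hcomm : ∀ k : ℕ, hi ^ k * h ^ k = 1 := by
    intro k
    induction k with
    | zero => simp
    | succ k ih =>
      rw [pow_succ, pow_succ', mul_assoc, ← mul_assoc hi, e2, one_mul, ih]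
  have hcen : ∀ x : E, h ^ N * x * hi ^ N = x := by
    intro x
    have h1 : h ^ N * hi ^ N = 1 := by
      have : c • hi ^ N = (1 : E) := by
        have := hcomm N
        rw [hh, mul_smul_comm, mul_one] at this; exact this
      rw [hh, smul_mul_assoc, one_mul, this]
    have h2 : h ^ N * x = x * h ^ N := by rw [hh]; simp
    rw [h2, mul_assoc, h1, mul_one]
  by_cases hβ : β = 1
  · subst hβ
    have hk : ∀ k : ℕ, h ^ k * G * hi ^ k = ((k : F) * α) • 1 + (1 : F) • G := by
      intro k
      induction k with
      | zero => simp
      | succ k ih =>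
        rw [pow_succ', pow_succ]
        calc h * h ^ k * G * (hi ^ k * hi) = h * (h ^ k * G * hi ^ k) * hi := by noncomm_ring
          _ = ((k : F) * α) • (h * hi) + h * G * hi := by
            rw [ih]; simp only [mul_add, add_mul, mul_smul_comm, smul_mul_assoc, mul_one, one_smul]
          _ = _ := by
            rw [e1, hconj]; push_cast; rw [← add_assoc, ← add_smul]; congr 2; ring
    have h3 := hk N
    rw [hcen] at h3
    have h4 : (0 : F) • (1 : E) + (1 : F) • G = ((N : F) * α) • 1 + (1 : F) • G := by
      rw [← h3]; simp
    have h5 := (indep_one hG h4).1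
    have hα : α = 0 := (mul_eq_zero.mp h5.symm).resolve_left hN
    rw [hα, zero_smul, zero_add, one_smul] at hconj
    calc h * G = h * G * hi * h := by rw [mul_assoc, e2, mul_one]
      _ = G * h := by rw [hconj]
  · exfalso
    have hb1 : β - 1 ≠ 0 := sub_ne_zero.mpr hβ
    set μ := α / (β - 1) with hμ
    set G0 := μ • (1 : E) + G with hG0
    have hG0s : ∀ c : F, G0 ≠ c • 1 := by
      intro c hc
      apply hG (c - μ)
      rw [sub_smul, ← hc, hG0]; abel
    have hc0 : h * G0 * hi = β • G0 := by
      rw [hG0]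
      simp only [mul_add, add_mul, mul_smul_comm, smul_mul_assoc, mul_one, e1, hconj, smul_add]
      rw [← add_assoc, ← add_smul, smul_smul]
      congr 2
      rw [hμ]; field_simp; ring
    have hk : ∀ k : ℕ, h ^ k * G0 * hi ^ k = (β ^ k) • G0 := by
      intro k
      induction k with
      | zero => simp
      | succ k ih =>
        rw [pow_succ', pow_succ]
        calc h * h ^ k * G0 * (hi ^ k * hi) = h * (h ^ k * G0 * hi ^ k) * hi := by noncomm_ring
          _ = β ^ k • (h * G0 * hi) := by
            rw [ih]; simp only [mul_smul_comm, smul_mul_assoc]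
          _ = _ := by rw [hc0, smul_smul, pow_succ]
    have hβN : β ^ N = 1 := by
      have h3 := hk N
      rw [hcen] at h3
      have h4 : (0 : F) • (1 : E) + (1 : F) • G0 = (0 : F) • (1 : E) + (β ^ N) • G0 := by
        rw [← h3]; simp
      exact (indep_one hG0s h4).2.symm
    have hβ2 : β ^ 2 ≠ 1 := by
      intro h2
      obtain ⟨m, rfl⟩ := hodd
      rw [pow_add, pow_mul, h2, one_pow, one_mul, pow_one] at hβN
      exact hβ hβN
    have hβ0 : β ≠ 0 := by
      intro h0
      rw [h0, zero_pow] at hβN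
      · exact zero_ne_one hβN
      · obtain ⟨m, rfl⟩ := hodd; omega
    -- quadratic equation for G0
    obtain ⟨t0, d0, hq0⟩ : ∃ t0 d0 : F, G0 * G0 = d0 • 1 + t0 • G0 := by
      refine ⟨t + 2 * μ, d - μ ^ 2 - t * μ, ?_⟩
      rw [hG0]
      simp only [mul_add, add_mul, mul_smul_comm, smul_mul_assoc, mul_one, one_mul, hsq, smul_add, smul_smul]
      module
    have hq1 : d0 • (1 : E) + (t0 * β) • G0 = (β ^ 2 * d0) • 1 + (β ^ 2 * t0) • G0 := by
      have h5 := cj G0 G0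
      rw [hc0, hq0] at h5
      simp only [mul_add, add_mul, mul_smul_comm, smul_mul_assoc, mul_one, e1, hc0, hq0, smul_add, smul_smul] at h5
      rw [← h5]
      module
    obtain ⟨i1, i2⟩ := indep_one hG0s hq1
    have hd0 : d0 = 0 := by
      have : (β ^ 2 - 1) * d0 = 0 := by linear_combination -i1
      exact (mul_eq_zero.mp this).resolve_left (sub_ne_zero.mpr hβ2)
    have ht0 : t0 = 0 := by
      have : (β * (β - 1)) * t0 = 0 := by linear_combination -i2
      exact (mul_eq_zero.mp this).resolve_left (mul_ne_zero hβ0 hb1)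
    rw [hd0, ht0, zero_smul, zero_smul, add_zero] at hq0
    have hGe : G = (-μ) • (1 : E) + G0 := by rw [hG0]; module
    have hμ0 : μ ≠ 0 := by
      intro h0
      rw [h0, neg_zero, zero_smul, zero_add] at hGe
      rw [← hGe] at hq0
      have : G = 0 := by
        calc G = Gi * G * G := by rw [eG, one_mul]
          _ = Gi * (G * G) := by rw [mul_assoc]
          _ = 0 := by rw [hq0, mul_zero]
      apply hG 0
      rw [this, zero_smul]
    have hpow : ∀ k : ℕ, (-μ) • G ^ k = ((-μ) ^ (k + 1)) • (1 : E) + ((k : F) * (-μ) ^ k) • G0 := by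
      intro k
      induction k with
      | zero => simp
      | succ k ih =>
        rw [pow_succ, ← smul_mul_assoc, ih, hGe]
        simp only [mul_add, add_mul, mul_smul_comm, smul_mul_assoc, mul_one, one_mul, hq0, smul_zero, add_zero, smul_smul]
        push_cast
        module
    have h6 := hpow N
    rw [hGN, smul_smul] at h6
    have h7 : ((-μ) * c') • (1 : E) + (0 : F) • G0 = ((-μ) ^ (N + 1)) • (1 : E) + ((N : F) * (-μ) ^ N) • G0 := by
      rw [← h6]; simp
    have h8 := (indep_one hG0s h7).2
    exact (mul_ne_zero hN (pow_ne_zero _ (neg_ne_zero.mpr hμ0))) h8.symm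

end alg
end HP

namespace HP
set_option linter.unusedVariables false
set_option linter.unusedSectionVars false
set_option linter.unusedSimpArgs false
section dim2
variable {F : Type} [Field F] [Finite F] {V : Type} [AddCommGroup V] [Module F V] [Finite V]

variable (F V) in
/-- scalars -/
def Zs : Subgroup (V ≃ₗ[F] V) where
  carrier := {g | ∃ c : F, ∀ v, g v = c • v}
  one_mem' := ⟨1, fun v => by simp⟩
  mul_mem' := by
    rintro a b ⟨c, hc⟩ ⟨d, hd⟩
    exact ⟨c * d, fun v => by rw [LinearEquiv.mul_apply, hd, hc, smul_smul]⟩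
  inv_mem' := by
    rintro a ⟨c, hc⟩
    by_cases h0 : c = 0
    · refine ⟨0, fun v => ?_⟩
      apply a.injective
      rw [← LinearEquiv.mul_apply, mul_inv_cancel, hc, h0]; 
      have := hc v
      rw [h0, zero_smul] at this
      simp only [zero_smul, LinearEquiv.coe_one, id]
      exact a.injective (by rw [this, map_zero])
    refine ⟨c⁻¹, fun v => ?_⟩
    apply a.injective
    rw [← LinearEquiv.mul_apply, mul_inv_cancel, hc, smul_smul, mul_inv_cancel₀ h0]; simp

lemma mem_Zs {g : V ≃ₗ[F] V} : g ∈ Zs F V ↔ ∃ c : F, ∀ v, g v = c • v := Iff.rfl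

lemma Zs_comm {z : V ≃ₗ[F] V} (hz : z ∈ Zs F V) (g : V ≃ₗ[F] V) : z * g = g * z := by
  obtain ⟨c, hc⟩ := hz
  apply LinearEquiv.ext; intro v
  rw [LinearEquiv.mul_apply, LinearEquiv.mul_apply, hc, hc, map_smul]

lemma card_Zs [Nontrivial V] : Nat.card (Zs F V) = Nat.card F - 1 := by
  have : Fintype F := Fintype.ofFinite _
  rw [← Nat.card_units]
  symm
  refine Nat.card_congr (Equiv.ofBijective (fun c : Fˣ => ⟨LinearEquiv.smulOfUnit c, (c : F), fun v => rfl⟩) ⟨?_, ?_⟩)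
  · intro c d h
    obtain ⟨v, hv⟩ := exists_ne (0 : V)
    have h1 := DFunLike.congr_fun (congrArg Subtype.val h) v
    have h2 : (c : F) • v = (d : F) • v := h1
    exact Units.ext (smul_left_injective F hv h2)
  · rintro ⟨g, c, hc⟩
    have h0 : c ≠ 0 := by
      rintro rfl
      obtain ⟨v, hv⟩ := exists_ne (0 : V)
      apply hv
      apply g.injective
      rw [hc]; simp
    refine ⟨Units.mk0 c h0, ?_⟩
    apply Subtype.ext
    apply LinearEquiv.ext
    intro v
    exact (hc v).symm

variable (F) in
/-- the bound in dimension two -/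
noncomputable def s2 : ℕ := if Nat.card F = 3 then 3 else Nat.card F + 1

lemma D1 {g : V ≃ₗ[F] V} (hg : g ∉ Zs F V) : ∃ v : V, LinearIndependent F ![v, g v] := by
  by_contra hcon
  push Not at hcon
  apply hg
  obtain ⟨c, hc⟩ := LinearMap.exists_eq_smul_id_of_forall_notLinearIndependent (f := (g : V →ₗ[F] V)) (by simpa using hcon)
  exact ⟨c, fun v => by simpa using DFunLike.congr_fun hc v⟩

lemma D0 (hV : Module.finrank F V = 2) {v w : V} (h : LinearIndependent F ![v, w]) (x : V) :
    ∃ a b : F, x = a • v + b • w := by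
  have : Module.Finite F V := Module.Finite.of_finite
  let B := basisOfLinearIndependentOfCardEqFinrank h (by simp [hV])
  have h1 := B.sum_repr x
  rw [Fin.sum_univ_two] at h1
  refine ⟨B.repr x 0, B.repr x 1, ?_⟩
  have e0 : B 0 = v := by simp [B]
  have e1 : B 1 = w := by simp [B]
  rw [e0, e1] at h1
  exact h1.symm

lemma D2 (hV : Module.finrank F V = 2) {g : V ≃ₗ[F] V} {v : V} (h : LinearIndependent F ![v, g v])
    {c : V →ₗ[F] V} (hc : ∀ x, c (g x) = g (c x)) : ∃ a b : F, c = a • 1 + b • (g : V →ₗ[F] V) := by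
  obtain ⟨a, b, hab⟩ := D0 hV h (c v)
  refine ⟨a, b, ?_⟩
  ext x
  obtain ⟨r, s, rfl⟩ := D0 hV h x
  simp only [map_add, map_smul, hc, hab, LinearMap.add_apply, LinearMap.smul_apply, Module.End.one_apply, LinearEquiv.coe_coe]

lemma pow_coe (g : V ≃ₗ[F] V) (k : ℕ) : ((g ^ k : V ≃ₗ[F] V) : V →ₗ[F] V) = (g : V →ₗ[F] V) ^ k := by
  induction k with
  | zero => rfl
  | succ k ih => rw [pow_succ, pow_succ, ← ih]; rfl

theorem comm_dim2 (hV : Module.finrank F V = 2) {N : ℕ} (hodd : Odd N) (hN : (N : F) ≠ 0)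
    {H : Subgroup (V ≃ₗ[F] V)} (hH : ∀ h ∈ H, h ^ N ∈ Zs F V) {g : V ≃ₗ[F] V} (hgH : g ∈ H) (hg : g ∉ Zs F V)
    {h : V ≃ₗ[F] V} (hh : h ∈ H) : h * g = g * h := by
  have hnt : Nontrivial V := Module.nontrivial_of_finrank_pos (R := F) (by omega)
  have : Nontrivial (V →ₗ[F] V) := by
    obtain ⟨v, hv⟩ := exists_ne (0 : V)
    refine ⟨0, 1, fun h => hv ?_⟩
    simpa using (DFunLike.congr_fun h v).symm
  have hE : ∀ a b : V ≃ₗ[F] V, a * b = b * a ↔ (a : V →ₗ[F] V) * (b : V →ₗ[F] V) = (b : V →ₗ[F] V) * a := by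
    intro a b
    constructor
    · intro e; ext v; exact DFunLike.congr_fun e v
    · intro e; ext v; exact DFunLike.congr_fun e v
  have key1 : ∀ g : V ≃ₗ[F] V, g ∉ Zs F V → ∀ a b : V ≃ₗ[F] V, a * g = g * a → b * g = g * b → a * b = b * a := by
    intro g hg a b ha hb
    obtain ⟨v, hv⟩ := D1 hg
    obtain ⟨r, s, h1⟩ := D2 hV hv (c := (a : V →ₗ[F] V)) (fun x => DFunLike.congr_fun ha x)
    obtain ⟨r', s', h2⟩ := D2 hV hv (c := (b : V →ₗ[F] V)) (fun x => DFunLike.congr_fun hb x)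
    rw [hE, h1, h2]
    simp only [mul_add, add_mul, mul_smul_comm, smul_mul_assoc, mul_one, one_mul, smul_add, smul_smul]
    module
  have hscal : ∀ g : V ≃ₗ[F] V, g ∈ Zs F V → ∃ c : F, (g : V →ₗ[F] V) = c • 1 := by
    rintro g ⟨c, hc⟩
    exact ⟨c, by ext v; simpa using hc v⟩
  have key2 : ∀ g ∈ H, g ∉ Zs F V → ∀ h ∈ H, (h * g * h⁻¹) * g = g * (h * g * h⁻¹) → h * g = g * h := by
    intro g hgH hg h hh e
    obtain ⟨v, hv⟩ := D1 hg
    obtain ⟨r, s, h1⟩ := D2 hV hv (c := ((h * g * h⁻¹ : V ≃ₗ[F] V) : V →ₗ[F] V)) (fun x => DFunLike.congr_fun e x)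
    obtain ⟨d, t, h2⟩ := D2 hV hv (c := ((g * g : V ≃ₗ[F] V) : V →ₗ[F] V)) (fun x => rfl)
    obtain ⟨c, hc⟩ := hscal _ (hH h hh)
    obtain ⟨c', hc'⟩ := hscal _ (hH g hgH)
    rw [pow_coe] at hc hc'
    rw [hE]
    refine alg_comm hodd hN (h := (h : V →ₗ[F] V)) (hi := ((h⁻¹ : V ≃ₗ[F] V) : V →ₗ[F] V)) (G := (g : V →ₗ[F] V)) (Gi := ((g⁻¹ : V ≃ₗ[F] V) : V →ₗ[F] V)) ?_ ?_ ?_ (t := t) (d := d) ?_ ?_ h1 hc hc'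
    · ext v; exact DFunLike.congr_fun (mul_inv_cancel h) v
    · ext v; exact DFunLike.congr_fun (inv_mul_cancel h) v
    · ext v; exact DFunLike.congr_fun (inv_mul_cancel g) v
    · rw [add_comm]; exact h2
    · intro c hc
      exact hg ⟨c, fun v => by simpa using DFunLike.congr_fun hc v⟩
  have hnorm : ((Zs F V).subgroupOf H).Normal := by
    constructor
    intro z hz k
    have : k * z * k⁻¹ = z := by
      apply Subtype.ext
      have := Zs_comm (g := k.1) hz
      simp only [Subgroup.coe_mul, Subgroup.coe_inv]
      simp only [Subgroup.coe_subtype] at this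
      rw [← this]; group
    rw [this]; exact hz
  have hidx : Odd ((Zs F V).subgroupOf H).index := odd_index_of_pow hodd (fun k => by
    rw [Subgroup.mem_subgroupOf]; exact hH k.1 k.2)
  have := comm_of_counting ((Zs F V).subgroupOf H) (fun z hz k => Subtype.ext (Zs_comm hz k.1))
    (fun g hg a b e1 e2 => Subtype.ext (key1 g.1 (fun h => hg h) a.1 b.1 (congrArg Subtype.val e1) (congrArg Subtype.val e2)))
    (fun g hg k e => Subtype.ext (key2 g.1 g.2 (fun h => hg h) k.1 k.2 (congrArg Subtype.val e)))
    hidx ⟨g, hgH⟩ (fun h => hg h) ⟨h, hh⟩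
  exact congrArg Subtype.val this

theorem card_dim2 (hV : Module.finrank F V = 2) {N : ℕ} (hodd : Odd N) (hN : (N : F) ≠ 0)
    {H : Subgroup (V ≃ₗ[F] V)} (hZ : Zs F V ≤ H) (hH : ∀ h ∈ H, h ^ N ∈ Zs F V) :
    Nat.card H ≤ (Nat.card F - 1) * s2 F := by
  have hnt : Nontrivial V := Module.nontrivial_of_finrank_pos (R := F) (by omega)
  have hq : 2 ≤ Nat.card F := Finite.one_lt_card
  have hs2 : 3 ≤ s2 F := by unfold s2; split_ifs <;> omega
  by_cases hall : H ≤ Zs F V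
  · have h1 : Nat.card H ≤ Nat.card F - 1 := by
      rw [← card_Zs (V := V)]
      exact Nat.card_le_card_of_injective _ (Subgroup.inclusion_injective hall)
    nlinarith
  obtain ⟨g, hgH, hg⟩ := SetLike.not_le_iff_exists.mp hall
  obtain ⟨v, hv⟩ := D1 hg
  have hv0 : v ≠ 0 := by
    have := hv.ne_zero 0
    simpa using this
  have hVc : Nat.card V = Nat.card F ^ 2 := by rw [Module.natCard_eq_pow_finrank (K := F), hV]
  have h1 : Nat.card H ≤ Nat.card F ^ 2 - 1 := by
    have h2 : Nat.card {w : V // w ≠ 0} = Nat.card F ^ 2 - 1 := by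
      have : Fintype V := Fintype.ofFinite _
      classical
      rw [← hVc, Nat.card_eq_fintype_card, Nat.card_eq_fintype_card, Fintype.card_subtype_compl, Fintype.card_subtype_eq]
    rw [← h2]
    refine Nat.card_le_card_of_injective (fun h => ⟨h.1 v, fun h0 => hv0 (h.1.injective (by rw [h0, map_zero]))⟩) ?_
    intro a b hab
    simp only [Subtype.mk.injEq] at hab
    apply Subtype.ext
    apply LinearEquiv.ext
    intro x
    obtain ⟨r, s, rfl⟩ := D0 hV hv x
    have ca : ∀ x, a.1 (g x) = g (a.1 x) := fun x => DFunLike.congr_fun (comm_dim2 hV hodd hN hH hgH hg a.2) x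
    have cb : ∀ x, b.1 (g x) = g (b.1 x) := fun x => DFunLike.congr_fun (comm_dim2 hV hodd hN hH hgH hg b.2) x
    simp only [map_add, map_smul, ca, cb, hab]
  have h4 : Nat.card F ^ 2 - 1 = (Nat.card F - 1) * (Nat.card F + 1) := by
    obtain ⟨k, hk⟩ : ∃ k, Nat.card F = k + 1 := ⟨Nat.card F - 1, by omega⟩
    rw [hk, Nat.add_sub_cancel]
    have : (k + 1) ^ 2 = k * (k + 1 + 1) + 1 := by ring
    omega
  unfold s2
  split_ifs with h3
  · -- q = 3
    have hnorm : ((Zs F V).subgroupOf H).Normal := by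
      constructor
      intro z hz k
      have : k * z * k⁻¹ = z := by
        apply Subtype.ext
        have := Zs_comm (g := k.1) hz
        simp only [Subgroup.coe_mul, Subgroup.coe_inv]
        simp only [Subgroup.coe_subtype] at this
        rw [← this]; group
      rw [this]; exact hz
    have hidx : Odd ((Zs F V).subgroupOf H).index := odd_index_of_pow hodd (fun k => by
      rw [Subgroup.mem_subgroupOf]; exact hH k.1 k.2)
    have h5 : Nat.card ((Zs F V).subgroupOf H) * ((Zs F V).subgroupOf H).index = Nat.card H := Subgroup.card_mul_index _
    have h6 : Nat.card ((Zs F V).subgroupOf H) = Nat.card (Zs F V) := Nat.card_congr (Subgroup.subgroupOfEquivOfLe hZ).toEquiv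
    rw [h6, card_Zs] at h5
    rw [h3] at h5 h1 ⊢
    obtain ⟨k, hk⟩ := hidx
    rw [hk] at h5
    omega
  · rw [← h4]; exact h1

end dim2
end HP

namespace HP
set_option linter.unusedVariables false
set_option linter.unusedSectionVars false
set_option linter.unusedSimpArgs false
section orders
variable {F : Type} [Field F] [Finite F] {V : Type} [AddCommGroup V] [Module F V] [Finite V]

lemma T_of_fix {A B : Type} [AddCommGroup A] [Module F A] [AddCommGroup B] [Module F B] [Finite A] [Finite B]
    (k : (A × B) ≃ₗ[F] (A × B)) (hk : ∀ a : A, k (a, 0) = (a, 0)) : ∃ t φ, k = T 1 t φ := by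
  let t0 : B →ₗ[F] B := (LinearMap.snd F A B) ∘ₗ (k : (A × B) →ₗ[F] (A × B)) ∘ₗ (LinearMap.inr F A B)
  have ht0 : ∀ b, t0 b = (k (0, b)).2 := fun b => rfl
  have hinj : Function.Injective t0 := by
    rw [← LinearMap.ker_eq_bot, LinearMap.ker_eq_bot']
    intro b hb
    rw [ht0] at hb
    have h1 : k (0, b) = k ((k (0, b)).1, 0) := by
      rw [hk]; exact Prod.ext rfl hb
    have h2 := congrArg Prod.snd (k.injective h1)
    exact h2
  refine ⟨LinearEquiv.ofBijective t0 (Finite.injective_iff_bijective.mp hinj),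
    (LinearMap.fst F A B) ∘ₗ (k : (A × B) →ₗ[F] (A × B)) ∘ₗ (LinearMap.inr F A B), ?_⟩
  apply LinearEquiv.ext
  rintro ⟨a, b⟩
  rw [T_apply]
  have h1 : ((a, b) : A × B) = (a, 0) + (0, b) := by simp
  rw [h1, map_add, hk]
  apply Prod.ext
  · simp
  · simp [t0]

lemma stab_embed {N : ℕ} (hN : (N : F) ≠ 0) {S : Subgroup (V ≃ₗ[F] V)} (hS : Ex N S)
    {W B : Submodule F V} (hc : IsCompl W B) (hfix : ∀ h ∈ S, ∀ w ∈ W, h w = w) :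
    ∃ S' : Subgroup (B ≃ₗ[F] B), Ex N S' ∧ Nat.card S ≤ Nat.card S' ∧
      ((∀ h ∈ S, LinearEquiv.det h = 1) → ∀ h ∈ S', LinearEquiv.det h = 1) := by
  let e := Submodule.prodEquivOfIsCompl W B hc
  let S2 : Subgroup ((W × B) ≃ₗ[F] (W × B)) := S.map (cj e.symm).toMonoidHom
  have hT : ∀ k ∈ S2, ∃ t φ, k = T 1 t φ := by
    rintro _ ⟨h, hh, rfl⟩
    apply T_of_fix
    intro w
    change cj e.symm h (w, 0) = (w, 0)
    rw [cj_apply]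
    have h1 : e.symm.symm (w, (0 : B)) = (w : V) := by simp [e]
    rw [h1, hfix h hh w w.2, ← h1]
    exact e.symm_apply_apply _
  have hS2 : Ex N S2 := by
    rintro _ ⟨h, hh, rfl⟩
    rw [← map_pow, hS h hh, map_one]
  choose t φ htφ using hT
  refine ⟨HB S2, Ex_HB hS2, ?_, ?_⟩
  · have h1 : Nat.card S = Nat.card S2 :=
      Nat.card_congr (Subgroup.equivMapOfInjective S (cj e.symm).toMonoidHom (cj e.symm).injective).toEquiv
    rw [h1]
    refine Nat.card_le_card_of_injective
      (fun k => ⟨t k.1 k.2, 1, φ k.1 k.2, by rw [← htφ k.1 k.2]; exact k.2⟩) ?_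
    intro a b hab
    replace hab : t a.1 a.2 = t b.1 b.2 := congrArg Subtype.val hab
    apply Subtype.ext
    have ha := htφ a.1 a.2
    have hb := htφ b.1 b.2
    have ha' : T 1 (t a.1 a.2) (φ a.1 a.2) ∈ S2 := by rw [← ha]; exact a.2
    have hb' : T 1 (t a.1 a.2) (φ b.1 b.2) ∈ S2 := by rw [hab, ← hb]; exact b.2
    rw [ha, hb]
    congr 1
    exact T_unip hN hS2 ha' hb'
  · intro hdet x hx
    obtain ⟨s, ψ, hm⟩ := hx
    have h1 := htφ _ hm
    obtain ⟨e1, e2, e3⟩ := T_inj h1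
    obtain ⟨h, hh, he⟩ := hm
    have h2 : LinearEquiv.det (T s x ψ) = 1 := by
      rw [← he]; exact (det_cj e.symm h).trans (hdet h hh)
    rw [det_T, e1, map_one, one_mul] at h2
    exact h2

/-- stabilizer of a vector in `H` -/
def st (H : Subgroup (V ≃ₗ[F] V)) (v : V) : Subgroup (V ≃ₗ[F] V) where
  carrier := {h | h ∈ H ∧ h v = v}
  one_mem' := ⟨H.one_mem, rfl⟩
  mul_mem' := by
    rintro a b ⟨ha, ha'⟩ ⟨hb, hb'⟩
    exact ⟨H.mul_mem ha hb, by rw [LinearEquiv.mul_apply, hb', ha']⟩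
  inv_mem' := by
    rintro a ⟨ha, ha'⟩
    exact ⟨H.inv_mem ha, a.injective (by rw [← LinearEquiv.mul_apply, mul_inv_cancel, ha']; rfl)⟩

lemma card_ne_zero : Nat.card {w : V // w ≠ 0} = Nat.card F ^ Module.finrank F V - 1 := by
  have : Fintype V := Fintype.ofFinite _
  classical
  rw [← Module.natCard_eq_pow_finrank (K := F) (V := V), Nat.card_eq_fintype_card, Nat.card_eq_fintype_card, Fintype.card_subtype_compl, Fintype.card_subtype_eq]

lemma orbit_bound (H : Subgroup (V ≃ₗ[F] V)) {v : V} (hv : v ≠ 0) :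
    Nat.card H ≤ (Nat.card F ^ Module.finrank F V - 1) * Nat.card (st H v) := by
  classical
  rw [← card_ne_zero, ← Nat.card_prod]
  let k : V → (V ≃ₗ[F] V) := fun w => if h : ∃ k ∈ H, k v = w then h.choose else 1
  have hk : ∀ h ∈ H, k (h v) ∈ H ∧ k (h v) v = h v := by
    intro h hh
    have hex : ∃ k ∈ H, k v = h v := ⟨h, hh, rfl⟩
    simp only [k]
    rw [dif_pos hex]
    exact hex.choose_spec
  refine Nat.card_le_card_of_injective (fun h : H => (⟨h.1 v, fun h0 => hv (h.1.injective (by rw [h0, map_zero]))⟩,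
    ⟨(k (h.1 v))⁻¹ * h.1, H.mul_mem (H.inv_mem (hk h.1 h.2).1) h.2, ?_⟩)) ?_
  · rw [LinearEquiv.mul_apply]
    apply (k (h.1 v)).injective
    rw [← LinearEquiv.mul_apply, mul_inv_cancel, (hk h.1 h.2).2]; rfl
  · intro a b hab
    simp only [Prod.mk.injEq, Subtype.mk.injEq] at hab
    obtain ⟨h1, h2'⟩ := hab
    have h2 : (k (a.1 v))⁻¹ * a.1 = (k (b.1 v))⁻¹ * b.1 := congrArg Subtype.val h2'
    rw [h1] at h2
    exact Subtype.ext (mul_left_cancel h2)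

variable (F) in
/-- order bound -/
noncomputable def kb (n : ℕ) : ℕ := s2 F * ∏ i ∈ Finset.Icc 3 n, (Nat.card F ^ i - 1)

lemma kb_two : kb F 2 = s2 F := by simp [kb]
lemma kb_succ {n : ℕ} (hn : 2 ≤ n) : kb F (n + 1) = (Nat.card F ^ (n + 1) - 1) * kb F n := by
  unfold kb
  rw [Finset.prod_Icc_succ_top (by omega)]
  ring

lemma sup_card (H : Subgroup (V ≃ₗ[F] V)) :
    Nat.card (H ⊔ Zs F V : Subgroup (V ≃ₗ[F] V)) * Nat.card (H ⊓ Zs F V : Subgroup (V ≃ₗ[F] V)) =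
      Nat.card H * Nat.card (Zs F V) := by
  have hnorm : (Zs F V).Normal := by
    constructor
    intro z hz k
    rw [← Zs_comm hz k]; simpa using hz
  have h1 : (Zs F V).relIndex (H ⊔ Zs F V) = (Zs F V).relIndex H := Subgroup.relIndex_sup_right ..
  have h2 : Nat.card ((Zs F V).subgroupOf (H ⊔ Zs F V)) * (Zs F V).relIndex (H ⊔ Zs F V) = Nat.card (H ⊔ Zs F V : Subgroup (V ≃ₗ[F] V)) :=
    Subgroup.card_mul_index _
  have h3 : Nat.card ((Zs F V).subgroupOf H) * (Zs F V).relIndex H = Nat.card H := Subgroup.card_mul_index _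
  have h4 : Nat.card ((Zs F V).subgroupOf (H ⊔ Zs F V)) = Nat.card (Zs F V) :=
    Nat.card_congr (Subgroup.subgroupOfEquivOfLe le_sup_right).toEquiv
  have h5 : Nat.card ((Zs F V).subgroupOf H) = Nat.card (H ⊓ Zs F V : Subgroup (V ≃ₗ[F] V)) := by
    rw [← Subgroup.inf_subgroupOf_left]
    exact Nat.card_congr (Subgroup.subgroupOfEquivOfLe inf_le_left).toEquiv
  rw [← h2, ← h3, h1, h4, h5]; ring

lemma sup_pow {N : ℕ} {H : Subgroup (V ≃ₗ[F] V)} (hH : ∀ h ∈ H, h ^ N ∈ Zs F V) :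
    ∀ h ∈ H ⊔ Zs F V, h ^ N ∈ Zs F V := by
  have hnorm : (Zs F V).Normal := by
    constructor
    intro z hz k
    rw [← Zs_comm hz k]; simpa using hz
  intro h hh
  obtain ⟨y, hy, z, hz, rfl⟩ := Subgroup.mem_sup_of_normal_right.mp hh
  have hc : Commute y z := (Zs_comm hz y).symm
  rw [hc.mul_pow]
  exact (Zs F V).mul_mem (hH y hy) ((Zs F V).pow_mem hz N)

theorem order1 {N : ℕ} (hodd : Odd N) (hN : (N : F) ≠ 0) (n : ℕ) (hn : 2 ≤ n) :
    ∀ (V : Type) [AddCommGroup V] [Module F V] [Finite V] (hV : Module.finrank F V = n)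
      (H : Subgroup (V ≃ₗ[F] V)) (hH : ∀ h ∈ H, h ^ N ∈ Zs F V), Nat.card H ≤ (Nat.card F - 1) * kb F n := by
  induction n, hn using Nat.le_induction with
  | base =>
    intro V _ _ _ hV H hH
    rw [kb_two]
    refine le_trans ?_ (card_dim2 hV hodd hN le_sup_right (sup_pow hH))
    exact Nat.card_le_card_of_injective _ (Subgroup.inclusion_injective le_sup_left)
  | succ n hn ih =>
    intro V _ _ _ hV H hH
    have : Module.Finite F V := Module.Finite.of_finite
    have hnt : Nontrivial V := Module.nontrivial_of_finrank_pos (R := F) (by omega)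
    obtain ⟨v, hv⟩ := exists_ne (0 : V)
    obtain ⟨B, hB⟩ := Submodule.exists_isCompl (Submodule.span F {v})
    have hBn : Module.finrank F B = n := by
      have := finrank_compl hB
      rw [finrank_span_singleton hv] at this
      omega
    have hEx : Ex N (st H v) := by
      rintro h ⟨hh, hhv⟩
      obtain ⟨c, hc⟩ := hH h hh
      have h1 : ∀ k : ℕ, (h ^ k) v = v := by
        intro k
        induction k with
        | zero => rfl
        | succ k ih => rw [pow_succ, LinearEquiv.mul_apply, hhv, ih]
      have h2 := hc v
      rw [h1] at h2
      have h3 : c = 1 := by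
        apply smul_left_injective F hv
        simp only [one_smul]; exact h2.symm
      apply LinearEquiv.ext
      intro x
      rw [hc, h3, one_smul]; rfl
    obtain ⟨S', hS', hcard, -⟩ := stab_embed hN hEx hB (by
      intro h hh w hw
      obtain ⟨c, rfl⟩ := Submodule.mem_span_singleton.mp hw
      rw [map_smul, hh.2])
    have h3 := ih B hBn S' (fun h hh => by rw [hS' h hh]; exact Subgroup.one_mem _)
    have h4 := orbit_bound H hv
    rw [hV] at h4
    rw [kb_succ hn]
    calc Nat.card H ≤ _ := h4
      _ ≤ (Nat.card F ^ (n + 1) - 1) * ((Nat.card F - 1) * kb F n) := Nat.mul_le_mul_left _ (hcard.trans h3)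
      _ = _ := by ring

theorem order1' {N : ℕ} (hodd : Odd N) (hN : (N : F) ≠ 0) (hn : 2 ≤ Module.finrank F V)
    {H : Subgroup (V ≃ₗ[F] V)} (hH : Ex N H) :
    Nat.card H ≤ Nat.card (H ⊓ Zs F V : Subgroup (V ≃ₗ[F] V)) * kb F (Module.finrank F V) := by
  have hnt : Nontrivial V := Module.nontrivial_of_finrank_pos (R := F) (by omega)
  have h1 := order1 hodd hN _ hn V rfl (H ⊔ Zs F V) (sup_pow (fun h hh => by rw [hH h hh]; exact Subgroup.one_mem _))
  have h2 := sup_card H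
  rw [card_Zs] at h2
  have hq : 2 ≤ Nat.card F := Finite.one_lt_card
  have : 0 < Nat.card F - 1 := by omega
  refine Nat.le_of_mul_le_mul_right (c := Nat.card F - 1) ?_ this
  rw [← h2]
  calc _ ≤ ((Nat.card F - 1) * kb F (Module.finrank F V)) * _ := Nat.mul_le_mul_right _ h1
    _ = _ := by ring

theorem order2 {N : ℕ} (hodd : Odd N) (hN : (N : F) ≠ 0) (n : ℕ) (hn : 2 ≤ n) :
    ∀ (V : Type) [AddCommGroup V] [Module F V] [Finite V] (hV : Module.finrank F V = n)
      (H : Subgroup (V ≃ₗ[F] V)) (hH : Ex N H) (hd : ∀ h ∈ H, LinearEquiv.det h = 1), Nat.card H ≤ kb F n := by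
  induction n, hn using Nat.le_induction with
  | base =>
    intro V _ _ _ hV H hH hd
    have hnt : Nontrivial V := Module.nontrivial_of_finrank_pos (R := F) (by omega)
    have h1 := order1' hodd hN (by omega) hH
    have h2 : H ⊓ Zs F V = ⊥ := by
      rw [eq_bot_iff]
      rintro h ⟨hh, c, hc⟩
      have h3 := hd h hh
      have h4 : (h : V →ₗ[F] V) = c • LinearMap.id := by ext v; exact hc v
      have h5 : c ^ 2 = 1 := by
        have := congrArg Units.val h3
        rw [LinearEquiv.coe_det, h4, LinearMap.det_smul, hV] at this
        simpa using this
      have h6 : ∀ k : ℕ, ∀ v, (h ^ k) v = c ^ k • v := by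
        intro k
        induction k with
        | zero => intro v; simp
        | succ k ih => intro v; rw [pow_succ, LinearEquiv.mul_apply, hc, map_smul, ih, smul_smul, pow_succ']
      obtain ⟨v, hv⟩ := exists_ne (0 : V)
      have h7 := h6 N v
      rw [hH h hh] at h7
      have h8 : c ^ N = 1 := by
        apply smul_left_injective F hv
        simp only [one_smul]; exact h7.symm
      obtain ⟨m, rfl⟩ := hodd
      rw [pow_add, pow_mul, h5, one_pow, one_mul, pow_one] at h8
      rw [Subgroup.mem_bot]
      apply LinearEquiv.ext
      intro x
      rw [hc, h8, one_smul]; rfl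
    rw [h2, hV] at h1
    simpa using h1
  | succ n hn ih =>
    intro V _ _ _ hV H hH hd
    have : Module.Finite F V := Module.Finite.of_finite
    have hnt : Nontrivial V := Module.nontrivial_of_finrank_pos (R := F) (by omega)
    obtain ⟨v, hv⟩ := exists_ne (0 : V)
    obtain ⟨B, hB⟩ := Submodule.exists_isCompl (Submodule.span F {v})
    have hBn : Module.finrank F B = n := by
      have := finrank_compl hB
      rw [finrank_span_singleton hv] at this
      omega
    have hEx : Ex N (st H v) := fun h hh => hH h hh.1
    obtain ⟨S', hS', hcard, hdet⟩ := stab_embed hN hEx hB (by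
      intro h hh w hw
      obtain ⟨c, rfl⟩ := Submodule.mem_span_singleton.mp hw
      rw [map_smul, hh.2])
    have h3 := ih B hBn S' hS' (hdet (fun h hh => hd h hh.1))
    have h4 := orbit_bound H hv
    rw [hV] at h4
    rw [kb_succ hn]
    exact h4.trans (Nat.mul_le_mul_left _ (hcard.trans h3))

end orders
end HP

namespace HP
set_option linter.unusedVariables false
set_option linter.unusedSectionVars false
set_option linter.unusedSimpArgs false
section irred
variable {F : Type} [Field F] [Finite F] {V : Type} [AddCommGroup V] [Module F V] [Finite V]

lemma free_cent {g : V ≃ₗ[F] V} (hg : Irr g) {a b : V →ₗ[F] V} (ha : ∀ x, a (g x) = g (a x))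
    (hb : ∀ x, b (g x) = g (b x)) {v : V} (hv : v ≠ 0) (h : a v = b v) : a = b := by
  have hk : LinearMap.ker (a - b) = ⊤ := by
    refine (hg (LinearMap.ker (a - b)) ?_).resolve_left ?_
    · intro w hw
      rw [LinearMap.mem_ker, LinearMap.sub_apply, sub_eq_zero] at hw ⊢
      rw [ha, hb, hw]
    · intro h0
      have : v ∈ LinearMap.ker (a - b) := by
        rw [LinearMap.mem_ker, LinearMap.sub_apply, h, sub_self]
      rw [h0, Submodule.mem_bot] at this
      exact hv this
  exact sub_eq_zero.mp (LinearMap.ker_eq_top.mp hk)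

lemma irr_poly [Nontrivial V] {g : V ≃ₗ[F] V} (hg : Irr g) : ∃ p : Polynomial F, Irreducible p ∧
    Polynomial.aeval (g : Module.End F V) p = 0 := by
  have : Module.Finite F V := Module.Finite.of_finite
  set G : Module.End F V := (g : V →ₗ[F] V) with hG
  have hGint : IsIntegral F G := Algebra.IsIntegral.isIntegral G
  have : Nontrivial (Module.End F V) := by
    obtain ⟨v, hv⟩ := exists_ne (0 : V)
    refine ⟨0, 1, fun h => hv ?_⟩
    simpa using (DFunLike.congr_fun h v).symm
  have hnu := minpoly.not_isUnit F G
  have hn0 := minpoly.ne_zero hGint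
  obtain ⟨p, hp, r, hr⟩ := WfDvdMonoid.exists_irreducible_factor hnu hn0
  refine ⟨p, hp, ?_⟩
  have hcomm : ∀ x, Polynomial.aeval G p (g x) = g (Polynomial.aeval G p x) := by
    intro x
    have h1 : Polynomial.aeval G p * G = G * Polynomial.aeval G p := by
      have : Polynomial.aeval G (p * Polynomial.X) = Polynomial.aeval G (Polynomial.X * p) := by rw [mul_comm]
      simpa using this
    exact DFunLike.congr_fun h1 x
  rcases hg (LinearMap.ker (Polynomial.aeval G p)) (by
    intro w hw
    rw [LinearMap.mem_ker] at hw ⊢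
    rw [hcomm, hw, map_zero]) with h | h
  · exfalso
    have h1 : Polynomial.aeval G p * Polynomial.aeval G r = 0 := by
      rw [← map_mul, ← hr, minpoly.aeval]
    have h2 : Polynomial.aeval G r = 0 := by
      ext v
      have h3 := DFunLike.congr_fun h1 v
      exact (LinearMap.ker_eq_bot'.mp h) _ h3
    have h3 := minpoly.dvd F G h2
    rw [hr] at h3
    have hr0 : r ≠ 0 := by rintro rfl; exact hn0 (by rw [hr, mul_zero])
    obtain ⟨s, hs⟩ := h3
    have h4 : r * 1 = r * (p * s) := by rw [mul_one]; calc r = p * r * s := hs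
      _ = _ := by ring
    have h5 := mul_left_cancel₀ hr0 h4
    exact hp.not_isUnit (IsUnit.of_mul_eq_one s h5.symm)
  · exact LinearMap.ker_eq_top.mp h

lemma det_surj [Nontrivial V] {g : V ≃ₗ[F] V} (hg : Irr g) (u : Fˣ) :
    ∃ c : V ≃ₗ[F] V, c * g = g * c ∧ LinearEquiv.det c = u := by
  have : Module.Finite F V := Module.Finite.of_finite
  obtain ⟨p, hp, hpg⟩ := irr_poly hg
  have : Fact (Irreducible p) := ⟨hp⟩
  let K := AdjoinRoot p
  let ρ : K →ₐ[F] Module.End F V := Ideal.Quotient.liftₐ (Ideal.span {p}) (Polynomial.aeval (g : Module.End F V)) (by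
    intro a ha
    obtain ⟨r, rfl⟩ := Ideal.mem_span_singleton.mp ha
    rw [map_mul, hpg, zero_mul])
  have hρr : ρ (AdjoinRoot.root p) = (g : V →ₗ[F] V) := by
    have h1 : ρ (AdjoinRoot.root p) = Polynomial.aeval (g : Module.End F V) Polynomial.X := rfl
    rw [h1, Polynomial.aeval_X]
  obtain ⟨v, hv⟩ := exists_ne (0 : V)
  let L0 : K →ₗ[F] V := (LinearMap.applyₗ v) ∘ₗ ρ.toLinearMap
  have hL0 : ∀ k, L0 k = ρ k v := fun k => rfl
  have hinj : Function.Injective L0 := by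
    rw [← LinearMap.ker_eq_bot, LinearMap.ker_eq_bot']
    intro k hk
    by_contra hk0
    apply hv
    have : ρ (k⁻¹ * k) v = v := by rw [inv_mul_cancel₀ hk0, map_one]; rfl
    rw [← this, map_mul, Module.End.mul_apply, ← hL0 k, hk, map_zero]
  have hsurj : Function.Surjective L0 := by
    rw [← LinearMap.range_eq_top]
    refine (hg _ ?_).resolve_left ?_
    · rintro _ ⟨k, rfl⟩
      refine ⟨AdjoinRoot.root p * k, ?_⟩
      rw [hL0, map_mul, hρr]; rfl
    · intro h
      have : L0 1 ∈ LinearMap.range L0 := ⟨1, rfl⟩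
      rw [h, Submodule.mem_bot, hL0, map_one] at this
      exact hv this
  let L : K ≃ₗ[F] V := LinearEquiv.ofBijective L0 ⟨hinj, hsurj⟩
  have hfin : Finite K := Finite.of_injective L0 hinj
  obtain ⟨k, hk⟩ := FiniteField.norm_surjective F K (u : F)
  have hdet : ∀ k : K, LinearMap.det (ρ k) = Algebra.norm F k := by
    intro k
    rw [Algebra.norm_apply, ← LinearMap.det_conj _ L]
    congr 1
    ext x
    obtain ⟨y, rfl⟩ := L.surjective x
    have e1 : ∀ y, L y = ρ y v := fun y => rfl
    simp only [LinearMap.comp_apply, LinearEquiv.coe_coe, LinearEquiv.symm_apply_apply]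
    change ρ k (L y) = L (k * y)
    rw [e1, e1, map_mul]; rfl
  have hk0 : k ≠ 0 := by
    rintro rfl
    rw [Algebra.norm_zero] at hk
    exact u.ne_zero hk.symm
  have hr1 : ∀ x, ρ k (ρ k⁻¹ x) = x := by
    intro x
    rw [← Module.End.mul_apply, ← map_mul, mul_inv_cancel₀ hk0, map_one]; rfl
  have hr2 : ∀ x, ρ k⁻¹ (ρ k x) = x := by
    intro x
    rw [← Module.End.mul_apply, ← map_mul, inv_mul_cancel₀ hk0, map_one]; rfl
  refine ⟨LinearEquiv.ofLinearMap (ρ k) (ρ k⁻¹) (by ext x; exact hr1 x) (by ext x; exact hr2 x), ?_, ?_⟩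
  · apply LinearEquiv.ext
    intro x
    have : ρ k * ρ (AdjoinRoot.root p) = ρ (AdjoinRoot.root p) * ρ k := by
      rw [← map_mul, mul_comm, map_mul]
    rw [hρr] at this
    exact DFunLike.congr_fun this x
  · apply Units.ext
    rw [LinearEquiv.coe_det, ← hk, ← hdet]
    rfl

lemma cent_SL [Nontrivial V] {g : V ≃ₗ[F] V} (hg : Irr g) :
    Nat.card {c : V ≃ₗ[F] V // c * g = g * c ∧ LinearEquiv.det c = 1} * (Nat.card F - 1) ≤
      Nat.card F ^ Module.finrank F V - 1 := by
  rw [← card_ne_zero, ← Nat.card_units, ← Nat.card_prod]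
  choose κ hκ1 hκ2 using det_surj hg
  obtain ⟨v, hv⟩ := exists_ne (0 : V)
  refine Nat.card_le_card_of_injective (fun z => ⟨(z.1.1 * κ z.2) v, fun h0 => hv ((z.1.1 * κ z.2).injective (by rw [h0, map_zero]))⟩) ?_
  rintro ⟨⟨a, ha, ha'⟩, u⟩ ⟨⟨b, hb, hb'⟩, w⟩ h
  replace h : (a * κ u) v = (b * κ w) v := congrArg Subtype.val h
  have h1 : ∀ x, (a * κ u) (g x) = g ((a * κ u) x) := fun x => DFunLike.congr_fun (show a * κ u * g = g * (a * κ u) by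
    rw [mul_assoc, hκ1, ← mul_assoc, ha, mul_assoc]) x
  have h2 : ∀ x, (b * κ w) (g x) = g ((b * κ w) x) := fun x => DFunLike.congr_fun (show b * κ w * g = g * (b * κ w) by
    rw [mul_assoc, hκ1, ← mul_assoc, hb, mul_assoc]) x
  have h3 := free_cent hg (a := ((a * κ u : V ≃ₗ[F] V) : V →ₗ[F] V)) (b := ((b * κ w : V ≃ₗ[F] V) : V →ₗ[F] V)) h1 h2 hv h
  have h4 : a * κ u = b * κ w := LinearEquiv.toLinearMap_injective h3
  have h5 := congrArg LinearEquiv.det h4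
  rw [map_mul, map_mul, ha', hb', hκ2, hκ2, one_mul, one_mul] at h5
  subst h5
  have h6 := mul_right_cancel h4
  subst h6
  rfl

/-- a general fibre count -/
lemma Pc_le (g : V ≃ₗ[F] V) (H : Subgroup (V ≃ₗ[F] V)) :
    Pc g H ≤ Nat.card {h : V ≃ₗ[F] V // h ∈ H ∧ ∃ x : V ≃ₗ[F] V, LinearEquiv.det x = 1 ∧ x * g * x⁻¹ = h} *
      Nat.card {c : V ≃ₗ[F] V // c * g = g * c ∧ LinearEquiv.det c = 1} := by
  unfold Pc
  rw [← Nat.card_prod]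
  have hch : ∀ h : {h : V ≃ₗ[F] V // h ∈ H ∧ ∃ x : V ≃ₗ[F] V, LinearEquiv.det x = 1 ∧ x * g * x⁻¹ = h},
    ∃ x : V ≃ₗ[F] V, LinearEquiv.det x = 1 ∧ x * g * x⁻¹ = h.1 := fun h => h.2.2
  choose k hk1 hk2 using hch
  refine Nat.card_le_card_of_injective (fun x => (⟨x.1 * g * x.1⁻¹, x.2.2, x.1, x.2.1, rfl⟩,
    ⟨(k ⟨x.1 * g * x.1⁻¹, x.2.2, x.1, x.2.1, rfl⟩)⁻¹ * x.1, ?_, ?_⟩)) ?_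
  · have h1 := hk2 ⟨x.1 * g * x.1⁻¹, x.2.2, x.1, x.2.1, rfl⟩
    set κ := k ⟨x.1 * g * x.1⁻¹, x.2.2, x.1, x.2.1, rfl⟩
    have h2 : κ * g * κ⁻¹ = x.1 * g * x.1⁻¹ := h1
    calc κ⁻¹ * x.1 * g = κ⁻¹ * (x.1 * g * x.1⁻¹) * x.1 := by group
      _ = κ⁻¹ * (κ * g * κ⁻¹) * x.1 := by rw [h2]
      _ = _ := by group
  · rw [map_mul, map_inv, hk1, x.2.1, inv_one, one_mul]
  · intro a b hab
    simp only [Prod.mk.injEq] at hab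
    obtain ⟨h1, h2⟩ := hab
    have h3 := congrArg Subtype.val h2
    simp only at h3
    rw [h1] at h3
    exact Subtype.ext (mul_left_cancel h3)

lemma det_card {N : ℕ} (hodd : Odd N) (hN : (N : F) ≠ 0) (hn : 2 ≤ Module.finrank F V)
    {H : Subgroup (V ≃ₗ[F] V)} (hH : Ex N H) (d : Fˣ) :
    Nat.card {h : V ≃ₗ[F] V // h ∈ H ∧ LinearEquiv.det h = d} ≤ kb F (Module.finrank F V) := by
  have h1 := order2 hodd hN _ hn V rfl (H ⊓ (LinearEquiv.det : (V ≃ₗ[F] V) →* Fˣ).ker) (fun h hh => hH h hh.1) (fun h hh => hh.2)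
  refine le_trans ?_ h1
  rcases isEmpty_or_nonempty {h : V ≃ₗ[F] V // h ∈ H ∧ LinearEquiv.det h = d} with he | ⟨⟨h0, hh0, hd0⟩⟩
  · simp
  refine Nat.card_le_card_of_injective (fun h => ⟨h0⁻¹ * h.1, H.mul_mem (H.inv_mem hh0) h.2.1, ?_⟩) ?_
  · change LinearEquiv.det (h0⁻¹ * h.1) = 1
    rw [map_mul, map_inv, hd0, h.2.2, inv_mul_cancel]
  · intro a b hab
    exact Subtype.ext (mul_left_cancel (congrArg Subtype.val hab))

lemma irr_bound0 {N : ℕ} (hodd : Odd N) (hN : (N : F) ≠ 0) (hn : 2 ≤ Module.finrank F V)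
    {H : Subgroup (V ≃ₗ[F] V)} (hH : Ex N H) {g : V ≃ₗ[F] V} (hg : Irr g) :
    Pc g H * (Nat.card F - 1) ≤ kb F (Module.finrank F V) * (Nat.card F ^ Module.finrank F V - 1) := by
  have hnt : Nontrivial V := Module.nontrivial_of_finrank_pos (R := F) (by omega)
  have h1 := Pc_le g H
  have h2 := cent_SL hg
  have h3 := det_card hodd hN hn hH (LinearEquiv.det g)
  have h4 : Nat.card {h : V ≃ₗ[F] V // h ∈ H ∧ ∃ x : V ≃ₗ[F] V, LinearEquiv.det x = 1 ∧ x * g * x⁻¹ = h} ≤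
      Nat.card {h : V ≃ₗ[F] V // h ∈ H ∧ LinearEquiv.det h = LinearEquiv.det g} := by
    refine Nat.card_le_card_of_injective (fun h => ⟨h.1, h.2.1, ?_⟩) ?_
    · obtain ⟨x, hx, hxg⟩ := h.2.2
      rw [← hxg, map_mul, map_mul, map_inv, hx]; simp
    · intro a b hab
      have h5 : a.1 = b.1 := by simpa using hab
      exact Subtype.ext h5
  calc Pc g H * (Nat.card F - 1) ≤ _ := Nat.mul_le_mul_right _ h1
    _ = Nat.card {h : V ≃ₗ[F] V // h ∈ H ∧ ∃ x : V ≃ₗ[F] V, LinearEquiv.det x = 1 ∧ x * g * x⁻¹ = h} * (Nat.card {c : V ≃ₗ[F] V // c * g = g * c ∧ LinearEquiv.det c = 1} * (Nat.card F - 1)) := by ring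
    _ ≤ _ := Nat.mul_le_mul (h4.trans h3) h2

/-- transfer to matrices -/
noncomputable def tr (n : ℕ) (F : Type) [Field F] : GL (Fin n) F ≃* ((Fin n → F) ≃ₗ[F] (Fin n → F)) :=
  Matrix.GeneralLinearGroup.toLin.trans (LinearMap.GeneralLinearGroup.generalLinearEquiv F (Fin n → F))

lemma prod_GL (q n : ℕ) (hq : 1 ≤ q) : ∏ i : Fin n, (q ^ n - q ^ (i : ℕ)) =
    q ^ (n * (n - 1) / 2) * ∏ i ∈ Finset.Icc 1 n, (q ^ i - 1) := by
  rw [Fin.prod_univ_eq_prod_range (fun i => q ^ n - q ^ i)]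
  have h1 : ∀ i ∈ Finset.range n, q ^ n - q ^ i = q ^ i * (q ^ (n - 1 - i + 1) - 1) := by
    intro i hi
    rw [Finset.mem_range] at hi
    rw [Nat.mul_sub, mul_one, ← pow_add]
    congr 2
    omega
  rw [Finset.prod_congr rfl h1, Finset.prod_mul_distrib, Finset.prod_pow_eq_pow_sum, Finset.sum_range_id,
    Finset.prod_range_reflect (fun i => q ^ (i + 1) - 1)]
  congr 1
  rw [Finset.range_eq_Ico, Finset.prod_Ico_add' (fun i => q ^ i - 1) 0 n 1]
  rfl

lemma card_GLV : Nat.card (V ≃ₗ[F] V) = Nat.card F ^ (Module.finrank F V * (Module.finrank F V - 1) / 2) *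
    ∏ i ∈ Finset.Icc 1 (Module.finrank F V), (Nat.card F ^ i - 1) := by
  have : Module.Finite F V := Module.Finite.of_finite
  have : Fintype F := Fintype.ofFinite _
  let e := (Module.finBasis F V).equivFun
  rw [Nat.card_congr ((cj e).trans (tr _ F).symm).toEquiv, Matrix.card_GL_field,
    ← Nat.card_eq_fintype_card, prod_GL _ _ Nat.card_pos]

lemma card_GL_le : Nat.card (V ≃ₗ[F] V) ≤ SLc F V * (Nat.card F - 1) := by
  classical
  rw [← Nat.card_units]
  unfold SLc
  rw [← Nat.card_prod]
  let k : Fˣ → (V ≃ₗ[F] V) := fun w => if h : ∃ k : V ≃ₗ[F] V, LinearEquiv.det k = w then h.choose else 1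
  have hk : ∀ x : V ≃ₗ[F] V, LinearEquiv.det (k (LinearEquiv.det x)) = LinearEquiv.det x := by
    intro x
    have hex : ∃ k : V ≃ₗ[F] V, LinearEquiv.det k = LinearEquiv.det x := ⟨x, rfl⟩
    simp only [k]
    rw [dif_pos hex]
    exact hex.choose_spec
  refine Nat.card_le_card_of_injective (fun x => (⟨(k (LinearEquiv.det x))⁻¹ * x, by rw [map_mul, map_inv, hk, inv_mul_cancel]⟩, LinearEquiv.det x)) ?_
  intro a b hab
  simp only [Prod.mk.injEq, Subtype.mk.injEq] at hab
  obtain ⟨h1, h2⟩ := hab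
  rw [h2] at h1
  exact mul_left_cancel h1

theorem irr_bound {N : ℕ} (hodd : Odd N) (hN : (N : F) ≠ 0) (hn : 2 ≤ Module.finrank F V)
    {H : Subgroup (V ≃ₗ[F] V)} (hH : Ex N H) {g : V ≃ₗ[F] V} (hg : Irr g) :
    Pc g H * (Nat.card F ^ (Module.finrank F V * (Module.finrank F V - 1) / 2) * (Nat.card F - 1) * (Nat.card F ^ 2 - 1)) ≤
      s2 F * (Nat.card F ^ Module.finrank F V - 1) * SLc F V := by
  set n := Module.finrank F V with hnn
  have h1 := irr_bound0 hodd hN hn hH hg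
  have h2 := card_GL_le (F := F) (V := V)
  have h3 := card_GLV (F := F) (V := V)
  rw [← hnn] at h1 h3
  have hq : 2 ≤ Nat.card F := Finite.one_lt_card
  set q := Nat.card F with hqq
  set Q := ∏ i ∈ Finset.Icc 3 n, (q ^ i - 1) with hQ
  have hQpos : 0 < Q := by
    apply Finset.prod_pos
    intro i hi
    have : 3 ≤ i := (Finset.mem_Icc.mp hi).1
    have : 2 ≤ q ^ i := by
      calc 2 ≤ q := hq
        _ = q ^ 1 := (pow_one q).symm
        _ ≤ q ^ i := Nat.pow_le_pow_right (by omega) (by omega)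
    omega
  have h4 : ∏ i ∈ Finset.Icc 1 n, (q ^ i - 1) = (q - 1) * (q ^ 2 - 1) * Q := by
    have hIcc : Finset.Icc 1 n = insert 1 (insert 2 (Finset.Icc 3 n)) := by
      ext i; simp only [Finset.mem_insert, Finset.mem_Icc]; omega
    rw [hIcc, Finset.prod_insert (by simp), Finset.prod_insert (by simp), pow_one]; ring
  have h5 : kb F n = s2 F * Q := rfl
  rw [h3, h4] at h2
  rw [h5] at h1
  refine Nat.le_of_mul_le_mul_right (c := Q) ?_ hQpos
  calc _ = Pc g H * (q ^ (n * (n - 1) / 2) * ((q - 1) * (q ^ 2 - 1) * Q)) := by ring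
    _ ≤ Pc g H * (SLc F V * (q - 1)) := Nat.mul_le_mul_left _ h2
    _ = (Pc g H * (q - 1)) * SLc F V := by ring
    _ ≤ (s2 F * Q * (q ^ n - 1)) * SLc F V := Nat.mul_le_mul_right _ h1
    _ = _ := by ring

end irred
end HP

namespace HP
set_option linter.unusedVariables false
set_option linter.unusedSectionVars false
set_option linter.unusedSimpArgs false
section union
variable {F : Type} [Field F] [Finite F] {V : Type} [AddCommGroup V] [Module F V] [Finite V]

lemma eig_root {N : ℕ} {g : V ≃ₗ[F] V} (hg : g ^ N = 1) {c : F} (h : eig g c ≠ ⊥) : c ^ N = 1 := by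
  obtain ⟨v, hv, hv0⟩ := Submodule.exists_mem_ne_zero_of_ne_bot h
  have h6 : ∀ k : ℕ, (g ^ k) v = c ^ k • v := by
    intro k
    induction k with
    | zero => simp
    | succ k ih => rw [pow_succ, LinearEquiv.mul_apply, mem_eig.mp hv, map_smul, ih, smul_smul, pow_succ']
  have h7 := h6 N
  rw [hg] at h7
  apply smul_left_injective F hv0
  simp only [one_smul]; exact h7.symm

/-- subspaces of codimension `j` -/
lemma card_codim (j : ℕ) : Nat.card {W : Submodule F V // Module.finrank F W + j = Module.finrank F V} ≤
    Nat.card F ^ (Module.finrank F V * j) := by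
  have : Module.Finite F V := Module.Finite.of_finite
  have h1 : Nat.card (V →ₗ[F] (Fin j → F)) = Nat.card F ^ (Module.finrank F V * j) := by
    rw [Module.natCard_eq_pow_finrank (K := F), Module.finrank_linearMap]; simp
  rw [← h1]
  have hex : ∀ W : {W : Submodule F V // Module.finrank F W + j = Module.finrank F V},
      ∃ f : V →ₗ[F] (Fin j → F), LinearMap.ker f = W.1 := by
    rintro ⟨W, hW⟩
    have h2 : Module.finrank F (V ⧸ W) = Module.finrank F (Fin j → F) := by
      have := Submodule.finrank_quotient_add_finrank W
      simp; omega
    let e := LinearEquiv.ofFinrankEq _ _ h2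
    refine ⟨(e : (V ⧸ W) →ₗ[F] (Fin j → F)) ∘ₗ W.mkQ, ?_⟩
    rw [LinearEquiv.ker_comp, Submodule.ker_mkQ]
  choose f hf using hex
  refine Nat.card_le_card_of_injective f ?_
  intro a b hab
  apply Subtype.ext
  rw [← hf a, ← hf b, hab]

/-- pointwise stabilizer -/
def pst (H : Subgroup (V ≃ₗ[F] V)) (W : Submodule F V) : Subgroup (V ≃ₗ[F] V) where
  carrier := {h | h ∈ H ∧ ∀ v ∈ W, h v = v}
  one_mem' := ⟨H.one_mem, fun _ _ => rfl⟩
  mul_mem' := by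
    rintro a b ⟨ha, ha'⟩ ⟨hb, hb'⟩
    exact ⟨H.mul_mem ha hb, fun v hv => by rw [LinearEquiv.mul_apply, hb' v hv, ha' v hv]⟩
  inv_mem' := by
    rintro a ⟨ha, ha'⟩
    exact ⟨H.inv_mem ha, fun v hv => a.injective (by rw [← LinearEquiv.mul_apply, mul_inv_cancel, ha' v hv]; rfl)⟩

lemma card_pst {N : ℕ} (hN : (N : F) ≠ 0) {H : Subgroup (V ≃ₗ[F] V)} (hH : Ex N H) {W : Submodule F V} {j : ℕ}
    (hW : Module.finrank F W + j = Module.finrank F V) : Nat.card (pst H W) ≤ Nat.card F ^ (j ^ 2) := by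
  have : Module.Finite F V := Module.Finite.of_finite
  obtain ⟨B, hB⟩ := Submodule.exists_isCompl W
  have hBn : Module.finrank F B = j := by have := finrank_compl hB; omega
  obtain ⟨S', -, h1, -⟩ := stab_embed hN (S := pst H W) (fun h hh => hH h hh.1) hB (fun h hh => hh.2)
  refine h1.trans ?_
  have h2 : Nat.card (B →ₗ[F] B) = Nat.card F ^ (j ^ 2) := by
    rw [Module.natCard_eq_pow_finrank (K := F), Module.finrank_linearMap, hBn, sq]
  rw [← h2]
  refine Nat.card_le_card_of_injective (fun s => (s.1 : B →ₗ[F] B)) ?_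
  intro a b hab
  exact Subtype.ext (LinearEquiv.toLinearMap_injective hab)

lemma big_count {N : ℕ} (hN : (N : F) ≠ 0) {H : Subgroup (V ≃ₗ[F] V)} (hH : Ex N H)
    (hZ : ∀ z ∈ Zs F V, z ^ N = 1 → z ∈ H) {j : ℕ} (hj : j < Module.finrank F V) :
    Nat.card {g : V ≃ₗ[F] V // g ∈ H ∧ ∃ c : F, Module.finrank F (eig g c) + j = Module.finrank F V} ≤
      Nat.card (H ⊓ Zs F V : Subgroup (V ≃ₗ[F] V)) * (Nat.card F ^ (Module.finrank F V * j) * Nat.card F ^ (j ^ 2)) := by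
  have : Module.Finite F V := Module.Finite.of_finite
  have hnt : Nontrivial V := Module.nontrivial_of_finrank_pos (R := F) (by omega)
  let X := {W : Submodule F V // Module.finrank F W + j = Module.finrank F V}
  have hXf : Finite X := by
    have : Finite (Submodule F V) := Finite.of_injective (fun W : Submodule F V => (W : Set V)) SetLike.coe_injective
    exact Subtype.finite
  have : Fintype X := Fintype.ofFinite _
  have h1 : Nat.card (Σ W : X, pst H W.1) ≤ Nat.card F ^ (Module.finrank F V * j) * Nat.card F ^ (j ^ 2) := by
    rw [Nat.card_sigma]
    refine (Finset.sum_le_card_nsmul _ _ _ (fun W _ => card_pst hN hH W.2)).trans ?_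
    rw [smul_eq_mul, Finset.card_univ, ← Nat.card_eq_fintype_card]
    exact Nat.mul_le_mul_right _ (card_codim j)
  refine le_trans ?_ (Nat.mul_le_mul_left _ h1)
  rw [← Nat.card_prod]
  have hex : ∀ g : {g : V ≃ₗ[F] V // g ∈ H ∧ ∃ c : F, Module.finrank F (eig g c) + j = Module.finrank F V},
      ∃ z : (H ⊓ Zs F V : Subgroup (V ≃ₗ[F] V)), ∃ W : X, z.1⁻¹ * g.1 ∈ pst H W.1 := by
    rintro ⟨g, hg, c, hc⟩
    have hne : eig g c ≠ ⊥ := by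
      intro h
      rw [h, finrank_bot] at hc
      omega
    have hcN := eig_root (hH g hg) hne
    have hN0 : N ≠ 0 := by rintro rfl; simp at hN
    have hc0 : c ≠ 0 := by
      rintro rfl
      rw [zero_pow hN0] at hcN
      exact zero_ne_one hcN
    let z : V ≃ₗ[F] V := LinearEquiv.smulOfUnit (Units.mk0 c hc0)
    have hz : ∀ v, z v = c • v := fun v => rfl
    have hzs : z ∈ Zs F V := ⟨c, hz⟩
    have hzN : z ^ N = 1 := by
      apply LinearEquiv.ext
      intro v
      have : ∀ k : ℕ, ∀ v, (z ^ k) v = c ^ k • v := by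
        intro k
        induction k with
        | zero => intro v; simp
        | succ k ih => intro v; rw [pow_succ, LinearEquiv.mul_apply, hz, map_smul, ih, smul_smul, pow_succ']
      rw [this, hcN, one_smul]; rfl
    have hzH := hZ z hzs hzN
    refine ⟨⟨z, hzH, hzs⟩, ⟨eig g c, hc⟩, H.mul_mem (H.inv_mem hzH) hg, ?_⟩
    intro v hv
    apply z.injective
    rw [← LinearEquiv.mul_apply, mul_inv_cancel_left, hz]
    exact hv
  choose z W hzW using hex
  refine Nat.card_le_card_of_injective (fun g => (z g, ⟨W g, ⟨_, hzW g⟩⟩)) ?_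
  intro a b hab
  simp only [Prod.mk.injEq, Sigma.mk.injEq] at hab
  obtain ⟨e1, e2, e3⟩ := hab
  have key : ∀ (W W' : X) (p : pst H W.1) (p' : pst H W'.1), W = W' → HEq p p' → p.1 = p'.1 := by
    intro W W' p p' h1 h2
    subst h1
    rw [eq_of_heq h2]
  have e4 := key _ _ _ _ e2 e3
  simp only at e4
  rw [e1] at e4
  exact Subtype.ext (mul_left_cancel e4)

lemma geom_quarter (J : ℕ) : ∑ j ∈ Finset.Icc 1 J, ((1 : ℝ) / 4) ^ j = (1 - (1 / 4) ^ J) / 3 := by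
  induction J with
  | zero => simp
  | succ J ih => rw [Finset.sum_Icc_succ_top (by omega), ih]; ring

theorem union_bound {N : ℕ} (hodd : Odd N) (hN : (N : F) ≠ 0) (hn : 1 ≤ Module.finrank F V)
    {H : Subgroup (V ≃ₗ[F] V)} (hH : Ex N H)
    (hZ : ∀ z ∈ Zs F V, z ^ N = 1 → z ∈ H) {κ σ : ℝ}
    (hκ : (Nat.card H : ℝ) ≤ Nat.card (H ⊓ Zs F V : Subgroup (V ≃ₗ[F] V)) * κ)
    (hsm : ∀ g ∈ H, g ∉ Zs F V → (∀ c : F, 2 * Module.finrank F (eig g c) ≤ Module.finrank F V) →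
      PB N g ((Nat.card F : ℝ) ^ (-σ)))
    (hfin : κ * ((Nat.card F : ℝ) ^ (-σ)) ^ 3 ≤ 5 / 3) :
    ∃ x y z : V ≃ₗ[F] V, LinearEquiv.det x = 1 ∧ LinearEquiv.det y = 1 ∧ LinearEquiv.det z = 1 ∧
      ∀ g ∈ H, x * g * x⁻¹ ∈ H → y * g * y⁻¹ ∈ H → z * g * z⁻¹ ∈ H → g ∈ Zs F V := by
  classical
  have : Fintype (V ≃ₗ[F] V) := Fintype.ofFinite _
  have : Module.Finite F V := Module.Finite.of_finite
  by_contra hcon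
  push Not at hcon
  let S := {x : V ≃ₗ[F] V // LinearEquiv.det x = 1}
  have : Fintype S := Fintype.ofFinite _
  set n := Module.finrank F V with hnn
  set q : ℝ := (Nat.card F : ℝ) with hqq
  have hq2 : (2 : ℝ) ≤ q := by
    have : 2 ≤ Nat.card F := Finite.one_lt_card
    rw [hqq]; exact_mod_cast this
  have hq0 : 0 < q := by linarith
  set hz := Nat.card (H ⊓ Zs F V : Subgroup (V ≃ₗ[F] V)) with hhz
  have hz0 : 0 < hz := Nat.card_pos
  set Hn : Finset (V ≃ₗ[F] V) := Finset.univ.filter (fun g => g ∈ H ∧ g ∉ Zs F V) with hHn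
  let R : (S × S × S) → (V ≃ₗ[F] V) → Prop := fun τ g =>
    τ.1.1 * g * τ.1.1⁻¹ ∈ H ∧ τ.2.1.1 * g * τ.2.1.1⁻¹ ∈ H ∧ τ.2.2.1 * g * τ.2.2.1⁻¹ ∈ H
  have hdc := Finset.sum_card_bipartiteAbove_eq_sum_card_bipartiteBelow (s := (Finset.univ : Finset (S × S × S))) (t := Hn) R
  have hscal : ∀ z ∈ Zs F V, ∀ x : V ≃ₗ[F] V, x * z * x⁻¹ = z := by
    intro z hz x
    rw [← Zs_comm hz x]; group
  -- lower bound for each triple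
  have hlow : ∀ τ : S × S × S, 2 * hz ≤ (Finset.bipartiteAbove R Hn τ).card := by
    rintro ⟨x, y, z⟩
    obtain ⟨g, hgH, hx, hy, hzz, hg⟩ := hcon x.1 y.1 z.1 x.2 y.2 z.2
    let D : Subgroup (V ≃ₗ[F] V) := H ⊓ H.comap (MulAut.conj x.1).toMonoidHom ⊓ H.comap (MulAut.conj y.1).toMonoidHom ⊓ H.comap (MulAut.conj z.1).toMonoidHom
    have hD : ∀ d, d ∈ D ↔ d ∈ H ∧ x.1 * d * x.1⁻¹ ∈ H ∧ y.1 * d * y.1⁻¹ ∈ H ∧ z.1 * d * z.1⁻¹ ∈ H := by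
      intro d
      simp only [D, Subgroup.mem_inf, Subgroup.mem_comap]
      constructor
      · rintro ⟨⟨⟨a, b⟩, c⟩, d⟩; exact ⟨a, b, c, d⟩
      · rintro ⟨a, b, c, d⟩; exact ⟨⟨⟨a, b⟩, c⟩, d⟩
    have hgD : g ∈ D := (hD g).mpr ⟨hgH, hx, hy, hzz⟩
    have hzD : ∀ w ∈ H ⊓ Zs F V, w ∈ D := by
      rintro w ⟨h1, h2⟩
      rw [hD]
      simp only [hscal w h2]
      exact ⟨h1, h1, h1, h1⟩
    have hgi : g⁻¹ ∉ Zs F V := fun h => hg (by simpa using (Zs F V).inv_mem h)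
    have hmem : ∀ d ∈ D, d ∉ Zs F V → ∀ w ∈ H ⊓ Zs F V, d * w ∈ Finset.bipartiteAbove R Hn (x, y, z) := by
      intro d hd hdz w hw
      have h1 := (hD _).mp (D.mul_mem hd (hzD w hw))
      rw [Finset.mem_bipartiteAbove, hHn, Finset.mem_filter]
      refine ⟨⟨Finset.mem_univ _, h1.1, fun h => hdz ?_⟩, h1.2⟩
      have := (Zs F V).mul_mem h ((Zs F V).inv_mem hw.2)
      simpa using this
    rw [two_mul, hhz, ← Nat.card_sum, ← Nat.card_eq_finsetCard (Finset.bipartiteAbove R Hn (x, y, z))]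
    refine Nat.card_le_card_of_injective (Sum.elim (fun w => ⟨g * w.1, hmem g hgD hg w.1 w.2⟩) (fun w => ⟨g⁻¹ * w.1, hmem g⁻¹ (D.inv_mem hgD) hgi w.1 w.2⟩)) ?_
    have hsq : ∀ w w' : (H ⊓ Zs F V : Subgroup (V ≃ₗ[F] V)), g * w.1 ≠ g⁻¹ * w'.1 := by
      intro w w' h
      have h1 : g ^ 2 ∈ Zs F V := by
        have : g ^ 2 = w'.1 * w.1⁻¹ := by
          calc g ^ 2 = g * (g * w.1) * w.1⁻¹ := by rw [pow_two]; group
            _ = g * (g⁻¹ * w'.1) * w.1⁻¹ := by rw [h]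
            _ = _ := by group
        rw [this]
        exact (Zs F V).mul_mem w'.2.2 ((Zs F V).inv_mem w.2.2)
      obtain ⟨m, hm⟩ := hodd
      have h2 := hH g hgH
      rw [hm, pow_succ, pow_mul] at h2
      have h3 : g = ((g ^ 2) ^ m)⁻¹ := (eq_inv_of_mul_eq_one_right h2)
      apply hg
      rw [h3]
      exact (Zs F V).inv_mem ((Zs F V).pow_mem h1 m)
    rintro (w | w) (w' | w') h
    · simp only [Sum.elim_inl, Subtype.mk.injEq] at h
      rw [Subtype.ext (mul_left_cancel h)]
    · simp only [Sum.elim_inl, Sum.elim_inr, Subtype.mk.injEq] at h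
      exact absurd h (hsq w w')
    · simp only [Sum.elim_inl, Sum.elim_inr, Subtype.mk.injEq] at h
      exact absurd h.symm (hsq w' w)
    · simp only [Sum.elim_inr, Subtype.mk.injEq] at h
      rw [Subtype.ext (mul_left_cancel h)]
  have hSc : Fintype.card S = SLc F V := by unfold SLc; rw [Nat.card_eq_fintype_card]
  have hlow2 : SLc F V ^ 3 * (2 * hz) ≤ ∑ τ : S × S × S, (Finset.bipartiteAbove R Hn τ).card := by
    have := Finset.card_nsmul_le_sum (Finset.univ : Finset (S × S × S)) (fun τ => (Finset.bipartiteAbove R Hn τ).card) (2 * hz) (fun τ _ => hlow τ)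
    refine le_trans (le_of_eq ?_) this
    rw [smul_eq_mul, Finset.card_univ, Fintype.card_prod, Fintype.card_prod, hSc]; ring
  have hbel : ∀ g, (Finset.bipartiteBelow R (Finset.univ : Finset (S × S × S)) g).card = Pc g H ^ 3 := by
    intro g
    rw [← Nat.card_eq_finsetCard]
    have : Pc g H ^ 3 = Pc g H * (Pc g H * Pc g H) := by ring
    rw [this]
    unfold Pc
    rw [← Nat.card_prod, ← Nat.card_prod]
    refine Nat.card_congr ⟨fun τ => ?_, fun τ => ?_, fun τ => ?_, fun τ => ?_⟩
    · have h := ((Finset.mem_bipartiteBelow R).mp τ.2).2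
      exact (⟨τ.1.1.1, τ.1.1.2, h.1⟩, ⟨τ.1.2.1.1, τ.1.2.1.2, h.2.1⟩, ⟨τ.1.2.2.1, τ.1.2.2.2, h.2.2⟩)
    · exact ⟨(⟨τ.1.1, τ.1.2.1⟩, ⟨τ.2.1.1, τ.2.1.2.1⟩, ⟨τ.2.2.1, τ.2.2.2.1⟩),
        (Finset.mem_bipartiteBelow R).mpr ⟨Finset.mem_univ _, τ.1.2.2, τ.2.1.2.2, τ.2.2.2.2⟩⟩
    · rfl
    · rfl
  rw [hdc, Finset.sum_congr rfl (fun g _ => hbel g)] at hlow2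
  -- upper bound
  set J := (n - 1) / 2 with hJ
  let big : ℕ → Finset (V ≃ₗ[F] V) := fun j => Hn.filter (fun g => ∃ c : F, Module.finrank F (eig g c) + j = n)
  set L : ℝ := (SLc F V : ℝ) with hL
  have hL0 : 0 < L := by rw [hL]; exact_mod_cast SLc_pos
  have hbigc : ∀ j ∈ Finset.Icc 1 J, ((big j).card : ℝ) ≤ hz * (q ^ (n * j) * q ^ (j ^ 2)) := by
    intro j hj
    have hj2 : j < n := by have := (Finset.mem_Icc.mp hj); omega
    have h1 := big_count hN hH hZ hj2
    have h2 : (big j).card ≤ Nat.card {g : V ≃ₗ[F] V // g ∈ H ∧ ∃ c : F, Module.finrank F (eig g c) + j = Module.finrank F V} := by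
      rw [← Nat.card_eq_finsetCard]
      refine Nat.card_le_card_of_injective (fun g => ⟨g.1, ?_⟩) ?_
      · have h := Finset.mem_filter.mp g.2
        have h' := Finset.mem_filter.mp h.1
        exact ⟨h'.2.1, h.2⟩
      · intro a b hab
        exact Subtype.ext (by simpa using hab)
    have h3 := h2.trans h1
    rw [hqq]
    exact_mod_cast h3
  have hterm : ∀ g ∈ Hn, ((Pc g H : ℝ)) ^ 3 ≤ L ^ 3 * ((q ^ (-σ)) ^ 3 +
      ∑ j ∈ Finset.Icc 1 J, if g ∈ big j then (q ^ (-(((n - j : ℕ) * j : ℕ) : ℝ))) ^ 3 else 0) := by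
    intro g hg
    have hg' := Finset.mem_filter.mp hg
    by_cases hs : ∀ c : F, 2 * Module.finrank F (eig g c) ≤ n
    · have h1 := hsm g hg'.2.1 hg'.2.2 hs H hH
      calc (Pc g H : ℝ) ^ 3 ≤ (q ^ (-σ) * L) ^ 3 := by gcongr
        _ = L ^ 3 * ((q ^ (-σ)) ^ 3 + 0) := by ring
        _ ≤ _ := by
          gcongr
          apply Finset.sum_nonneg
          intro j hj
          split_ifs <;> positivity
    · push Not at hs
      obtain ⟨c, hc⟩ := hs
      obtain ⟨R', hR, hcompl⟩ := exists_compl hN (hH g hg'.2.1) (eig g c) (Inv_eig g c)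
      have hfr := finrank_compl hcompl
      set j := Module.finrank F R' with hj
      have hj0 : j ≠ 0 := by
        intro h0
        apply hg'.2.2
        refine ⟨c, fun v => ?_⟩
        have h2 : R' = ⊥ := Submodule.finrank_eq_zero.mp (hj.symm.trans h0)
        have h3 : eig g c = ⊤ := by
          have := hcompl.sup_eq_top
          rwa [h2, sup_bot_eq] at this
        have h4 : v ∈ eig g c := by rw [h3]; trivial
        exact h4
      have hjJ : j ∈ Finset.Icc 1 J := by
        rw [Finset.mem_Icc, hJ]
        omega
      have hb : g ∈ big j := Finset.mem_filter.mpr ⟨hg, c, hfr⟩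
      have hpb := PB_eig hN c hR hcompl (x := 0) (by rw [neg_zero, Real.rpow_zero]; exact PB_one N _)
      have h1 := hpb H hH
      have h5 : (Module.finrank F (eig g c) : ℝ) * (j : ℝ) + 0 = (((n - j : ℕ) * j : ℕ) : ℝ) := by
        have : Module.finrank F (eig g c) = n - j := by omega
        rw [this, add_zero]; push_cast; rfl
      rw [h5] at h1
      calc (Pc g H : ℝ) ^ 3 ≤ (q ^ (-(((n - j : ℕ) * j : ℕ) : ℝ)) * L) ^ 3 := by gcongr
        _ = L ^ 3 * (0 + (if g ∈ big j then (q ^ (-(((n - j : ℕ) * j : ℕ) : ℝ))) ^ 3 else 0)) := by rw [if_pos hb]; ring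
        _ ≤ _ := by
          gcongr
          · positivity
          · exact Finset.single_le_sum (f := fun j => if g ∈ big j then (q ^ (-(((n - j : ℕ) * j : ℕ) : ℝ))) ^ 3 else 0) (fun i _ => by
              split_ifs <;> positivity) hjJ
  have hup : (∑ g ∈ Hn, ((Pc g H : ℝ)) ^ 3) ≤ L ^ 3 * (Hn.card * (q ^ (-σ)) ^ 3 +
      ∑ j ∈ Finset.Icc 1 J, (big j).card * (q ^ (-(((n - j : ℕ) * j : ℕ) : ℝ))) ^ 3) := by
    refine (Finset.sum_le_sum hterm).trans (le_of_eq ?_)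
    rw [← Finset.mul_sum, Finset.sum_add_distrib, Finset.sum_const, nsmul_eq_mul, Finset.sum_comm]
    congr 2
    apply Finset.sum_congr rfl
    intro j hj
    rw [← Finset.sum_filter, Finset.sum_const, nsmul_eq_mul]
    congr 3
    ext g
    simp [big]
  have hHc : (Hn.card : ℝ) ≤ Nat.card H := by
    have : Hn.card ≤ Nat.card H := by
      rw [← Nat.card_eq_finsetCard]
      refine Nat.card_le_card_of_injective (fun g => ⟨g.1, (Finset.mem_filter.mp g.2).2.1⟩) ?_
      intro a b hab
      exact Subtype.ext (by simpa using hab)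
    exact_mod_cast this
  have hpart1 : (Hn.card : ℝ) * (q ^ (-σ)) ^ 3 ≤ hz * (5 / 3) := by
    calc (Hn.card : ℝ) * (q ^ (-σ)) ^ 3 ≤ (hz * κ) * (q ^ (-σ)) ^ 3 := by
          gcongr; exact hHc.trans hκ
      _ = hz * (κ * (q ^ (-σ)) ^ 3) := by ring
      _ ≤ _ := by gcongr
  have hpart2 : ∀ j ∈ Finset.Icc 1 J, ((big j).card : ℝ) * (q ^ (-(((n - j : ℕ) * j : ℕ) : ℝ))) ^ 3 ≤ hz * ((1 / 4) ^ j) := by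
    intro j hj
    have hj2 : 2 * j + 1 ≤ n := by have := (Finset.mem_Icc.mp hj); omega
    obtain ⟨r, hr⟩ : ∃ r, n = 2 * j + 1 + r := ⟨n - (2 * j + 1), by omega⟩
    have e1 : (q ^ (-(((n - j : ℕ) * j : ℕ) : ℝ))) = (q ^ ((n - j) * j))⁻¹ := by
      rw [Real.rpow_neg hq0.le, Real.rpow_natCast]
    rw [e1]
    calc ((big j).card : ℝ) * ((q ^ ((n - j) * j))⁻¹) ^ 3 ≤ (hz * (q ^ (n * j) * q ^ (j ^ 2))) * ((q ^ ((n - j) * j))⁻¹) ^ 3 := by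
          gcongr; exact hbigc j hj
      _ = hz * ((q ^ (2 * j * (1 + r)))⁻¹) := by
          rw [mul_assoc]
          congr 1
          rw [← pow_add, inv_pow, ← pow_mul, ← div_eq_mul_inv, div_eq_iff (by positivity), inv_mul_eq_div, eq_div_iff (by positivity), ← pow_add]
          congr 1
          have : n - j = j + 1 + r := by omega
          rw [this, hr]; ring
      _ ≤ hz * ((1 / 4) ^ j) := by
          gcongr
          rw [one_div, inv_pow]
          apply inv_anti₀ (by positivity)
          calc (4 : ℝ) ^ j = 2 ^ (2 * j) := by rw [pow_mul]; norm_num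
            _ ≤ q ^ (2 * j) := by gcongr
            _ ≤ q ^ (2 * j * (1 + r)) := by
              apply pow_le_pow_right₀ (by linarith)
              nlinarith [Nat.zero_le (2 * j * r)]
  have hpart2s : ∑ j ∈ Finset.Icc 1 J, ((big j).card : ℝ) * (q ^ (-(((n - j : ℕ) * j : ℕ) : ℝ))) ^ 3 < hz * (1 / 3) := by
    have hzr : (0 : ℝ) < hz := by exact_mod_cast hz0
    calc _ ≤ ∑ j ∈ Finset.Icc 1 J, (hz : ℝ) * ((1 / 4) ^ j) := Finset.sum_le_sum hpart2
      _ = hz * ((1 - (1 / 4) ^ J) / 3) := by rw [← Finset.mul_sum, geom_quarter]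
      _ < hz * (1 / 3) := by
        have : (0 : ℝ) < (1 / 4) ^ J := by positivity
        apply mul_lt_mul_of_pos_left _ hzr
        linarith
  have hlow3 : L ^ 3 * (2 * hz) ≤ ∑ g ∈ Hn, ((Pc g H : ℝ)) ^ 3 := by
    rw [hL]; exact_mod_cast hlow2
  have := hlow3.trans hup
  have h9 := le_of_mul_le_mul_left this (by positivity)
  linarith

end union
end HP

namespace HP
set_option linter.unusedVariables false
set_option linter.unusedSectionVars false
set_option linter.unusedSimpArgs false
section ge3
variable {F : Type} [Field F] [Finite F] {V : Type} [AddCommGroup V] [Module F V] [Finite V]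

lemma q_two : (2 : ℝ) ≤ Nat.card F := by
  have : 2 ≤ Nat.card F := Finite.one_lt_card
  exact_mod_cast this

lemma PB.mono_exp {N : ℕ} {g : V ≃ₗ[F] V} {x y : ℝ} (h : PB N g ((Nat.card F : ℝ) ^ (-x))) (hxy : y ≤ x) :
    PB N g ((Nat.card F : ℝ) ^ (-y)) := by
  refine h.mono ?_
  have := q_two (F := F)
  exact Real.rpow_le_rpow_of_exponent_le (by linarith) (by linarith)

lemma irr_PB {N : ℕ} (hodd : Odd N) (hN : (N : F) ≠ 0) (hn : 2 ≤ Module.finrank F V)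
    {g : V ≃ₗ[F] V} (hg : Irr g) {c : ℝ}
    (hx : (s2 F : ℝ) * ((Nat.card F : ℝ) ^ Module.finrank F V - 1) ≤ c *
      ((Nat.card F : ℝ) ^ (Module.finrank F V * (Module.finrank F V - 1) / 2) * (Nat.card F - 1) * ((Nat.card F : ℝ) ^ 2 - 1))) :
    PB N g c := by
  intro H hH
  have h1 := irr_bound hodd hN hn hH hg
  have hq := q_two (F := F)
  have hq' : 2 ≤ Nat.card F := Finite.one_lt_card
  have h2 : (Pc g H : ℝ) * ((Nat.card F : ℝ) ^ (Module.finrank F V * (Module.finrank F V - 1) / 2) * (Nat.card F - 1) * ((Nat.card F : ℝ) ^ 2 - 1)) ≤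
      (s2 F : ℝ) * ((Nat.card F : ℝ) ^ Module.finrank F V - 1) * SLc F V := by
    have e1 : ((Nat.card F - 1 : ℕ) : ℝ) = (Nat.card F : ℝ) - 1 := by rw [Nat.cast_sub (by omega)]; simp
    have e2 : ((Nat.card F ^ 2 - 1 : ℕ) : ℝ) = (Nat.card F : ℝ) ^ 2 - 1 := by
      rw [Nat.cast_sub (Nat.one_le_pow _ _ (by omega))]; simp
    have e3 : ((Nat.card F ^ Module.finrank F V - 1 : ℕ) : ℝ) = (Nat.card F : ℝ) ^ Module.finrank F V - 1 := by
      rw [Nat.cast_sub (Nat.one_le_pow _ _ (by omega))]; simp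
    rw [← e1, ← e2, ← e3]
    exact_mod_cast h1
  have hD : 0 < ((Nat.card F : ℝ) ^ (Module.finrank F V * (Module.finrank F V - 1) / 2) * (Nat.card F - 1) * ((Nat.card F : ℝ) ^ 2 - 1)) := by
    have : 0 < (Nat.card F : ℝ) - 1 := by linarith
    have : 0 < (Nat.card F : ℝ) ^ 2 - 1 := by nlinarith
    positivity
  refine le_of_mul_le_mul_right ?_ hD
  refine h2.trans ?_
  calc _ ≤ (c * _) * (SLc F V : ℝ) := by gcongr
    _ = _ := by ring

/-- dimension of an irreducible submodule without eigenvalues is at least two -/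
lemma two_le_of_noeig {g : V ≃ₗ[F] V} (he : ∀ c, eig g c = ⊥) {B : Submodule F V} (hB : Inv g B) (hb : B ≠ ⊥) :
    2 ≤ Module.finrank F B := by
  have : Module.Finite F V := Module.Finite.of_finite
  by_contra hcon
  have h0 : Module.finrank F B ≠ 0 := fun h => hb (Submodule.finrank_eq_zero.mp h)
  have h1 : Module.finrank F B = 1 := by omega
  obtain ⟨v, hv0, hv⟩ := finrank_eq_one_iff'.mp h1
  obtain ⟨c, hc⟩ := hv ⟨g v.1, hB v.1 v.2⟩
  have h2 : v.1 ∈ eig g c := by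
    rw [mem_eig]
    have := congrArg Subtype.val hc
    simpa using this.symm
  rw [he c, Submodule.mem_bot] at h2
  exact hv0 (Subtype.ext h2)

lemma eig_res_le (g : V ≃ₗ[F] V) {A : Submodule F V} (hA : Inv g A) (c : F) :
    Module.finrank F (eig (res g A hA) c) ≤ Module.finrank F (eig g c) := by
  have : Module.Finite F V := Module.Finite.of_finite
  refine LinearMap.finrank_le_finrank_of_injective (f := LinearMap.codRestrict (eig g c) (A.subtype ∘ₗ (eig (res g A hA) c).subtype) ?_) ?_
  · intro v
    have h := v.2
    rw [mem_eig] at h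
    have := congrArg Subtype.val h
    rw [mem_eig]
    exact this
  · intro a b hab
    have := congrArg Subtype.val hab
    exact Subtype.ext (Subtype.ext this)

lemma noeig_res {g : V ≃ₗ[F] V} (he : ∀ c, eig g c = ⊥) {A : Submodule F V} (hA : Inv g A) :
    ∀ c, eig (res g A hA) c = ⊥ := by
  intro c
  have : Module.Finite F V := Module.Finite.of_finite
  have h := eig_res_le g hA c
  rw [he c, finrank_bot] at h
  exact Submodule.finrank_eq_zero.mp (by omega)

lemma s2_sq (h3 : 3 ≤ Nat.card F) : ((s2 F : ℝ)) ≤ (Nat.card F - 1) * Real.sqrt (Nat.card F) ∧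
    (s2 F : ℝ) * (Nat.card F * Real.sqrt (Nat.card F)) ≤ (Nat.card F - 1) * ((Nat.card F : ℝ) ^ 2 - 1) := by
  unfold s2
  split_ifs with h
  · rw [h]
    have h1 : (1.73 : ℝ) ≤ Real.sqrt 3 := Real.le_sqrt_of_sq_le (by norm_num)
    have h2 : Real.sqrt 3 ≤ 1.75 := (Real.sqrt_le_left (by norm_num)).mpr (by norm_num)
    push_cast
    constructor <;> nlinarith
  · have h4 : 4 ≤ Nat.card F := by omega
    have h4' : (4 : ℝ) ≤ Nat.card F := by exact_mod_cast h4
    push_cast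
    set q : ℝ := (Nat.card F : ℝ)
    have h5 : (2 : ℝ) ≤ Real.sqrt q := Real.le_sqrt_of_sq_le (by norm_num; linarith)
    have h6 : Real.sqrt q ^ 2 = q := Real.sq_sqrt (by linarith)
    set u := Real.sqrt q
    constructor
    · nlinarith
    · have h7 : q * u ≤ (q - 1) ^ 2 := by
        rw [← h6]
        nlinarith [mul_nonneg (sub_nonneg.mpr h5) (sub_nonneg.mpr h5), sq_nonneg (u ^ 2 - 1), mul_nonneg (sub_nonneg.mpr h5) (sq_nonneg u), mul_nonneg (mul_nonneg (sub_nonneg.mpr h5) (sq_nonneg u)) (show 0 ≤ u by linarith)]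
      nlinarith [mul_le_mul_of_nonneg_left h7 (show 0 ≤ q + 1 by linarith)]

lemma half_nat (e : ℕ) (he : 1 ≤ e) : ((e * (e - 1) / 2 : ℕ) : ℝ) = (e : ℝ) * (e - 1) / 2 := by
  have h : 2 ∣ e * (e - 1) := by
    rw [mul_comm]
    have := Nat.even_mul_succ_self (e - 1)
    rw [show e - 1 + 1 = e by omega] at this
    exact this.two_dvd
  rw [Nat.cast_div h (by norm_num)]
  push_cast [Nat.cast_sub he]
  rfl

lemma irr_ge3 (h3 : 3 ≤ Nat.card F) {N : ℕ} (hodd : Odd N) (hN : (N : F) ≠ 0) (hn : 2 ≤ Module.finrank F V)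
    {g : V ≃ₗ[F] V} (hg : Irr g) :
    PB N g ((Nat.card F : ℝ) ^ (-((((Module.finrank F V : ℝ) - 1) * (Module.finrank F V - 2) + 1) / 2))) := by
  apply irr_PB hodd hN hn hg
  set e := Module.finrank F V with he
  obtain ⟨ha, hb⟩ := s2_sq h3
  have h3' : (3 : ℝ) ≤ Nat.card F := by exact_mod_cast h3
  set q : ℝ := (Nat.card F : ℝ) with hq
  have hq0 : 0 < q := by linarith
  have h6 : Real.sqrt q ^ 2 = q := Real.sq_sqrt (by linarith)
  have hu0 : 0 < Real.sqrt q := Real.sqrt_pos.mpr hq0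
  have key : q ^ (-((((e : ℝ) - 1) * (e - 2) + 1) / 2)) * (q ^ (e * (e - 1) / 2) * (q - 1) * (q ^ 2 - 1)) * (q * Real.sqrt q) =
      q ^ e * ((q - 1) * (q ^ 2 - 1)) := by
    rw [← Real.rpow_natCast q (e * (e - 1) / 2), half_nat e (by omega), ← Real.rpow_natCast q e, Real.sqrt_eq_rpow]
    have : q ^ ((e : ℕ) : ℝ) = q ^ (-((((e : ℝ) - 1) * (e - 2) + 1) / 2)) * q ^ ((e : ℝ) * (e - 1) / 2) * (q ^ (1 : ℝ) * q ^ ((1 : ℝ) / 2)) := by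
      rw [← Real.rpow_add hq0, ← Real.rpow_add hq0, ← Real.rpow_add hq0]
      congr 1; ring
    rw [this, Real.rpow_one]; ring
  have hpos : 0 < q * Real.sqrt q := by positivity
  refine le_of_mul_le_mul_right ?_ hpos
  rw [key]
  have hs0 : (0 : ℝ) ≤ s2 F := by positivity
  rcases Nat.lt_or_ge e 3 with h | h
  · have h2 : e = 2 := by omega
    rw [h2]
    have : q * Real.sqrt q * Real.sqrt q = q ^ 2 := by rw [mul_assoc, ← sq, h6]; ring
    have h8 : 0 ≤ (q ^ 2 - 1) * (q * Real.sqrt q) := mul_nonneg (by nlinarith) hpos.le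
    calc _ = (s2 F : ℝ) * ((q ^ 2 - 1) * (q * Real.sqrt q)) := by ring
      _ ≤ ((q - 1) * Real.sqrt q) * ((q ^ 2 - 1) * (q * Real.sqrt q)) := mul_le_mul_of_nonneg_right ha h8
      _ = (q - 1) * (q ^ 2 - 1) * (q * Real.sqrt q * Real.sqrt q) := by ring
      _ = _ := by rw [this]; ring
  · have hqe : 0 < q ^ e := by positivity
    calc (s2 F : ℝ) * (q ^ e - 1) * (q * Real.sqrt q) ≤ (s2 F : ℝ) * (q ^ e) * (q * Real.sqrt q) := by
          gcongr; linarith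
      _ = q ^ e * ((s2 F : ℝ) * (q * Real.sqrt q)) := by ring
      _ ≤ _ := by gcongr

lemma noeig_ge3 (h3 : 3 ≤ Nat.card F) {N : ℕ} (hodd : Odd N) (hN : (N : F) ≠ 0) (n : ℕ) :
    ∀ (V : Type) [AddCommGroup V] [Module F V] [Finite V] (hV : Module.finrank F V = n)
      (g : V ≃ₗ[F] V) (hg : g ^ N = 1) (he : ∀ c, eig g c = ⊥),
      PB N g ((Nat.card F : ℝ) ^ (-((n : ℝ) * (n - 1) / 4))) := by
  induction n using Nat.strong_induction_on with
  | _ n ih =>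
    intro V _ _ _ hV g hg he
    have : Module.Finite F V := Module.Finite.of_finite
    rcases Nat.eq_zero_or_pos n with h0 | h0
    · rw [h0]; simpa using PB_one N g
    have hnt : Nontrivial V := Module.nontrivial_of_finrank_pos (R := F) (by omega)
    obtain ⟨B, hB, hb, hirr⟩ := exists_irr g
    obtain ⟨A, hA, hc⟩ := exists_compl hN hg B hB
    have h2 := two_le_of_noeig he hB hb
    have hfr := finrank_compl hc
    have hPA := ih (Module.finrank F A) (by omega) A rfl (res g A hA) (res_pow_one hg A hA) (noeig_res he hA)
    have hPB := irr_ge3 h3 hodd hN h2 hirr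
    have h4 := PB_irr hN hA hB hc.symm hb hirr hPA hPB
    refine h4.mono_exp ?_
    rw [hV] at hfr
    set e := Module.finrank F B
    set a := Module.finrank F A
    have hn : (n : ℝ) = e + a := by rw [← hfr]; push_cast; rfl
    have h5 : (2 : ℝ) ≤ e := by exact_mod_cast h2
    have h6 : 0 ≤ ((e : ℝ) - 2) * (e - 3) := by
      rcases Nat.lt_or_ge e 3 with h | h
      · have : e = 2 := by omega
        rw [this]; norm_num
      · have : (3 : ℝ) ≤ e := by exact_mod_cast h
        nlinarith
    have h7 : 0 ≤ (a : ℝ) * (e - 2) := mul_nonneg (by positivity) (by linarith)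
    rw [hn]
    nlinarith

lemma small_ge3 (h3 : 3 ≤ Nat.card F) {N : ℕ} (hodd : Odd N) (hN : (N : F) ≠ 0) (n : ℕ) :
    ∀ (V : Type) [AddCommGroup V] [Module F V] [Finite V] (hV : Module.finrank F V = n)
      (g : V ≃ₗ[F] V) (hg : g ^ N = 1) (he : ∀ c, 2 * Module.finrank F (eig g c) ≤ n),
      PB N g ((Nat.card F : ℝ) ^ (-((n : ℝ) * (n - 1) / 4))) := by
  induction n using Nat.strong_induction_on with
  | _ n ih =>
    intro V _ _ _ hV g hg he
    have : Module.Finite F V := Module.Finite.of_finite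
    by_cases hall : ∀ c, eig g c = ⊥
    · exact noeig_ge3 h3 hodd hN n V hV g hg hall
    obtain ⟨c, hcm⟩ := Finite.exists_max (fun c : F => Module.finrank F (eig g c))
    have hm1 : Module.finrank F (eig g c) ≠ 0 := by
      intro h0
      apply hall
      intro c'
      have := hcm c'
      exact Submodule.finrank_eq_zero.mp (by omega)
    have hec := he c
    obtain ⟨R, hR, hc⟩ := exists_compl hN hg _ (Inv_eig g c)
    have hfr := finrank_compl hc
    rw [hV] at hfr
    by_cases hsm : ∀ c', 2 * Module.finrank F (eig (res g R hR) c') ≤ Module.finrank F R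
    · have h1 := ih (Module.finrank F R) (by omega) R rfl (res g R hR) (res_pow_one hg R hR) hsm
      have h2 := PB_eig hN c hR hc h1
      refine h2.mono_exp ?_
      set m := Module.finrank F (eig g c)
      set j := Module.finrank F R
      have hn : (n : ℝ) = m + j := by rw [← hfr]; push_cast; rfl
      have hmj : (m : ℝ) ≤ j := by exact_mod_cast (by omega : m ≤ j)
      have hm0 : (0 : ℝ) ≤ m := by positivity
      rw [hn]
      nlinarith [mul_le_mul_of_nonneg_left hmj hm0]
    · push Not at hsm
      obtain ⟨c', hc'⟩ := hsm
      have hle := (eig_res_le g hR c').trans (hcm c')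
      obtain ⟨R', hR', hc2⟩ := exists_compl hN (res_pow_one hg R hR) _ (Inv_eig (res g R hR) c')
      have hfr2 := finrank_compl hc2
      have h1 := PB_eig hN c' hR' hc2 (x := 0) (by rw [neg_zero, Real.rpow_zero]; exact PB_one N _)
      have h2 := PB_eig hN c hR hc h1
      refine h2.mono_exp ?_
      set m := Module.finrank F (eig g c)
      set j := Module.finrank F R
      set m' := Module.finrank F (eig (res g R hR) c')
      set j' := Module.finrank F R'
      have hn : (n : ℝ) = m + j := by rw [← hfr]; push_cast; rfl
      have hj' : (j' : ℝ) = j - m' := by rw [← hfr2]; push_cast; ring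
      have hmj : (m : ℝ) ≤ j := by exact_mod_cast (by omega : m ≤ j)
      have hm' : (m' : ℝ) ≤ m := by exact_mod_cast hle
      have hj2 : (j : ℝ) ≤ 2 * m' := by exact_mod_cast hc'.le
      have hm0 : (1 : ℝ) ≤ m := by exact_mod_cast (by omega : 1 ≤ m)
      rw [hn, hj']
      have h5 : (m : ℝ) * (j - m) ≤ m' * (j - m') := by
        nlinarith [mul_nonneg (sub_nonneg.mpr hm') (show (0:ℝ) ≤ m + m' - j by linarith)]
      nlinarith [mul_nonneg (sub_nonneg.mpr hmj) (show (0:ℝ) ≤ 5 * m - j by linarith)]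

lemma kb_fin3 (h3 : 3 ≤ Nat.card F) {n : ℕ} (hn : 2 ≤ n) :
    (kb F n : ℝ) * ((Nat.card F : ℝ) ^ (-((n : ℝ) * (n - 1) / 4))) ^ 3 ≤ 1 := by
  have h3' : (3 : ℝ) ≤ Nat.card F := by exact_mod_cast h3
  have hq0 : (0 : ℝ) < Nat.card F := by linarith
  induction n, hn using Nat.le_induction with
  | base =>
    rw [kb_two]
    have hs : (s2 F : ℝ) ≤ (Nat.card F : ℝ) ^ ((3 : ℝ) / 2) := by
      have h1 := (s2_sq h3).1
      rw [show (3 : ℝ) / 2 = 1 + 1 / 2 by norm_num, Real.rpow_add hq0, Real.rpow_one, ← Real.sqrt_eq_rpow]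
      nlinarith [Real.sqrt_nonneg (Nat.card F : ℝ)]
    rw [← Real.rpow_natCast, ← Real.rpow_mul hq0.le]
    calc (s2 F : ℝ) * _ ≤ (Nat.card F : ℝ) ^ ((3 : ℝ) / 2) * _ := by gcongr
      _ = 1 := by
        rw [← Real.rpow_add hq0]
        norm_num
  | succ n hn ih =>
    rw [kb_succ hn]
    have h1 : ((Nat.card F ^ (n + 1) - 1 : ℕ) : ℝ) ≤ (Nat.card F : ℝ) ^ ((n : ℝ) + 1) := by
      have : ((Nat.card F ^ (n + 1) - 1 : ℕ) : ℝ) ≤ ((Nat.card F ^ (n + 1) : ℕ) : ℝ) := by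
        exact_mod_cast Nat.sub_le _ _
      refine this.trans (le_of_eq ?_)
      rw [show ((n : ℝ) + 1) = ((n + 1 : ℕ) : ℝ) by push_cast; rfl, Real.rpow_natCast]; push_cast; rfl
    have hn' : (2 : ℝ) ≤ n := by exact_mod_cast hn
    have h2 : ((Nat.card F : ℝ) ^ (-(((n + 1 : ℕ) : ℝ) * ((n + 1 : ℕ) - 1) / 4))) ^ 3 =
        ((Nat.card F : ℝ) ^ (-((n : ℝ) * (n - 1) / 4))) ^ 3 * (Nat.card F : ℝ) ^ (-(3 * (n : ℝ) / 2)) := by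
      rw [← Real.rpow_natCast, ← Real.rpow_mul hq0.le, ← Real.rpow_natCast, ← Real.rpow_mul hq0.le, ← Real.rpow_add hq0]
      congr 1; push_cast; ring
    have h4 : (Nat.card F : ℝ) ^ ((n : ℝ) + 1) * (Nat.card F : ℝ) ^ (-(3 * (n : ℝ) / 2)) ≤ 1 := by
      rw [← Real.rpow_add hq0]
      exact Real.rpow_le_one_of_one_le_of_nonpos (by linarith) (by linarith)
    rw [h2]
    push_cast [-Nat.cast_sub, -Nat.cast_pred]
    calc _ = (((Nat.card F ^ (n + 1) - 1 : ℕ) : ℝ) * (Nat.card F : ℝ) ^ (-(3 * (n : ℝ) / 2))) * ((kb F n : ℝ) * ((Nat.card F : ℝ) ^ (-((n : ℝ) * (n - 1) / 4))) ^ 3) := by ring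
      _ ≤ ((Nat.card F : ℝ) ^ ((n : ℝ) + 1) * (Nat.card F : ℝ) ^ (-(3 * (n : ℝ) / 2))) * 1 := by gcongr
      _ ≤ 1 := by linarith

theorem main_ge3 (h3 : 3 ≤ Nat.card F) {N : ℕ} (hodd : Odd N) (hN : (N : F) ≠ 0) (hn : 2 ≤ Module.finrank F V)
    {H : Subgroup (V ≃ₗ[F] V)} (hH : Ex N H) (hZ : ∀ z ∈ Zs F V, z ^ N = 1 → z ∈ H) :
    ∃ x y z : V ≃ₗ[F] V, LinearEquiv.det x = 1 ∧ LinearEquiv.det y = 1 ∧ LinearEquiv.det z = 1 ∧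
      ∀ g ∈ H, x * g * x⁻¹ ∈ H → y * g * y⁻¹ ∈ H → z * g * z⁻¹ ∈ H → g ∈ Zs F V := by
  refine union_bound hodd hN (by omega) hH hZ (κ := kb F (Module.finrank F V))
    (σ := (Module.finrank F V : ℝ) * (Module.finrank F V - 1) / 4) ?_ ?_ ?_
  · exact_mod_cast order1' hodd hN hn hH
  · intro g hg _ he
    exact small_ge3 h3 hodd hN _ V rfl g (hH g hg) he
  · have := kb_fin3 h3 hn
    linarith

end ge3
end HP

namespace HP
set_option linter.unusedVariables false
set_option linter.unusedSectionVars false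
set_option linter.unusedSimpArgs false
section two
variable {F : Type} [Field F] [Finite F] {V : Type} [AddCommGroup V] [Module F V] [Finite V]

lemma s2_two (h2 : Nat.card F = 2) : s2 F = 3 := by unfold s2; rw [h2]; norm_num

lemma irr_two (h2 : Nat.card F = 2) {N : ℕ} (hodd : Odd N) (hN : (N : F) ≠ 0) (hn : 2 ≤ Module.finrank F V)
    {g : V ≃ₗ[F] V} (hg : Irr g) :
    PB N g ((Nat.card F : ℝ) ^ (-((Module.finrank F V : ℝ) * (Module.finrank F V - 3) / 2))) := by
  apply irr_PB hodd hN hn hg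
  rw [s2_two h2, h2]
  set e := Module.finrank F V with he
  have key : ((2 : ℕ) : ℝ) ^ (-((e : ℝ) * (e - 3) / 2)) * ((2 : ℕ) : ℝ) ^ (e * (e - 1) / 2) = 2 ^ e := by
    rw [← Real.rpow_natCast _ (e * (e - 1) / 2), half_nat e (by omega), ← Real.rpow_natCast _ e]
    push_cast
    rw [← Real.rpow_add (by norm_num)]
    congr 1; ring
  rw [← mul_assoc, ← mul_assoc, key]
  push_cast
  have : (0 : ℝ) < 2 ^ e := by positivity
  nlinarith

noncomputable def ff (n : ℕ) : ℝ := if n = 3 then 0 else (n : ℝ) * (n - 2) / 4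

lemma noeig_two (h2 : Nat.card F = 2) {N : ℕ} (hodd : Odd N) (hN : (N : F) ≠ 0) (n : ℕ) :
    ∀ (V : Type) [AddCommGroup V] [Module F V] [Finite V] (hV : Module.finrank F V = n)
      (g : V ≃ₗ[F] V) (hg : g ^ N = 1) (he : ∀ c, eig g c = ⊥),
      PB N g ((Nat.card F : ℝ) ^ (-(ff n))) := by
  induction n using Nat.strong_induction_on with
  | _ n ih =>
    intro V _ _ _ hV g hg he
    have : Module.Finite F V := Module.Finite.of_finite
    by_cases hn3 : n = 3
    · rw [ff, if_pos hn3]; simpa using PB_one N g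
    rcases Nat.eq_zero_or_pos n with h0 | h0
    · rw [h0, ff]; simpa using PB_one N g
    have hnt : Nontrivial V := Module.nontrivial_of_finrank_pos (R := F) (by omega)
    obtain ⟨B, hB, hb, hirr⟩ := exists_irr g
    obtain ⟨A, hA, hc⟩ := exists_compl hN hg B hB
    have hB2 := two_le_of_noeig he hB hb
    have hfr := finrank_compl hc
    rw [hV] at hfr
    have hA1 : Module.finrank F A = 0 ∨ 2 ≤ Module.finrank F A := by
      by_cases hA0 : A = ⊥
      · left; exact Submodule.finrank_eq_zero.mpr hA0
      · right; exact two_le_of_noeig he hA hA0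
    have hPA := ih (Module.finrank F A) (by omega) A rfl (res g A hA) (res_pow_one hg A hA) (noeig_res he hA)
    have hPB := irr_two h2 hodd hN hB2 hirr
    have hPB0 : PB N (res g B hB) ((Nat.card F : ℝ) ^ (-(0 : ℝ))) := by
      rw [neg_zero, Real.rpow_zero]; exact PB_one N _
    have h4 := PB_irr hN hA hB hc.symm hb hirr hPA hPB
    have h40 := PB_irr hN hA hB hc.symm hb hirr hPA hPB0
    have hfn : ff n = (n : ℝ) * (n - 2) / 4 := by rw [ff, if_neg hn3]
    by_cases hsp : Module.finrank F A = 3 ∧ Module.finrank F B = 2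
    · have hirrA : Irr (res g A hA) := by
        intro W hW
        by_cases hW0 : W = ⊥
        · left; exact hW0
        right
        obtain ⟨W', hW', hcW⟩ := exists_compl hN (res_pow_one hg A hA) W hW
        have h5 := two_le_of_noeig (noeig_res he hA) hW hW0
        have h6 := finrank_compl hcW
        have h7 : W' = ⊥ := by
          by_contra hne
          have := two_le_of_noeig (noeig_res he hA) hW' hne
          omega
        have := hcW.sup_eq_top
        rwa [h7, sup_bot_eq] at this
      have hA0 : A ≠ ⊥ := by
        intro h
        have := Submodule.finrank_eq_zero.mpr h
        omega
      have hPA0 : PB N (res g A hA) ((Nat.card F : ℝ) ^ (-(0 : ℝ))) := by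
        rw [neg_zero, Real.rpow_zero]; exact PB_one N _
      have h8 := PB_irr hN hB hA hc hA0 hirrA hPB0 hPA0
      refine h8.mono_exp ?_
      have hn5 : n = 5 := by omega
      rw [hfn, hn5, hsp.1, hsp.2]
      norm_num
    · set e := Module.finrank F B with hee
      set a := Module.finrank F A with haa
      have hn : (n : ℝ) = e + a := by rw [← hfr]; push_cast; rfl
      have ha0 : (0 : ℝ) ≤ a := by positivity
      have he2 : (2 : ℝ) ≤ e := by exact_mod_cast hB2
      by_cases ha3 : a = 3
      · have he3 : 3 ≤ e := by
          rcases Nat.lt_or_ge e 3 with h | h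
          · exfalso; exact hsp ⟨ha3, by omega⟩
          · exact h
        have he3' : (3 : ℝ) ≤ e := by exact_mod_cast he3
        refine h4.mono_exp ?_
        have hfa : ff a = 0 := by rw [ff, if_pos ha3]
        rw [hfa, hfn, hn, ha3]
        push_cast
        nlinarith
      · have hfa : ff a = (a : ℝ) * (a - 2) / 4 := by rw [ff, if_neg ha3]
        rw [hfa] at h4 h40
        rcases Nat.lt_or_ge e 4 with h | h
        · refine h40.mono_exp ?_
          rw [hfn, hn]
          rcases (by omega : e = 2 ∨ e = 3) with h | h
          · rw [h]; push_cast; nlinarith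
          · have ha2 : 2 ≤ a := by omega
            have ha2' : (2 : ℝ) ≤ a := by exact_mod_cast ha2
            rw [h]; push_cast; nlinarith
        · have he4' : (4 : ℝ) ≤ e := by exact_mod_cast h
          refine h4.mono_exp ?_
          rw [hfn, hn]
          nlinarith [mul_nonneg ha0 (sub_nonneg.mpr he2), mul_nonneg (show (0:ℝ) ≤ e by linarith) (sub_nonneg.mpr he4')]

lemma zero_or_one (h2 : Nat.card F = 2) (c : F) : c = 0 ∨ c = 1 := by
  classical
  have : Fintype F := Fintype.ofFinite _
  rw [Nat.card_eq_fintype_card] at h2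
  by_contra hcon
  push Not at hcon
  have h1 : ({0, 1, c} : Finset F).card ≤ 2 := by rw [← h2]; exact Finset.card_le_univ _
  rw [Finset.card_eq_three.mpr ⟨0, 1, c, zero_ne_one, fun h => hcon.1 h.symm, fun h => hcon.2 h.symm, rfl⟩] at h1
  omega

lemma eig_zero (g : V ≃ₗ[F] V) : eig g 0 = ⊥ := by
  rw [eq_bot_iff]
  intro v hv
  rw [mem_eig, zero_smul] at hv
  rw [Submodule.mem_bot]
  exact g.injective (by rw [hv, map_zero])

lemma noeig_of_one (h2 : Nat.card F = 2) {g : V ≃ₗ[F] V} (h : eig g 1 = ⊥) : ∀ c, eig g c = ⊥ := by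
  intro c
  rcases zero_or_one h2 c with rfl | rfl
  · exact eig_zero g
  · exact h

lemma noeig_compl (h2 : Nat.card F = 2) {g : V ≃ₗ[F] V} {R : Submodule F V} (hR : Inv g R) (hc : IsCompl (eig g 1) R) :
    ∀ c, eig (res g R hR) c = ⊥ := by
  apply noeig_of_one h2
  rw [eq_bot_iff]
  intro v hv
  have h1 : v.1 ∈ eig g 1 := by
    rw [mem_eig] at hv ⊢
    exact congrArg Subtype.val hv
  have h3 : v.1 ∈ eig g 1 ⊓ R := ⟨h1, v.2⟩
  rw [hc.inf_eq_bot, Submodule.mem_bot] at h3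
  rw [Submodule.mem_bot]
  exact Subtype.ext h3

lemma small_two (h2 : Nat.card F = 2) {N : ℕ} (hodd : Odd N) (hN : (N : F) ≠ 0) (hn3 : Module.finrank F V ≠ 3)
      (g : V ≃ₗ[F] V) (hg : g ^ N = 1) (he : ∀ c, 2 * Module.finrank F (eig g c) ≤ Module.finrank F V) :
      PB N g ((Nat.card F : ℝ) ^ (-((Module.finrank F V : ℝ) * (Module.finrank F V - 2) / 4))) := by
  have : Module.Finite F V := Module.Finite.of_finite
  by_cases h1 : eig g 1 = ⊥
  · have := noeig_two h2 hodd hN _ V rfl g hg (noeig_of_one h2 h1)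
    rwa [ff, if_neg hn3] at this
  have hm1 : Module.finrank F (eig g 1) ≠ 0 := fun h => h1 (Submodule.finrank_eq_zero.mp h)
  obtain ⟨R, hR, hc⟩ := exists_compl hN hg _ (Inv_eig g 1)
  have hfr := finrank_compl hc
  have h3 := noeig_two h2 hodd hN _ R rfl (res g R hR) (res_pow_one hg R hR) (noeig_compl h2 hR hc)
  have h4 := PB_eig hN 1 hR hc h3
  refine h4.mono_exp ?_
  have hle := he 1
  rw [← hfr] at hle ⊢
  set m := Module.finrank F (eig g 1)
  set j := Module.finrank F R
  have hmj : (m : ℝ) ≤ j := by exact_mod_cast (by omega : m ≤ j)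
  have hm0 : (1 : ℝ) ≤ m := by exact_mod_cast (by omega : 1 ≤ m)
  push_cast
  by_cases hj : j = 3
  · have : ff j = 0 := by rw [ff, if_pos hj]
    rw [this]
    rw [hj] at hmj ⊢
    push_cast at hmj ⊢
    nlinarith
  · have : ff j = (j : ℝ) * (j - 2) / 4 := by rw [ff, if_neg hj]
    rw [this]
    nlinarith

lemma card_dvd {N : ℕ} {H : Subgroup (V ≃ₗ[F] V)} : Nat.card H ∣ Nat.card (V ≃ₗ[F] V) :=
  Subgroup.card_subgroup_dvd_card H

lemma Ex_odd {N : ℕ} (hodd : Odd N) {H : Subgroup (V ≃ₗ[F] V)} (hH : Ex N H) : Odd (Nat.card H) := by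
  rw [← Nat.not_even_iff_odd, even_iff_two_dvd]
  intro h
  have : Fact (Nat.Prime 2) := ⟨Nat.prime_two⟩
  obtain ⟨x, hx⟩ := exists_prime_orderOf_dvd_card' (G := H) 2 h
  have h1 : x ^ N = 1 := Subtype.ext (hH x.1 x.2)
  have h3 := orderOf_dvd_of_pow_eq_one h1
  rw [hx] at h3
  exact (Nat.not_even_iff_odd.mpr hodd) (even_iff_two_dvd.mpr h3)

lemma card1 (h2 : Nat.card F = 2) (hV : Module.finrank F V = 1) : Nat.card (V ≃ₗ[F] V) = 1 := by
  rw [card_GLV, hV, h2]; decide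
lemma card2 (h2 : Nat.card F = 2) (hV : Module.finrank F V = 2) : Nat.card (V ≃ₗ[F] V) = 6 := by
  rw [card_GLV, hV, h2]; decide
lemma card3 (h2 : Nat.card F = 2) (hV : Module.finrank F V = 3) : Nat.card (V ≃ₗ[F] V) = 168 := by
  rw [card_GLV, hV, h2]; decide
lemma card4 (h2 : Nat.card F = 2) (hV : Module.finrank F V = 4) : Nat.card (V ≃ₗ[F] V) = 20160 := by
  rw [card_GLV, hV, h2]; decide

lemma det_two (h2 : Nat.card F = 2) (x : V ≃ₗ[F] V) : LinearEquiv.det x = 1 := by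
  rcases zero_or_one h2 ((LinearEquiv.det x : Fˣ) : F) with h | h
  · exact absurd h (LinearEquiv.det x).ne_zero
  · exact Units.ext h

lemma order5_trivial (h2 : Nat.card F = 2) (h3 : Module.finrank F V ≤ 3) (h1 : 1 ≤ Module.finrank F V)
    {g : V ≃ₗ[F] V} (hg : g ^ 5 = 1) : g = 1 := by
  have h5 := orderOf_dvd_of_pow_eq_one hg
  have h6 := orderOf_dvd_natCard g
  rw [← orderOf_eq_one_iff]
  rcases (Nat.dvd_prime (by norm_num)).mp h5 with h | h
  · exact h
  · exfalso
    rw [h] at h6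
    rcases (by omega : Module.finrank F V = 1 ∨ Module.finrank F V = 2 ∨ Module.finrank F V = 3) with h | h | h
    · rw [card1 h2 h] at h6; omega
    · rw [card2 h2 h] at h6; omega
    · rw [card3 h2 h] at h6; omega

lemma order5_irr (h2 : Nat.card F = 2) (hV : Module.finrank F V = 4)
    {g : V ≃ₗ[F] V} (hg : g ^ 5 = 1) (hg1 : g ≠ 1) : Irr g := by
  have : Module.Finite F V := Module.Finite.of_finite
  have h5 : ((5 : ℕ) : F) ≠ 0 := by
    rcases zero_or_one h2 ((2 : ℕ) : F) with h | h
    · push_cast at h ⊢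
      rw [show (5 : F) = 2 * 2 + 1 by norm_num, h]; simp
    · exfalso
      push_cast at h
      have : (1 : F) = 0 := by linear_combination h
      exact one_ne_zero this
  intro W hW
  by_contra hcon
  push Not at hcon
  obtain ⟨W', hW', hc⟩ := exists_compl h5 hg W hW
  have hfr := finrank_compl hc
  have hW0 : Module.finrank F W ≠ 0 := fun h => hcon.1 (Submodule.finrank_eq_zero.mp h)
  have hW0' : Module.finrank F W' ≠ 0 := by
    intro h
    have h7 := Submodule.finrank_eq_zero.mp h
    have := hc.sup_eq_top
    rw [h7, sup_bot_eq] at this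
    exact hcon.2 this
  have e1 := order5_trivial h2 (by omega) (by omega) (res_pow_one hg W hW)
  have e2 := order5_trivial h2 (by omega) (by omega) (res_pow_one hg W' hW')
  apply hg1
  ext v
  have hv : v ∈ W ⊔ W' := by rw [hc.sup_eq_top]; trivial
  obtain ⟨w, hw, w', hw', rfl⟩ := Submodule.mem_sup.mp hv
  have f1 : g w = w := congrArg Subtype.val (LinearEquiv.congr_fun e1 (⟨w, hw⟩ : W))
  have f2 : g w' = w' := congrArg Subtype.val (LinearEquiv.congr_fun e2 (⟨w', hw'⟩ : W'))
  rw [map_add, f1, f2]; rfl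

/-- abstract part: a group of order 315 has a 5-element with centralizer of order divisible by 45 -/
lemma group315 {Γ : Type} [Group Γ] [Finite Γ] (h : Nat.card Γ = 315) :
    ∃ g : Γ, orderOf g = 5 ∧ 9 ∣ Nat.card (Subgroup.centralizer {g}) ∧ 5 ∣ Nat.card (Subgroup.centralizer {g}) := by
  classical
  have : Fact (Nat.Prime 3) := ⟨Nat.prime_three⟩
  have : Fact (Nat.Prime 5) := ⟨Nat.prime_five⟩
  obtain ⟨T⟩ : Nonempty (Sylow 3 Γ) := inferInstance
  have hT : Nat.card T = 9 := by
    rw [T.card_eq_multiplicity, h]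
    have : Nat.factorization 315 3 = 2 := by
      have h0 : (315 : ℕ) = 3 ^ 2 * 35 := by norm_num
      rw [h0, Nat.factorization_mul (by norm_num) (by norm_num), Nat.Prime.factorization_pow Nat.prime_three]
      simp [Nat.factorization_eq_zero_of_not_dvd]
    rw [this]; norm_num
  have h1 := card_sylow_modEq_one 3 Γ
  have h2 := T.card_dvd_index
  have h3 := T.card_eq_index_normalizer
  have h4 : (T : Subgroup Γ).index = 35 := by
    have := Subgroup.card_mul_index (T : Subgroup Γ)
    rw [h] at this
    have hT' : Nat.card (T : Subgroup Γ) = 9 := hT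
    rw [hT'] at this
    omega
  rw [h4] at h2
  have h5 := Subgroup.card_mul_index (Subgroup.normalizer (T : Set Γ))
  rw [← h3, h] at h5
  have h6 : 5 ∣ Nat.card (Subgroup.normalizer (T : Set Γ)) := by
    have hmem : Nat.card (Sylow 3 Γ) ∈ Nat.divisors 35 := Nat.mem_divisors.mpr ⟨h2, by norm_num⟩
    have hd : Nat.divisors 35 = {1, 5, 7, 35} := by decide
    rw [hd] at hmem
    simp only [Finset.mem_insert, Finset.mem_singleton] at hmem
    unfold Nat.ModEq at h1
    rcases hmem with e | e | e | e <;> rw [e] at h1 h5 <;> omega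
  obtain ⟨⟨g, hgN⟩, hg⟩ := exists_prime_orderOf_dvd_card' (G := Subgroup.normalizer (T : Set Γ)) 5 h6
  have hg5 : orderOf g = 5 := by rw [← hg]; exact (Subgroup.orderOf_mk g hgN).symm
  refine ⟨g, hg5, ?_, ?_⟩
  · have hN : ∀ t, t ∈ T → g * t * g⁻¹ ∈ T := fun t ht => (Subgroup.mem_normalizer_iff.mp hgN t).mp ht
    have : Fintype T := Fintype.ofFinite _
    let f : Function.End T := fun t => ⟨g * t.1 * g⁻¹, hN t.1 t.2⟩
    have hfk : ∀ k : ℕ, ∀ t : T, ((f ^ k) t).1 = g ^ k * t.1 * (g ^ k)⁻¹ := by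
      intro k
      induction k with
      | zero => intro t; simp; rfl
      | succ k ih =>
        intro t
        rw [pow_succ']
        change g * ((f ^ k) t).1 * g⁻¹ = _
        rw [ih, pow_succ']; group
    have hf : f ^ 5 ^ 1 = 1 := by
      funext t
      apply Subtype.ext
      rw [hfk]
      have : g ^ 5 ^ 1 = 1 := by rw [pow_one, ← hg5, pow_orderOf_eq_one]
      rw [this]; simp; rfl
    have h7 := Equiv.Perm.card_fixedPoints_modEq (p := 5) (n := 1) hf
    let K : Subgroup Γ := (T : Subgroup Γ) ⊓ Subgroup.centralizer {g}
    have hK : Nat.card K = Fintype.card f.fixedPoints := by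
      rw [← Nat.card_eq_fintype_card]
      have hiff : ∀ t : T, t ∈ f.fixedPoints ↔ t.1 ∈ Subgroup.centralizer {g} := by
        intro t
        rw [Function.mem_fixedPoints, Subgroup.mem_centralizer_singleton_iff]
        constructor
        · intro h
          have : g * t.1 * g⁻¹ = t.1 := congrArg Subtype.val h
          exact mul_inv_eq_iff_eq_mul.mp this |>.symm
        · intro h
          exact Subtype.ext (mul_inv_eq_iff_eq_mul.mpr h.symm)
      refine Nat.card_congr ⟨fun t => ⟨⟨t.1, t.2.1⟩, (hiff _).mpr t.2.2⟩, fun t => ⟨t.1.1, t.1.2, (hiff _).mp t.2⟩, fun t => rfl, fun t => rfl⟩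
    rw [← hK, ← Nat.card_eq_fintype_card, hT] at h7
    have h8 : Nat.card K ∣ 9 := by
      have : Nat.card K ∣ Nat.card (T : Subgroup Γ) := Subgroup.card_dvd_of_le inf_le_left
      have hT' : Nat.card (T : Subgroup Γ) = 9 := hT
      rwa [hT'] at this
    have h9 : Nat.card K = 9 := by
      have hmem : Nat.card K ∈ Nat.divisors 9 := Nat.mem_divisors.mpr ⟨h8, by norm_num⟩
      have hd : Nat.divisors 9 = {1, 3, 9} := by decide
      rw [hd] at hmem
      simp only [Finset.mem_insert, Finset.mem_singleton] at hmem
      unfold Nat.ModEq at h7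
      rcases hmem with e | e | e <;> rw [e] at h7 <;> omega
    rw [← h9]
    exact Subgroup.card_dvd_of_le inf_le_right
  · have : Nat.card (Subgroup.zpowers g) ∣ Nat.card (Subgroup.centralizer {g}) := by
      apply Subgroup.card_dvd_of_le
      rw [Subgroup.zpowers_le, Subgroup.mem_centralizer_singleton_iff]
    rwa [Nat.card_zpowers, hg5] at this

lemma order_four (h2 : Nat.card F = 2) (hV : Module.finrank F V = 4) {N : ℕ} (hodd : Odd N)
    {H : Subgroup (V ≃ₗ[F] V)} (hH : Ex N H) : Nat.card H ≤ 105 := by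
  have hnt : Nontrivial V := Module.nontrivial_of_finrank_pos (R := F) (by omega)
  have h1 : Nat.card H ∣ 20160 := by rw [← card4 h2 hV]; exact Subgroup.card_subgroup_dvd_card H
  have h3 := Ex_odd hodd hH
  have h4 : Nat.card H ∣ 315 := by
    have : (20160 : ℕ) = 2 ^ 6 * 315 := by norm_num
    rw [this] at h1
    exact Nat.Coprime.dvd_of_dvd_mul_left (Nat.Coprime.pow_right 6 (Nat.coprime_two_right.mpr h3)) h1
  obtain ⟨k, hk⟩ := h4
  by_cases hk1 : k = 1
  · exfalso
    rw [hk1, mul_one] at hk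
    obtain ⟨g, hg, h9, h5⟩ := group315 hk.symm
    have hg' : orderOf g.1 = 5 := by rw [Subgroup.orderOf_coe, hg]
    have hirr : Irr g.1 := order5_irr h2 hV (by rw [← hg', pow_orderOf_eq_one]) (by
      intro h; rw [h, orderOf_one] at hg'; omega)
    have h6 := cent_SL hirr
    rw [h2, hV] at h6
    have h7 : Nat.card (Subgroup.centralizer {g}) ≤ Nat.card {c : V ≃ₗ[F] V // c * g.1 = g.1 * c ∧ LinearEquiv.det c = 1} := by
      refine Nat.card_le_card_of_injective (fun c => ⟨c.1.1, ?_, det_two h2 _⟩) ?_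
      · have := Subgroup.mem_centralizer_singleton_iff.mp c.2
        exact congrArg Subtype.val this
      · intro a b hab
        exact Subtype.ext (Subtype.ext (by simpa using hab))
    have h8 : 45 ∣ Nat.card (Subgroup.centralizer {g}) := by
      have : (45 : ℕ) = 9 * 5 := by norm_num
      rw [this]
      exact Nat.Coprime.mul_dvd_of_dvd_of_dvd (by norm_num) h9 h5
    have := Nat.le_of_dvd Nat.card_pos h8
    omega
  · have hk0 : Odd k := by
      have : Odd (Nat.card H * k) := by rw [← hk]; decide
      exact (Nat.odd_mul.mp this).2
    obtain ⟨r, hr⟩ := hk0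
    have : 3 ≤ k := by omega
    nlinarith

lemma order_two (h2 : Nat.card F = 2) {N : ℕ} (hodd : Odd N) (hN : (N : F) ≠ 0) (n : ℕ) (hn : 4 ≤ n) :
    ∀ (V : Type) [AddCommGroup V] [Module F V] [Finite V] (hV : Module.finrank F V = n)
      (H : Subgroup (V ≃ₗ[F] V)) (hH : Ex N H),
      (Nat.card H : ℝ) * ((Nat.card F : ℝ) ^ (-((n : ℝ) * (n - 2) / 4))) ^ 3 ≤ 5 / 3 := by
  induction n, hn using Nat.le_induction with
  | base =>
    intro V _ _ _ hV H hH
    have h1 : (Nat.card H : ℝ) ≤ 105 := by exact_mod_cast order_four h2 hV hodd hH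
    rw [h2]
    have h3 : (((2 : ℕ) : ℝ) ^ (-(((4 : ℕ) : ℝ) * ((4 : ℕ) - 2) / 4))) = 1 / 4 := by
      rw [show (-(((4 : ℕ) : ℝ) * ((4 : ℕ) - 2) / 4)) = ((-2 : ℤ) : ℝ) by norm_num, Real.rpow_intCast]
      norm_num
    rw [h3]
    linarith
  | succ n hn ih =>
    intro V _ _ _ hV H hH
    have : Module.Finite F V := Module.Finite.of_finite
    have hnt : Nontrivial V := Module.nontrivial_of_finrank_pos (R := F) (by omega)
    obtain ⟨v, hv⟩ := exists_ne (0 : V)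
    obtain ⟨B, hB⟩ := Submodule.exists_isCompl (Submodule.span F {v})
    have hfr := finrank_compl hB
    rw [finrank_span_singleton hv, hV] at hfr
    obtain ⟨S', hS', hcard, -⟩ := stab_embed hN (S := st H v) (fun h hh => hH h hh.1) hB (by
      intro h hh w hw
      obtain ⟨c, rfl⟩ := Submodule.mem_span_singleton.mp hw
      rw [map_smul, hh.2])
    have h3 := ih B (by omega) S' hS'
    have h4 := orbit_bound H hv
    rw [hV] at h4
    have h5 : (Nat.card H : ℝ) ≤ (Nat.card F : ℝ) ^ ((n : ℝ) + 1) * Nat.card S' := by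
      have : Nat.card H ≤ Nat.card F ^ (n + 1) * Nat.card S' :=
        h4.trans (Nat.mul_le_mul (Nat.sub_le _ _) hcard)
      rw [show ((n : ℝ) + 1) = ((n + 1 : ℕ) : ℝ) by push_cast; rfl, Real.rpow_natCast]
      exact_mod_cast this
    have hq0 : (0 : ℝ) < Nat.card F := q_pos
    have hq2 := q_two (F := F)
    have hn' : (4 : ℝ) ≤ n := by exact_mod_cast hn
    have e2 : ((Nat.card F : ℝ) ^ (-(((n + 1 : ℕ) : ℝ) * ((n + 1 : ℕ) - 2) / 4))) ^ 3 =
        ((Nat.card F : ℝ) ^ (-((n : ℝ) * (n - 2) / 4))) ^ 3 * (Nat.card F : ℝ) ^ (-(3 * (2 * (n : ℝ) - 1) / 4)) := by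
      rw [← Real.rpow_natCast, ← Real.rpow_mul hq0.le, ← Real.rpow_natCast, ← Real.rpow_mul hq0.le, ← Real.rpow_add hq0]
      congr 1; push_cast; ring
    have e4 : (Nat.card F : ℝ) ^ ((n : ℝ) + 1) * (Nat.card F : ℝ) ^ (-(3 * (2 * (n : ℝ) - 1) / 4)) ≤ 1 := by
      rw [← Real.rpow_add hq0]
      exact Real.rpow_le_one_of_one_le_of_nonpos (by linarith) (by linarith)
    rw [e2]
    calc (Nat.card H : ℝ) * _ ≤ ((Nat.card F : ℝ) ^ ((n : ℝ) + 1) * Nat.card S') * _ := by gcongr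
      _ = ((Nat.card F : ℝ) ^ ((n : ℝ) + 1) * (Nat.card F : ℝ) ^ (-(3 * (2 * (n : ℝ) - 1) / 4))) *
          (Nat.card S' * ((Nat.card F : ℝ) ^ (-((n : ℝ) * (n - 2) / 4))) ^ 3) := by ring
      _ ≤ 1 * (5 / 3) := by gcongr
      _ = 5 / 3 := by norm_num

theorem main_two (h2 : Nat.card F = 2) {N : ℕ} (hodd : Odd N) (hN : (N : F) ≠ 0) (hn : 4 ≤ Module.finrank F V)
    {H : Subgroup (V ≃ₗ[F] V)} (hH : Ex N H) (hZ : ∀ z ∈ Zs F V, z ^ N = 1 → z ∈ H) :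
    ∃ x y z : V ≃ₗ[F] V, LinearEquiv.det x = 1 ∧ LinearEquiv.det y = 1 ∧ LinearEquiv.det z = 1 ∧
      ∀ g ∈ H, x * g * x⁻¹ ∈ H → y * g * y⁻¹ ∈ H → z * g * z⁻¹ ∈ H → g ∈ Zs F V := by
  refine union_bound hodd hN (by omega) hH hZ (κ := (Nat.card H : ℝ))
    (σ := (Module.finrank F V : ℝ) * (Module.finrank F V - 2) / 4) ?_ ?_ ?_
  · have : 1 ≤ Nat.card (H ⊓ Zs F V : Subgroup (V ≃ₗ[F] V)) := Nat.card_pos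
    have h1 : (1 : ℝ) ≤ Nat.card (H ⊓ Zs F V : Subgroup (V ≃ₗ[F] V)) := by exact_mod_cast this
    have h3 : (0 : ℝ) ≤ Nat.card H := by positivity
    nlinarith
  · intro g hg _ he
    exact small_two h2 hodd hN (by omega) g (hH g hg) he
  · exact order_two h2 hodd hN _ hn V rfl H hH

end two
end HP

namespace HP
set_option linter.unusedVariables false
set_option linter.unusedSectionVars false
set_option linter.unusedSimpArgs false
section three
variable {F : Type} [Field F] [Finite F] {V : Type} [AddCommGroup V] [Module F V] [Finite V]

/-- an element of order dividing 3 on a 3-space over F_2 fixes a nonzero vector -/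
lemma order3_fix (h2 : Nat.card F = 2) (hV : Module.finrank F V = 3) {g : V ≃ₗ[F] V} (hg : g ^ 3 = 1) :
    eig g 1 ≠ ⊥ := by
  classical
  intro hbot
  have : Fact (Nat.Prime 3) := ⟨Nat.prime_three⟩
  have : Fintype {w : V // w ≠ 0} := Fintype.ofFinite _
  let f : Function.End {w : V // w ≠ 0} := fun w => ⟨g w.1, fun h => w.2 (g.injective (by rw [h, map_zero]))⟩
  have hf : f ^ 3 ^ 1 = 1 := by
    funext w
    apply Subtype.ext
    rw [pow_one]
    exact LinearEquiv.congr_fun hg w.1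
  have h := Equiv.Perm.card_fixedPoints_modEq (p := 3) (n := 1) hf
  have hc := card_ne_zero (F := F) (V := V)
  rw [h2, hV, Nat.card_eq_fintype_card] at hc
  have h0 : Fintype.card f.fixedPoints = 0 := by
    rw [Fintype.card_eq_zero_iff]
    constructor
    rintro ⟨w, hw⟩
    have h1 : g w.1 = w.1 := congrArg Subtype.val hw
    have h3 : w.1 ∈ eig g 1 := by rw [mem_eig, one_smul]; exact h1
    rw [hbot, Submodule.mem_bot] at h3
    exact w.2 h3
  rw [h0, hc] at h
  unfold Nat.ModEq at h
  omega

lemma three_irr (h2 : Nat.card F = 2) (hV : Module.finrank F V = 3) {N : ℕ} (hodd : Odd N) (hN : (N : F) ≠ 0)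
    {g : V ≃ₗ[F] V} (hg : g ^ N = 1) (he : ∀ c, eig g c = ⊥) : PB N g (1 / 4) := by
  have : Module.Finite F V := Module.Finite.of_finite
  have hnt : Nontrivial V := Module.nontrivial_of_finrank_pos (R := F) (by omega)
  have hirr : Irr g := by
    intro W hW
    by_cases hW0 : W = ⊥
    · left; exact hW0
    right
    obtain ⟨W', hW', hcW⟩ := exists_compl hN hg W hW
    have h5 := two_le_of_noeig he hW hW0
    have h6 := finrank_compl hcW
    have h7 : W' = ⊥ := by
      by_contra hne
      have := two_le_of_noeig he hW' hne
      omega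
    have := hcW.sup_eq_top
    rwa [h7, sup_bot_eq] at this
  have hcent := cent_SL hirr
  rw [h2, hV] at hcent
  norm_num at hcent
  -- order of g
  have ho : orderOf g = 7 := by
    have h1 : orderOf g ∣ 168 := by rw [← card3 h2 hV]; exact orderOf_dvd_natCard g
    have h3 : Odd (orderOf g) := Odd.of_dvd_nat hodd (orderOf_dvd_of_pow_eq_one hg)
    have h4 : orderOf g ∣ 21 := by
      rw [show (168 : ℕ) = 2 ^ 3 * 21 by norm_num] at h1
      exact Nat.Coprime.dvd_of_dvd_mul_left (Nat.Coprime.pow_right 3 (Nat.coprime_two_right.mpr h3)) h1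
    have hle : orderOf g ≤ 7 := by
      rw [← Nat.card_zpowers]
      refine le_trans ?_ hcent
      refine Nat.card_le_card_of_injective (fun c => ⟨c.1, ?_, ?_⟩) ?_
      · obtain ⟨k, hk⟩ := Subgroup.mem_zpowers_iff.mp c.2
        rw [← hk]; exact ((Commute.refl g).zpow_left k).eq
      · exact det_two h2 _
      · intro a b hab
        exact Subtype.ext (by simpa using hab)
    have hmem : orderOf g ∈ Nat.divisors 21 := Nat.mem_divisors.mpr ⟨h4, by norm_num⟩
    rw [show Nat.divisors 21 = {1, 3, 7, 21} by decide] at hmem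
    simp only [Finset.mem_insert, Finset.mem_singleton] at hmem
    have hno : ¬ orderOf g ∣ 3 := fun h => order3_fix h2 hV (orderOf_dvd_iff_pow_eq_one.mp h) (he 1)
    rcases hmem with h | h | h | h
    · exact absurd (by rw [h]; norm_num) hno
    · exact absurd (by rw [h]) hno
    · exact h
    · omega
  intro H hH
  have hHc : Nat.card H ≤ 21 := by
    have := order2 hodd hN 3 (by norm_num) V hV H hH (fun h _ => det_two h2 h)
    rw [kb_succ (by norm_num), kb_two, s2_two h2, h2] at this
    simpa using this
  have hSL : SLc F V = 168 := by
    rw [← card3 h2 hV]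
    unfold SLc
    exact Nat.card_congr (Equiv.subtypeUnivEquiv (det_two h2))
  have hconj : ∀ x : V ≃ₗ[F] V, orderOf (x * g * x⁻¹) = 7 := by
    intro x
    rw [← ho, ← MulAut.conj_apply]
    exact orderOf_injective (MulAut.conj x).toMonoidHom (MulAut.conj x).injective g
  have hcount : Nat.card {h : V ≃ₗ[F] V // h ∈ H ∧ ∃ x : V ≃ₗ[F] V, LinearEquiv.det x = 1 ∧ x * g * x⁻¹ = h} ≤ 6 := by
    rcases isEmpty_or_nonempty {h : V ≃ₗ[F] V // h ∈ H ∧ ∃ x : V ≃ₗ[F] V, LinearEquiv.det x = 1 ∧ x * g * x⁻¹ = h} with hE | ⟨⟨h0, hh0, x0, -, hx0⟩⟩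
    · rw [Nat.card_of_isEmpty]; norm_num
    have hp : Fact (Nat.Prime 7) := ⟨by norm_num⟩
    have o0 : orderOf h0 = 7 := by rw [← hx0]; exact hconj x0
    have hin : ∀ h ∈ H, orderOf h = 7 → h ∈ Subgroup.zpowers h0 := by
      intro h hh oh
      by_contra hnot
      have hdis : Disjoint (Subgroup.zpowers h0) (Subgroup.zpowers h) := by
        rw [disjoint_iff]
        have hd : Nat.card (Subgroup.zpowers h0 ⊓ Subgroup.zpowers h : Subgroup (V ≃ₗ[F] V)) ∣ 7 := by
          rw [← oh, ← Nat.card_zpowers]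
          exact Subgroup.card_dvd_of_le inf_le_right
        rcases (Nat.dvd_prime hp.out).mp hd with h7 | h7
        · exact Subgroup.card_eq_one.mp h7
        · exfalso
          have heq : Subgroup.zpowers h0 ⊓ Subgroup.zpowers h = Subgroup.zpowers h :=
            Subgroup.eq_of_le_of_card_ge inf_le_right (by rw [h7, Nat.card_zpowers, oh])
          apply hnot
          have : h ∈ Subgroup.zpowers h0 ⊓ Subgroup.zpowers h := by rw [heq]; exact Subgroup.mem_zpowers h
          exact this.1
      have hinj := Subgroup.mul_injective_of_disjoint hdis
      have : Nat.card (Subgroup.zpowers h0 × Subgroup.zpowers h) ≤ Nat.card H := by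
        refine Nat.card_le_card_of_injective (fun p => ⟨p.1.1 * p.2.1, H.mul_mem ((Subgroup.zpowers_le.mpr hh0) p.1.2) ((Subgroup.zpowers_le.mpr hh) p.2.2)⟩) ?_
        intro a b hab
        exact hinj (congrArg Subtype.val hab)
      rw [Nat.card_prod, Nat.card_zpowers, Nat.card_zpowers, o0, oh] at this
      omega
    have h8 : Nat.card (Option {h : V ≃ₗ[F] V // h ∈ H ∧ ∃ x : V ≃ₗ[F] V, LinearEquiv.det x = 1 ∧ x * g * x⁻¹ = h}) ≤ Nat.card (Subgroup.zpowers h0) := by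
      have hne : ∀ h : {h : V ≃ₗ[F] V // h ∈ H ∧ ∃ x : V ≃ₗ[F] V, LinearEquiv.det x = 1 ∧ x * g * x⁻¹ = h}, orderOf h.1 = 7 := by
        rintro ⟨h, hh, x, -, hx⟩
        simp only
        rw [← hx]; exact hconj x
      refine Nat.card_le_card_of_injective (fun o => match o with
        | none => 1
        | some h => ⟨h.1, hin h.1 h.2.1 (hne h)⟩) ?_
      rintro (_ | a) (_ | b) hab
      · rfl
      · exfalso
        have h9 : (1 : V ≃ₗ[F] V) = b.1 := congrArg Subtype.val hab
        have := hne b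
        rw [← h9, orderOf_one] at this
        omega
      · exfalso
        have h9 : a.1 = (1 : V ≃ₗ[F] V) := congrArg Subtype.val hab
        have := hne a
        rw [h9, orderOf_one] at this
        omega
      · have h9 : a.1 = b.1 := congrArg (fun t : Subgroup.zpowers h0 => t.1) hab
        rw [Subtype.ext h9]
    rw [Finite.card_option, Nat.card_zpowers, o0] at h8
    omega
  have hfin := Pc_le g H
  have h42 : Pc g H ≤ 42 := hfin.trans (by nlinarith)
  rw [hSL]
  have : (Pc g H : ℝ) ≤ 42 := by exact_mod_cast h42
  norm_num
  linarith

theorem main_three (h2 : Nat.card F = 2) {N : ℕ} (hodd : Odd N) (hN : (N : F) ≠ 0) (hV : Module.finrank F V = 3)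
    {H : Subgroup (V ≃ₗ[F] V)} (hH : Ex N H) (hZ : ∀ z ∈ Zs F V, z ^ N = 1 → z ∈ H) :
    ∃ x y z : V ≃ₗ[F] V, LinearEquiv.det x = 1 ∧ LinearEquiv.det y = 1 ∧ LinearEquiv.det z = 1 ∧
      ∀ g ∈ H, x * g * x⁻¹ ∈ H → y * g * y⁻¹ ∈ H → z * g * z⁻¹ ∈ H → g ∈ Zs F V := by
  have : Module.Finite F V := Module.Finite.of_finite
  have h14 : (Nat.card F : ℝ) ^ (-(2 : ℝ)) = 1 / 4 := by
    rw [h2, show (-(2 : ℝ)) = ((-2 : ℤ) : ℝ) by norm_num, Real.rpow_intCast]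
    norm_num
  refine union_bound hodd hN (by omega) hH hZ (κ := 21) (σ := 2) ?_ ?_ ?_
  · have h1 := order1' hodd hN (by omega) hH
    rw [hV, kb_succ (by norm_num), kb_two, s2_two h2, h2] at h1
    exact_mod_cast h1
  · intro g hg _ he
    by_cases hb : eig g 1 = ⊥
    · rw [h14]
      exact three_irr h2 hV hodd hN (hH g hg) (noeig_of_one h2 hb)
    · have hm1 : Module.finrank F (eig g 1) ≠ 0 := fun h => hb (Submodule.finrank_eq_zero.mp h)
      have hle := he 1
      rw [hV] at hle
      obtain ⟨R, hR, hc⟩ := exists_compl hN (hH g hg) _ (Inv_eig g 1)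
      have hfr := finrank_compl hc
      have h1 := PB_eig hN 1 hR hc (x := 0) (by rw [neg_zero, Real.rpow_zero]; exact PB_one N _)
      refine h1.mono_exp ?_
      have e1 : Module.finrank F (eig g 1) = 1 := by omega
      have e2 : Module.finrank F R = 2 := by omega
      rw [e1, e2]; norm_num
  · rw [h14]; norm_num

/-- removing the hypothesis about scalars, all cases -/
theorem main_all {N : ℕ} (hodd : Odd N) (hN : (N : F) ≠ 0) (hn : 2 ≤ Module.finrank F V)
    (hex : ¬ (Nat.card F = 2 ∧ Module.finrank F V = 2))
    {H : Subgroup (V ≃ₗ[F] V)} (hH : Ex N H) :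
    ∃ x y z : V ≃ₗ[F] V, LinearEquiv.det x = 1 ∧ LinearEquiv.det y = 1 ∧ LinearEquiv.det z = 1 ∧
      ∀ g ∈ H, x * g * x⁻¹ ∈ H → y * g * y⁻¹ ∈ H → z * g * z⁻¹ ∈ H → g ∈ Zs F V := by
  let H' : Subgroup (V ≃ₗ[F] V) :=
    { carrier := {k | ∃ h ∈ H, ∃ z ∈ Zs F V, z ^ N = 1 ∧ k = h * z}
      one_mem' := ⟨1, H.one_mem, 1, Subgroup.one_mem _, one_pow _, by simp⟩
      mul_mem' := by
        rintro _ _ ⟨h, hh, z, hz, hzN, rfl⟩ ⟨h', hh', z', hz', hzN', rfl⟩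
        refine ⟨h * h', H.mul_mem hh hh', z * z', Subgroup.mul_mem _ hz hz', ?_, ?_⟩
        · rw [(show Commute z z' from Zs_comm hz z').mul_pow, hzN, hzN', one_mul]
        · calc h * z * (h' * z') = h * (z * h') * z' := by group
            _ = h * (h' * z) * z' := by rw [Zs_comm hz h']
            _ = _ := by group
      inv_mem' := by
        rintro _ ⟨h, hh, z, hz, hzN, rfl⟩
        refine ⟨h⁻¹, H.inv_mem hh, z⁻¹, Subgroup.inv_mem _ hz, by rw [inv_pow, hzN, inv_one], ?_⟩
        rw [_root_.mul_inv_rev, Zs_comm (Subgroup.inv_mem _ hz)] }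
  have hle : ∀ g ∈ H, g ∈ H' := fun g hg => ⟨g, hg, 1, Subgroup.one_mem _, one_pow _, by simp⟩
  have hEx : Ex N H' := by
    rintro _ ⟨h, hh, z, hz, hzN, rfl⟩
    rw [(show Commute h z from (Zs_comm hz h).symm).mul_pow, hzN, hH h hh, one_mul]
  have hZ : ∀ z ∈ Zs F V, z ^ N = 1 → z ∈ H' := fun z hz hzN => ⟨1, H.one_mem, z, hz, hzN, by simp⟩
  have hq2 : 2 ≤ Nat.card F := Finite.one_lt_card
  have key : ∃ x y z : V ≃ₗ[F] V, LinearEquiv.det x = 1 ∧ LinearEquiv.det y = 1 ∧ LinearEquiv.det z = 1 ∧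
      ∀ g ∈ H', x * g * x⁻¹ ∈ H' → y * g * y⁻¹ ∈ H' → z * g * z⁻¹ ∈ H' → g ∈ Zs F V := by
    rcases Nat.lt_or_ge (Nat.card F) 3 with h3 | h3
    · have h2 : Nat.card F = 2 := by omega
      rcases Nat.lt_or_ge (Module.finrank F V) 4 with h4 | h4
      · have hV : Module.finrank F V = 3 := by
          have : Module.finrank F V ≠ 2 := fun h => hex ⟨h2, h⟩
          omega
        exact main_three h2 hodd hN hV hEx hZ
      · exact main_two h2 hodd hN h4 hEx hZ
    · exact main_ge3 h3 hodd hN hn hEx hZ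
  obtain ⟨x, y, z, hx, hy, hz, h⟩ := key
  exact ⟨x, y, z, hx, hy, hz, fun g hg h1 h2 h3 => h g (hle _ hg) (hle _ h1) (hle _ h2) (hle _ h3)⟩

end three
end HP

theorem stmt1 (p f q n : ℕ) (hp : p.Prime) (hf : 1 ≤ f) (hq : q = p ^ f)
    (F : Type) [Field F] [Fintype F] (hcard : Fintype.card F = q)
    (hn : 2 ≤ n) (hnonsolv : ¬ IsSolvable (GL (Fin n) F))
    (π : Set ℕ) (hπ : ∀ r ∈ π, r.Prime) (h2pi : 2 ∉ π) (hppi : p ∉ π)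
    (htwo : 2 ≤ (π ∩ {r : ℕ | r.Prime ∧ r ∣ Nat.card (GL (Fin n) F)}).ncard)
    (H : Subgroup (GL (Fin n) F)) (hH : IsHallSubgroup π H)
    :
    ∃ x y z : GL (Fin n) F,
      x ∈ (H : Set (GL (Fin n) F)) * (SLsub n F : Set (GL (Fin n) F)) ∧
      y ∈ (H : Set (GL (Fin n) F)) * (SLsub n F : Set (GL (Fin n) F)) ∧
      z ∈ (H : Set (GL (Fin n) F)) * (SLsub n F : Set (GL (Fin n) F)) ∧
    ∀ g ∈ H ⊓ conjBy H x ⊓ conjBy H y ⊓ conjBy H z,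
      ∃ c : F, (g : Matrix (Fin n) (Fin n) F) = c • (1 : Matrix (Fin n) (Fin n) F) := by
  classical
  have hNodd : Odd (Nat.card H) := by
    rw [← Nat.not_even_iff_odd, even_iff_two_dvd]
    exact fun h => h2pi (hH.1 2 Nat.prime_two h)
  have hpN : ¬ p ∣ Nat.card H := fun h => hppi (hH.1 p hp h)
  have hcF : Nat.card F = p ^ f := by rw [Nat.card_eq_fintype_card, hcard, hq]
  have hpF : (p : F) = 0 := by
    have h1 : ((p ^ f : ℕ) : F) = 0 := by
      rw [← hq, ← hcard]; exact Nat.cast_card_eq_zero F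
    rw [Nat.cast_pow] at h1
    exact eq_zero_of_pow_eq_zero h1
  have hN : ((Nat.card H : ℕ) : F) ≠ 0 := by
    intro h0
    have hcop : Nat.Coprime (Nat.card H) p := ((Nat.Prime.coprime_iff_not_dvd hp).mpr hpN).symm
    have hb := Nat.isCoprime_iff_coprime.mpr hcop
    obtain ⟨a, b, hab⟩ := hb
    have := congrArg (Int.cast : ℤ → F) hab
    push_cast at this
    rw [h0, hpF] at this
    simp at this
  let φ := HP.tr n F
  have hfr : Module.finrank F (Fin n → F) = n := by simp
  let K : Subgroup ((Fin n → F) ≃ₗ[F] (Fin n → F)) := H.map φ.toMonoidHom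
  have hEx : HP.Ex (Nat.card H) K := by
    rintro _ ⟨h, hh, rfl⟩
    have : h ^ Nat.card H = 1 := congrArg Subtype.val (pow_card_eq_one' (x := (⟨h, hh⟩ : H)))
    rw [← map_pow, this, map_one]
  have hex : ¬ (Nat.card F = 2 ∧ Module.finrank F (Fin n → F) = 2) := by
    rintro ⟨h2, hn2⟩
    have hc6 : Nat.card (GL (Fin n) F) = 6 := by
      rw [Nat.card_congr φ.toEquiv]; exact HP.card2 h2 hn2
    have hsub : (π ∩ {r : ℕ | r.Prime ∧ r ∣ Nat.card (GL (Fin n) F)}) ⊆ {3} := by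
      rintro r ⟨hr, hrp, hrd⟩
      rw [hc6, show (6 : ℕ) = 2 * 3 by norm_num, hrp.dvd_mul, Nat.prime_dvd_prime_iff_eq hrp Nat.prime_two,
        Nat.prime_dvd_prime_iff_eq hrp Nat.prime_three] at hrd
      rcases hrd with h | h
      · rw [h] at hr; exact absurd hr h2pi
      · exact h
    have := Set.ncard_le_ncard hsub (Set.finite_singleton 3)
    rw [Set.ncard_singleton] at this
    omega
  obtain ⟨x, y, z, hx, hy, hz, hmain⟩ := HP.main_all hNodd hN (by omega) hex hEx
  have hdet : ∀ w : (Fin n → F) ≃ₗ[F] (Fin n → F), LinearEquiv.det w = 1 →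
      φ.symm w ∈ (H : Set (GL (Fin n) F)) * (SLsub n F : Set (GL (Fin n) F)) := by
    intro w hw
    refine ⟨1, H.one_mem, φ.symm w, ?_, one_mul _⟩
    change Matrix.det ((φ.symm w : GL (Fin n) F) : Matrix (Fin n) (Fin n) F) = 1
    have h1 : LinearMap.det (Matrix.toLin' ((φ.symm w : GL (Fin n) F) : Matrix (Fin n) (Fin n) F)) = 1 := by
      have h2 : Matrix.toLin' ((φ.symm w : GL (Fin n) F) : Matrix (Fin n) (Fin n) F) = (w : (Fin n → F) →ₗ[F] (Fin n → F)) := by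
        have h3 : φ (φ.symm w) = w := φ.apply_symm_apply w
        have h4 : Matrix.toLin' ((φ.symm w : GL (Fin n) F) : Matrix (Fin n) (Fin n) F) = ((φ (φ.symm w) : (Fin n → F) ≃ₗ[F] (Fin n → F)) : (Fin n → F) →ₗ[F] (Fin n → F)) := rfl
        rw [h4, h3]
      rw [h2, ← LinearEquiv.coe_det, hw]; rfl
    rwa [LinearMap.det_toLin'] at h1
  refine ⟨φ.symm x, φ.symm y, φ.symm z, hdet x hx, hdet y hy, hdet z hz, ?_⟩
  have hcj : ∀ (w : (Fin n → F) ≃ₗ[F] (Fin n → F)) (g : GL (Fin n) F), g ∈ conjBy H (φ.symm w) → w * φ g * w⁻¹ ∈ K := by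
    rintro w _ ⟨h, hh, rfl⟩
    refine ⟨h, hh, ?_⟩
    change φ h = w * φ ((MulAut.conj (φ.symm w)⁻¹) h) * w⁻¹
    rw [MulAut.conj_apply, map_mul, map_mul, inv_inv, map_inv, φ.apply_symm_apply]
    group
  rintro g ⟨⟨⟨hg, hgx⟩, hgy⟩, hgz⟩
  obtain ⟨c, hc⟩ := hmain (φ g) ⟨g, hg, rfl⟩ (hcj x g hgx) (hcj y g hgy) (hcj z g hgz)
  refine ⟨c, ?_⟩
  apply Matrix.toLin'.injective
  apply LinearMap.ext
  intro v
  have h1 : Matrix.toLin' (g : Matrix (Fin n) (Fin n) F) v = φ g v := rfl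
  rw [h1, hc v]
  simp
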